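/- Every homeomorphism of the torus that is homotopic to the identity is isotopic to the identity: let T = (ℝ/ℤ) × (ℝ/ℤ) and let h : T → T be a homeomorphism that is homotopic to the identity map (as continuous maps). Then there exists a continuous map F : [0,1] × T → T such that F(0,·) = h, F(1,·) = id, and F(t,·) : T → T is a homeomorphism for every t ∈ [0,1]. -/

import Mathlib

namespace TorusIso

/-! ### Lattice combinatorics -/

abbrev V := ℤ × ℤ

def Adj (v w : V) : Prop :=
  w.1 ≤ v.1 + 1 ∧ v.1 ≤ w.1 + 1 ∧ w.2 ≤ v.2 + 1 ∧ v.2 ≤ w.2 + 1 ∧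
    w.1 - w.2 ≤ v.1 - v.2 + 1 ∧ v.1 - v.2 ≤ w.1 - w.2 + 1

theorem Adj.symm {v w : V} (h : Adj v w) : Adj w v := by
  unfold Adj at *; omega

theorem Adj.refl (v : V) : Adj v v := by
  unfold Adj; omega

theorem Adj.add {v w : V} (h : Adj v w) (t : V) : Adj (v + t) (w + t) := by
  unfold Adj at *; simp only [Prod.fst_add, Prod.snd_add]; omega

theorem Adj.sub {v w : V} (h : Adj v w) (t : V) : Adj (v - t) (w - t) := by
  unfold Adj at *; simp only [Prod.fst_sub, Prod.snd_sub]; omega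

/-- `Z` is closed under adjacency inside `X`. -/
def ClosedIn (X Z : Set V) : Prop := Z ⊆ X ∧ ∀ z ∈ Z, ∀ u ∈ X, Adj z u → u ∈ Z

def BddL (Z : Set V) : Prop := ∃ b : ℤ, ∀ z ∈ Z, b ≤ z.1
def BddR (Z : Set V) : Prop := ∃ b : ℤ, ∀ z ∈ Z, z.1 ≤ b

def LG (A : Set V) : Prop := ∀ Z, ClosedIn A Z → BddL Z → Z = ∅
def RG (A : Set V) : Prop := ∀ Z, ClosedIn A Z → BddR Z → Z = ∅

def coreR (X : Set V) : Set V := {p | p ∈ X ∧ ∀ Z, ClosedIn X Z → BddR Z → p ∉ Z}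
def coreL (X : Set V) : Set V := {p | p ∈ X ∧ ∀ Z, ClosedIn X Z → BddL Z → p ∉ Z}
def fill (A : Set V) : Set V := (coreR Aᶜ)ᶜ

theorem ClosedIn.inter {X Y Z : Set V} (h : ClosedIn X Z) (hY : Y ⊆ X) : ClosedIn Y (Z ∩ Y) :=
  ⟨Set.inter_subset_right, fun z hz u hu ha => ⟨h.2 z hz.1 u (hY hu) ha, hu⟩⟩

theorem BddL.mono {Z W : Set V} (h : BddL W) (hs : Z ⊆ W) : BddL Z :=
  h.imp fun _ hb z hz => hb z (hs hz)
theorem BddR.mono {Z W : Set V} (h : BddR W) (hs : Z ⊆ W) : BddR Z :=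
  h.imp fun _ hb z hz => hb z (hs hz)

theorem coreR_subset (X : Set V) : coreR X ⊆ X := fun _ h => h.1
theorem coreL_subset (X : Set V) : coreL X ⊆ X := fun _ h => h.1

theorem subset_fill (A : Set V) : A ⊆ fill A := fun _ h h' => h'.1 h

theorem coreR_adj {X : Set V} {p u : V} (hp : p ∈ coreR X) (hu : u ∈ X) (h : Adj p u) :
    u ∈ coreR X :=
  ⟨hu, fun Z hZ hb huZ => hp.2 Z hZ hb (hZ.2 u huZ p hp.1 h.symm)⟩

theorem coreL_adj {X : Set V} {p u : V} (hp : p ∈ coreL X) (hu : u ∈ X) (h : Adj p u) :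
    u ∈ coreL X :=
  ⟨hu, fun Z hZ hb huZ => hp.2 Z hZ hb (hZ.2 u huZ p hp.1 h.symm)⟩

theorem RG_coreR (X : Set V) : RG (coreR X) := by
  intro Z hZ hb
  by_contra hne
  obtain ⟨p, hp⟩ := Set.nonempty_iff_ne_empty.mpr hne
  refine (hZ.1 hp).2 Z ⟨hZ.1.trans (coreR_subset X), fun z hz u hu ha => ?_⟩ hb hp
  exact hZ.2 z hz u (coreR_adj (hZ.1 hz) hu ha) ha

theorem LG_coreL (X : Set V) : LG (coreL X) := by
  intro Z hZ hb
  by_contra hne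
  obtain ⟨p, hp⟩ := Set.nonempty_iff_ne_empty.mpr hne
  refine (hZ.1 hp).2 Z ⟨hZ.1.trans (coreL_subset X), fun z hz u hu ha => ?_⟩ hb hp
  exact hZ.2 z hz u (coreL_adj (hZ.1 hz) hu ha) ha

theorem LG.union {A B : Set V} (hA : LG A) (hB : LG B) : LG (A ∪ B) := by
  intro Z hZ hb
  have h1 := hA _ (hZ.inter Set.subset_union_left) (hb.mono Set.inter_subset_left)
  have h2 := hB _ (hZ.inter Set.subset_union_right) (hb.mono Set.inter_subset_left)
  ext z
  simp only [Set.mem_empty_iff_false, iff_false]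
  intro hz
  rcases hZ.1 hz with h | h
  · exact (Set.eq_empty_iff_forall_notMem.mp h1 z) ⟨hz, h⟩
  · exact (Set.eq_empty_iff_forall_notMem.mp h2 z) ⟨hz, h⟩

theorem RG.union {A B : Set V} (hA : RG A) (hB : RG B) : RG (A ∪ B) := by
  intro Z hZ hb
  have h1 := hA _ (hZ.inter Set.subset_union_left) (hb.mono Set.inter_subset_left)
  have h2 := hB _ (hZ.inter Set.subset_union_right) (hb.mono Set.inter_subset_left)
  ext z
  simp only [Set.mem_empty_iff_false, iff_false]
  intro hz
  rcases hZ.1 hz with h | h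
  · exact (Set.eq_empty_iff_forall_notMem.mp h1 z) ⟨hz, h⟩
  · exact (Set.eq_empty_iff_forall_notMem.mp h2 z) ⟨hz, h⟩

/-- A nonempty set closed under all adjacency is unbounded in both directions. -/
theorem allclosed_empty_L {Z : Set V} (h : ∀ z ∈ Z, ∀ u, Adj z u → u ∈ Z) (hb : BddL Z) : Z = ∅ := by
  by_contra hne
  obtain ⟨p, hp⟩ := Set.nonempty_iff_ne_empty.mpr hne
  obtain ⟨b, hb⟩ := hb
  have key : ∀ k : ℕ, (p.1 - k, p.2) ∈ Z := by
    intro k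
    induction k with
    | zero => simpa using hp
    | succ k ih => refine h _ ih _ ?_; unfold Adj; push_cast; omega
  have := hb _ (key (p.1 - b + 1).toNat)
  simp only at this
  omega

theorem allclosed_empty_R {Z : Set V} (h : ∀ z ∈ Z, ∀ u, Adj z u → u ∈ Z) (hb : BddR Z) : Z = ∅ := by
  by_contra hne
  obtain ⟨p, hp⟩ := Set.nonempty_iff_ne_empty.mpr hne
  obtain ⟨b, hb⟩ := hb
  have key : ∀ k : ℕ, (p.1 + k, p.2) ∈ Z := by
    intro k
    induction k with
    | zero => simpa using hp
    | succ k ih => refine h _ ih _ ?_; unfold Adj; push_cast; omega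
  have := hb _ (key (b + 1 - p.1).toNat)
  simp only at this
  omega

theorem mem_fill {A : Set V} {v : V} :
    v ∈ fill A ↔ v ∈ A ∨ ∃ Z, ClosedIn Aᶜ Z ∧ BddR Z ∧ v ∈ Z := by
  unfold fill coreR
  simp only [Set.mem_compl_iff, Set.mem_ofPred_eq, not_and, not_forall]
  constructor
  · intro h
    by_cases hv : v ∈ A
    · exact Or.inl hv
    · obtain ⟨Z, h1, h2, h3⟩ := h hv
      exact Or.inr ⟨Z, h1, h2, by simpa using h3⟩
  · rintro (h | ⟨Z, h1, h2, h3⟩) hv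
    · exact absurd h hv
    · exact ⟨Z, h1, h2, by simpa using h3⟩

theorem LG.fill {A : Set V} (hA : LG A) : LG (fill A) := by
  intro Z hZ hb
  have h1 := hA _ (hZ.inter (subset_fill A)) (hb.mono Set.inter_subset_left)
  apply allclosed_empty_L _ hb
  intro z hz u ha
  by_cases hu : u ∈ TorusIso.fill A
  · exact hZ.2 z hz u hu ha
  · exfalso
    have hu' : u ∈ coreR Aᶜ := by simpa [TorusIso.fill] using hu
    have hzA : z ∈ Aᶜ := fun h => Set.eq_empty_iff_forall_notMem.mp h1 z ⟨hz, h⟩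
    exact hZ.1 hz (coreR_adj hu' hzA ha.symm)

theorem RG_compl_fill (A : Set V) : RG (fill A)ᶜ := by
  unfold fill; rw [compl_compl]; exact RG_coreR _

theorem fill_mono {A B : Set V} (h : A ⊆ B) : fill A ⊆ fill B := by
  intro p hp
  contrapose! hp
  have hp' : p ∈ coreR Bᶜ := by simpa [fill] using hp
  intro h2
  have hc : Bᶜ ⊆ Aᶜ := Set.compl_subset_compl.mpr h
  apply h2
  exact ⟨hc hp'.1, fun Z hZ hb hpZ => hp'.2 _ (hZ.inter hc) (hb.mono Set.inter_subset_left) ⟨hpZ, hp'.1⟩⟩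

theorem fill_nbhd {A B : Set V} (h : ∀ v ∈ A, ∀ w, Adj v w → w ∈ B) :
    ∀ v ∈ fill A, ∀ w, Adj v w → w ∈ fill B := by
  intro v hv w ha
  rcases mem_fill.mp hv with hv | ⟨Z, hZ, hb, hv⟩
  · exact subset_fill B (h v hv w ha)
  · by_contra hw
    have hw' : w ∈ coreR Bᶜ := by simpa [fill] using hw
    have hAB : Bᶜ ⊆ Aᶜ := Set.compl_subset_compl.mpr fun x hx => h x hx x (Adj.refl x)
    exact hw'.2 _ (hZ.inter hAB) (hb.mono Set.inter_subset_left) ⟨hZ.2 v hv w (hAB hw'.1) ha, hw'.1⟩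

def sh (t : V) (A : Set V) : Set V := {v | v - t ∈ A}

@[simp] theorem mem_sh {t : V} {A : Set V} {v : V} : v ∈ sh t A ↔ v - t ∈ A := Iff.rfl

theorem sh_sh (s t : V) (A : Set V) : sh s (sh t A) = sh (s + t) A := by
  ext v; simp [sub_sub]

theorem sh_zero (A : Set V) : sh 0 A = A := by ext v; simp

theorem sh_compl (t : V) (A : Set V) : sh t Aᶜ = (sh t A)ᶜ := rfl

theorem ClosedIn.sh {X Z : Set V} (h : ClosedIn X Z) (t : V) : ClosedIn (sh t X) (sh t Z) :=
  ⟨fun _ hz => h.1 hz, fun z hz u hu ha => h.2 (z - t) hz (u - t) hu (ha.sub t)⟩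

theorem BddL.sh {Z : Set V} (h : BddL Z) (t : V) : BddL (sh t Z) := by
  obtain ⟨b, hb⟩ := h
  refine ⟨b + t.1, fun z hz => ?_⟩
  have := hb _ hz
  simp at this; omega

theorem BddR.sh {Z : Set V} (h : BddR Z) (t : V) : BddR (sh t Z) := by
  obtain ⟨b, hb⟩ := h
  refine ⟨b + t.1, fun z hz => ?_⟩
  have := hb _ hz
  simp at this; omega

theorem sh_coreR_sub (t : V) (X : Set V) : coreR (sh t X) ⊆ sh t (coreR X) := by
  intro p hp
  refine ⟨hp.1, fun Z hZ hb hpZ => hp.2 _ (hZ.sh t) (hb.sh t) hpZ⟩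

theorem sh_coreL_sub (t : V) (X : Set V) : coreL (sh t X) ⊆ sh t (coreL X) := by
  intro p hp
  refine ⟨hp.1, fun Z hZ hb hpZ => hp.2 _ (hZ.sh t) (hb.sh t) hpZ⟩

theorem sh_mono {t : V} {A B : Set V} (h : A ⊆ B) : sh t A ⊆ sh t B := fun _ hv => h hv

theorem coreR_sh (t : V) (X : Set V) : coreR (sh t X) = sh t (coreR X) := by
  apply Set.Subset.antisymm (sh_coreR_sub t X)
  have := sh_mono (t := t) (sh_coreR_sub (-t) (sh t X))
  rw [sh_sh, sh_sh] at this
  simpa [sh_zero] using this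

theorem coreL_sh (t : V) (X : Set V) : coreL (sh t X) = sh t (coreL X) := by
  apply Set.Subset.antisymm (sh_coreL_sub t X)
  have := sh_mono (t := t) (sh_coreL_sub (-t) (sh t X))
  rw [sh_sh, sh_sh] at this
  simpa [sh_zero] using this

theorem fill_sh (t : V) (A : Set V) : fill (sh t A) = sh t (fill A) := by
  unfold fill; rw [← sh_compl, coreR_sh, sh_compl]

theorem LG.sh {A : Set V} (h : LG A) (t : V) : LG (sh t A) := by
  intro Z hZ hb
  have h1 := hZ.sh (-t)
  rw [sh_sh, neg_add_cancel, sh_zero] at h1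
  have h2 := h _ h1 (hb.sh _)
  have : Z = TorusIso.sh t (TorusIso.sh (-t) Z) := by rw [sh_sh, add_neg_cancel, sh_zero]
  rw [this, h2]; rfl

theorem RG.sh {A : Set V} (h : RG A) (t : V) : RG (sh t A) := by
  intro Z hZ hb
  have h1 := hZ.sh (-t)
  rw [sh_sh, neg_add_cancel, sh_zero] at h1
  have h2 := h _ h1 (hb.sh _)
  have : Z = TorusIso.sh t (TorusIso.sh (-t) Z) := by rw [sh_sh, add_neg_cancel, sh_zero]
  rw [this, h2]; rfl

/-- vertical periodicity -/
def VPer (n : ℕ) (A : Set V) : Prop := ∀ v : V, (v.1, v.2 + n) ∈ A ↔ v ∈ A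

theorem VPer.int {n : ℕ} {A : Set V} (h : VPer n A) (k : ℤ) (v : V) :
    (v.1, v.2 + k * n) ∈ A ↔ v ∈ A := by
  induction k using Int.induction_on with
  | zero => simp
  | succ k ih =>
    rw [← ih, ← h (v.1, v.2 + k * n)]
    simp only; rw [show v.2 + ((k : ℤ) + 1) * n = v.2 + k * n + n by ring]
  | pred k ih =>
    rw [← ih, ← h (v.1, v.2 + (-(k : ℤ) - 1) * n)]
    simp only; rw [show v.2 + (-(k : ℤ) - 1) * n + n = v.2 + (-(k : ℤ)) * n by ring]

theorem VPer.iff_sh {n : ℕ} {A : Set V} : VPer n A ↔ sh (0, -(n : ℤ)) A = A := by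
  constructor
  · intro h; ext v; rw [mem_sh, ← h v]; simp [Prod.sub_def]
  · intro h v; conv_rhs => rw [← h]
    simp [Prod.sub_def]

theorem VPer.compl {n : ℕ} {A : Set V} (h : VPer n A) : VPer n Aᶜ := fun v => not_congr (h v)
theorem VPer.union {n : ℕ} {A B : Set V} (h : VPer n A) (h' : VPer n B) : VPer n (A ∪ B) :=
  fun v => or_congr (h v) (h' v)
theorem VPer.inter {n : ℕ} {A B : Set V} (h : VPer n A) (h' : VPer n B) : VPer n (A ∩ B) :=
  fun v => and_congr (h v) (h' v)
theorem VPer.sdiff {n : ℕ} {A B : Set V} (h : VPer n A) (h' : VPer n B) : VPer n (A \ B) :=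
  fun v => and_congr (h v) (not_congr (h' v))
theorem VPer.coreR {n : ℕ} {A : Set V} (h : VPer n A) : VPer n (coreR A) := by
  rw [VPer.iff_sh] at *; rw [← coreR_sh, h]
theorem VPer.coreL {n : ℕ} {A : Set V} (h : VPer n A) : VPer n (coreL A) := by
  rw [VPer.iff_sh] at *; rw [← coreL_sh, h]
theorem VPer.fill {n : ℕ} {A : Set V} (h : VPer n A) : VPer n (fill A) := by
  rw [VPer.iff_sh] at *; rw [← fill_sh, h]
theorem VPer.sh {n : ℕ} {A : Set V} (h : VPer n A) (t : V) : VPer n (sh t A) := by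
  rw [VPer.iff_sh] at *; rw [sh_sh, add_comm, ← sh_sh, h]

def orb (n : ℕ) (v : V) : Set V := {w | w.1 = v.1 ∧ ∃ k : ℤ, w.2 = v.2 + k * n}

theorem mem_orb_self (n : ℕ) (v : V) : v ∈ orb n v := ⟨rfl, 0, by simp⟩

theorem orb_sub {n : ℕ} {A : Set V} (h : VPer n A) {v : V} (hv : v ∈ A) : orb n v ⊆ A := by
  rintro w ⟨h1, k, h2⟩
  have := (h.int k v).mpr hv
  rwa [← h1, ← h2] at this

theorem orb_symm {n : ℕ} {v w : V} (h : w ∈ orb n v) : v ∈ orb n w := by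
  obtain ⟨h1, k, h2⟩ := h
  exact ⟨h1.symm, -k, by rw [h2]; ring⟩

theorem VPer_orb (n : ℕ) (v : V) : VPer n (orb n v) := by
  intro w
  constructor
  · rintro ⟨h1, k, h2⟩
    exact ⟨h1, k - 1, by simp only at h2; linear_combination h2⟩
  · rintro ⟨h1, k, h2⟩
    exact ⟨h1, k + 1, by simp only; linear_combination h2⟩

theorem orb_disj {n : ℕ} {A : Set V} (h : VPer n A) {v : V} (hv : v ∉ A) {w : V}
    (hw : w ∈ orb n v) : w ∉ A := orb_sub h.compl hv hw

/-- neighbours transported along the vertical period -/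
theorem orb_adj {n : ℕ} {v w u : V} (hw : w ∈ orb n v) (h : Adj v u) :
    ∃ u' ∈ orb n u, Adj w u' := by
  obtain ⟨h1, k, h2⟩ := hw
  refine ⟨(u.1, u.2 + k * n), ⟨rfl, k, rfl⟩, ?_⟩
  unfold Adj at *; simp only; rw [h1, h2]; omega

structure Good (n : ℕ) (A : Set V) : Prop where
  lg : LG A
  rg : RG Aᶜ
  per : VPer n A
  left : ∃ a : ℤ, ∀ v : V, v.1 < a → v ∈ A
  right : ∃ b : ℤ, ∀ v ∈ A, v.1 < b

theorem Good.sh {n : ℕ} {A : Set V} (h : Good n A) (t : V) : Good n (sh t A) := by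
  refine ⟨h.lg.sh t, h.rg.sh t, h.per.sh t, ?_, ?_⟩
  · obtain ⟨a, ha⟩ := h.left
    exact ⟨a + t.1, fun v hv => ha _ (by simp; omega)⟩
  · obtain ⟨a, ha⟩ := h.right
    exact ⟨a + t.1, fun v hv => by have := ha _ hv; simp at this; omega⟩

theorem Good.sdiff_bdd {n : ℕ} {A A' : Set V} (h : Good n A) (h' : Good n A') :
    ∃ a b : ℤ, ∀ v ∈ A' \ A, a ≤ v.1 ∧ v.1 < b := by
  obtain ⟨a, ha⟩ := h.left
  obtain ⟨b, hb⟩ := h'.right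
  exact ⟨a, b, fun v hv => ⟨by by_contra hc; exact hv.2 (ha v (by omega)), hb v hv.1⟩⟩

end TorusIso

namespace TorusIso

/-- pockets of `X` -/
def pockR (X : Set V) : Set V := X \ coreR X

theorem mem_pockR {X : Set V} {v : V} : v ∈ pockR X ↔ ∃ Z, ClosedIn X Z ∧ BddR Z ∧ v ∈ Z := by
  unfold pockR coreR
  constructor
  · rintro ⟨h1, h2⟩
    by_contra hc
    push Not at hc
    exact h2 ⟨h1, fun Z hZ hb hv => hc Z hZ hb hv⟩
  · rintro ⟨Z, h1, h2, h3⟩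
    exact ⟨h1.1 h3, fun h => h.2 Z h1 h2 h3⟩

theorem pockR_adj {X : Set V} {p u : V} (hp : p ∈ pockR X) (hu : u ∈ X) (h : Adj p u) :
    u ∈ pockR X := ⟨hu, fun hc => hp.2 (coreR_adj hc hp.1 h.symm)⟩

theorem closedIn_pockR (X : Set V) : ClosedIn X (pockR X) :=
  ⟨Set.sdiff_subset, fun _ hz _ hu ha => pockR_adj hz hu ha⟩

theorem pockR_disj {X Y : Set V} (hY : RG Y) (h : Y ⊆ X) {p : V} (hp : p ∈ pockR X) : p ∉ Y := by
  obtain ⟨Z, hZ, hb, hpZ⟩ := mem_pockR.mp hp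
  have := hY _ (hZ.inter h) (hb.mono Set.inter_subset_left)
  exact fun hpY => Set.eq_empty_iff_forall_notMem.mp this p ⟨hpZ, hpY⟩

theorem exists_min_x {Z : Set V} (hne : Z.Nonempty) {a : ℤ} (h : ∀ v ∈ Z, a ≤ v.1) :
    ∃ z ∈ Z, ∀ w ∈ Z, z.1 ≤ w.1 := by
  obtain ⟨p, hp⟩ := hne
  obtain ⟨m, ⟨z, hz, hzm⟩, hm⟩ := Int.exists_least_of_bdd (P := fun x => ∃ z ∈ Z, z.1 = x)
    ⟨a, fun x ⟨z, hz, hzx⟩ => hzx ▸ h z hz⟩ ⟨p.1, p, hp, rfl⟩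
  exact ⟨z, hz, fun w hw => hzm ▸ hm _ ⟨w, hw, rfl⟩⟩

theorem exists_max_x {Z : Set V} (hne : Z.Nonempty) {a : ℤ} (h : ∀ v ∈ Z, v.1 ≤ a) :
    ∃ z ∈ Z, ∀ w ∈ Z, w.1 ≤ z.1 := by
  obtain ⟨p, hp⟩ := hne
  obtain ⟨m, ⟨z, hz, hzm⟩, hm⟩ := Int.exists_greatest_of_bdd (P := fun x => ∃ z ∈ Z, z.1 = x)
    ⟨a, fun x ⟨z, hz, hzx⟩ => hzx ▸ h z hz⟩ ⟨p.1, p, hp, rfl⟩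
  exact ⟨z, hz, fun w hw => hzm ▸ hm _ ⟨w, hw, rfl⟩⟩

def box (n : ℕ) (a b : ℤ) : Set V := {v | a ≤ v.1 ∧ v.1 < b ∧ 0 ≤ v.2 ∧ v.2 < n}

theorem box_finite (n : ℕ) (a b : ℤ) : (box n a b).Finite := by
  apply ((Set.finite_Ico a b).prod (Set.finite_Ico (0 : ℤ) n)).subset
  rintro v ⟨h1, h2, h3, h4⟩
  exact ⟨⟨h1, h2⟩, h3, h4⟩

theorem exists_box_rep {n : ℕ} (hn : 0 < n) {a b : ℤ} {v : V} (h : a ≤ v.1 ∧ v.1 < b) :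
    ∃ w ∈ orb n v, w ∈ box n a b := by
  refine ⟨(v.1, v.2 % n), ⟨rfl, -(v.2 / n), ?_⟩, h.1, h.2, ?_, ?_⟩
  · simp only; have := Int.emod_add_mul_ediv v.2 n; linear_combination this
  · exact Int.emod_nonneg _ (by omega)
  · exact Int.emod_lt_of_pos _ (by omega)

theorem orb_eq {n : ℕ} {v w : V} (h : w ∈ orb n v) : orb n w = orb n v :=
  Set.Subset.antisymm (orb_sub (VPer_orb n v) h) (orb_sub (VPer_orb n w) (orb_symm h))

theorem shelling {n : ℕ} (hn : 0 < n) {A A' : Set V} (hA : Good n A) (hA' : Good n A')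
    (hs : A ⊆ A') (hne : (A' \ A).Nonempty) :
    ∃ v ∈ A' \ A, Good n (A ∪ orb n v) := by
  obtain ⟨a, b, hab⟩ := hA.sdiff_bdd hA'
  have hperD : VPer n (A' \ A) := hA'.per.sdiff hA.per
  -- pocket facts
  have hpock : ∀ v ∈ A' \ A, pockR (Aᶜ \ orb n v) ⊆ A' \ A := by
    intro v hv p hp
    refine ⟨?_, hp.1.1⟩
    by_contra hc
    refine pockR_disj hA'.rg ?_ hp hc
    intro q hq
    exact ⟨fun h => hq (hs h), fun h => hq (orb_sub hperD hv h).1⟩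
  -- main induction
  have main : ∀ k : ℕ, ∀ v ∈ A' \ A, (∃ u ∈ A, Adj v u) →
      (pockR (Aᶜ \ orb n v) ∩ box n a b).ncard ≤ k →
      ∃ v ∈ A' \ A, (∃ u ∈ A, Adj v u) ∧ pockR (Aᶜ \ orb n v) = ∅ := by
    intro k
    induction k with
    | zero =>
      intro v hv hu hk
      refine ⟨v, hv, hu, ?_⟩
      by_contra hne
      obtain ⟨p, hp⟩ := Set.nonempty_iff_ne_empty.mpr hne
      obtain ⟨w, hw, hwb⟩ := exists_box_rep hn (hab p (hpock v hv hp))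
      have hper : VPer n (pockR (Aᶜ \ orb n v)) :=
        (hA.per.compl.sdiff (VPer_orb n v)).sdiff (hA.per.compl.sdiff (VPer_orb n v)).coreR
      have hw' := orb_sub hper hp hw
      have hfin : (pockR (Aᶜ \ orb n v) ∩ box n a b).Finite :=
        (box_finite n a b).subset Set.inter_subset_right
      have := (Set.ncard_eq_zero hfin).mp (by omega)
      exact Set.eq_empty_iff_forall_notMem.mp this w ⟨hw', hwb⟩
    | succ k ih =>
      intro v hv hu hk
      by_cases hne : pockR (Aᶜ \ orb n v) = ∅
      · exact ⟨v, hv, hu, hne⟩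
      set Zv := pockR (Aᶜ \ orb n v) with hZv
      have hper : VPer n Zv :=
        (hA.per.compl.sdiff (VPer_orb n v)).sdiff (hA.per.compl.sdiff (VPer_orb n v)).coreR
      have hZb : ∀ z ∈ Zv, a ≤ z.1 ∧ z.1 < b := fun z hz => hab z (hpock v hv hz)
      have hne' := Set.nonempty_iff_ne_empty.mpr hne
      -- neighbours of Zv in Aᶜ
      have hnb : ∀ z ∈ Zv, ∀ u ∈ Aᶜ, Adj z u → u ∈ Zv ∪ orb n v := by
        intro z hz u hu ha
        by_cases h : u ∈ orb n v
        · exact Or.inr h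
        · exact Or.inl (pockR_adj hz ⟨hu, h⟩ ha)
      have hv' : ∃ v' ∈ Zv, ∃ u ∈ A, Adj v' u := by
        by_contra hc
        push Not at hc
        obtain ⟨z, hz, hzm⟩ := exists_min_x hne' (a := a) fun z hz => (hZb z hz).1
        obtain ⟨z', hz', hzm'⟩ := exists_max_x hne' (a := b) fun z hz => (hZb z hz).2.le
        have a1 : Adj z (z.1 - 1, z.2) := by unfold Adj; simp only; omega
        have a2 : Adj z' (z'.1 + 1, z'.2) := by unfold Adj; simp only; omega
        have e1 : z.1 - 1 = v.1 := by
          rcases hnb z hz _ (fun h => hc z hz _ h a1) a1 with h | h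
          · have := hzm _ h; simp at this
          · exact h.1
        have e2 : z'.1 + 1 = v.1 := by
          rcases hnb z' hz' _ (fun h => hc z' hz' _ h a2) a2 with h | h
          · have := hzm' _ h; simp at this
          · exact h.1
        have := hzm _ hz'
        omega
      have hRG : RG (Aᶜ \ Zv) := by
        intro Z hZ hb
        have hcoreS : coreR (Aᶜ \ orb n v) ⊆ Aᶜ \ Zv :=
          fun p hp => ⟨hp.1.1, fun h => h.2 hp⟩
        have h1 := RG_coreR _ _ (hZ.inter hcoreS) (hb.mono Set.inter_subset_left)
        have h2 : Z ⊆ orb n v := by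
          intro z hz
          by_contra hzo
          have hz1 := hZ.1 hz
          have : z ∈ coreR (Aᶜ \ orb n v) := by
            by_contra hcc
            exact hz1.2 ⟨⟨hz1.1, hzo⟩, hcc⟩
          exact Set.eq_empty_iff_forall_notMem.mp h1 z ⟨hz, this⟩
        by_contra hZne
        obtain ⟨w, hw⟩ := Set.nonempty_iff_ne_empty.mpr hZne
        have hwo := h2 hw
        have hcl : ClosedIn Aᶜ (Zv ∪ orb n v) := by
          constructor
          · rintro p (hp | hp)
            · exact hp.1.1
            · exact (orb_sub hperD hv hp).2
          · rintro z (hz | hz) u hu ha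
            · exact hnb z hz u hu ha
            · have hwz : w ∈ orb n z := by rw [orb_eq hz]; exact hwo
              obtain ⟨u', hu', ha'⟩ := orb_adj hwz ha
              have hu'A : u' ∈ Aᶜ := orb_sub hA.per.compl hu hu'
              have hu'' : u' ∈ Zv ∪ orb n v := by
                by_cases h : u' ∈ Zv
                · exact Or.inl h
                · exact Or.inr (h2 (hZ.2 w hw u' ⟨hu'A, h⟩ ha'))
              exact orb_sub (hper.union (VPer_orb n v)) hu'' (orb_symm hu')
        have := hA.rg _ hcl ⟨b + v.1.natAbs, ?_⟩
        · exact Set.eq_empty_iff_forall_notMem.mp this v (Or.inr (mem_orb_self n v))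
        · have hv1 := hab v hv
          rintro z (hz | hz)
          · have := hZb z hz; omega
          · have := hz.1; omega
      obtain ⟨v0, hv0, u0, hu0, ha0⟩ := hv'
      obtain ⟨v', hv'o, hv'b⟩ := exists_box_rep hn (hZb v0 hv0)
      have hv'Z : v' ∈ Zv := orb_sub hper hv0 hv'o
      obtain ⟨u', hu'o, ha'⟩ := orb_adj hv'o ha0
      refine ih v' (hpock v hv hv'Z) ⟨u', orb_sub hA.per hu0 hu'o, ha'⟩ ?_
      have hsub : pockR (Aᶜ \ orb n v') ⊆ Zv := by
        intro p hp
        by_contra hc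
        refine pockR_disj hRG ?_ hp ⟨hp.1.1, hc⟩
        intro q hq
        exact ⟨hq.1, fun h => hq.2 (orb_sub hper hv'Z h)⟩
      have hlt : (pockR (Aᶜ \ orb n v') ∩ box n a b).ncard < (Zv ∩ box n a b).ncard := by
        apply Set.ncard_lt_ncard _ ((box_finite n a b).subset Set.inter_subset_right)
        refine ⟨Set.inter_subset_inter_left _ hsub, fun h => ?_⟩
        exact (h ⟨hv'Z, hv'b⟩).1.1.2 (mem_orb_self n v')
      omega
  have hcand : ∃ v ∈ A' \ A, ∃ u ∈ A, Adj v u := by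
    by_contra hc
    push Not at hc
    have := hA'.lg (A' \ A) ⟨Set.sdiff_subset, fun z hz u hu ha => ⟨hu, fun h => hc z hz u h ha⟩⟩
      ⟨a, fun z hz => (hab z hz).1⟩
    exact hne.ne_empty this
  obtain ⟨v0, hv0, hu0⟩ := hcand
  obtain ⟨v, hv, ⟨u, hu, ha⟩, he⟩ := main _ v0 hv0 hu0 le_rfl
  refine ⟨v, hv, ?_, ?_, hA.per.union (VPer_orb n v), ?_, ?_⟩
  · intro Z hZ hb
    have h1 := hA.lg _ (hZ.inter Set.subset_union_left) (hb.mono Set.inter_subset_left)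
    by_contra hZne
    obtain ⟨z, hz⟩ := Set.nonempty_iff_ne_empty.mpr hZne
    rcases hZ.1 hz with h | h
    · exact Set.eq_empty_iff_forall_notMem.mp h1 z ⟨hz, h⟩
    · obtain ⟨u', hu', ha'⟩ := orb_adj h ha
      have hu'A := orb_sub hA.per hu hu'
      exact Set.eq_empty_iff_forall_notMem.mp h1 u' ⟨hZ.2 z hz u' (Or.inl hu'A) ha', hu'A⟩
  · have : (A ∪ orb n v)ᶜ = coreR (Aᶜ \ orb n v) := by
      rw [Set.compl_union, ← Set.sdiff_eq]
      apply Set.Subset.antisymm _ (coreR_subset _)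
      intro p hp
      by_contra hc
      exact Set.eq_empty_iff_forall_notMem.mp he p ⟨hp, hc⟩
    rw [this]; exact RG_coreR _
  · obtain ⟨a, ha⟩ := hA.left
    exact ⟨a, fun v hv => Or.inl (ha v hv)⟩
  · obtain ⟨b, hb⟩ := hA'.right
    refine ⟨b, ?_⟩
    rintro w (hw | hw)
    · exact hb w (hs hw)
    · rw [hw.1]; exact hb v hv.1

/-- Induction principle: build `A'` from `A` one vertical orbit at a time. -/
theorem shell_induct {n : ℕ} (hn : 0 < n) {A A' : Set V} (hA : Good n A) (hA' : Good n A')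
    (hs : A ⊆ A') (motive : Set V → Prop) (h0 : motive A)
    (hstep : ∀ B v, Good n B → Good n (B ∪ orb n v) → A ⊆ B → B ∪ orb n v ⊆ A' → v ∉ B →
      motive B → motive (B ∪ orb n v)) : motive A' := by
  obtain ⟨a, b, hab⟩ := hA.sdiff_bdd hA'
  have main : ∀ k : ℕ, ∀ B, Good n B → A ⊆ B → B ⊆ A' → motive B →
      ((A' \ B) ∩ box n a b).ncard ≤ k → motive A' := by
    intro k
    induction k with
    | zero =>
      intro B hB hAB hBA' hm hk
      have hfin : ((A' \ B) ∩ box n a b).Finite :=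
        (box_finite n a b).subset Set.inter_subset_right
      have h0 := (Set.ncard_eq_zero hfin).mp (by omega)
      have : B = A' := by
        apply Set.Subset.antisymm hBA'
        intro p hp
        by_contra hc
        obtain ⟨w, hw, hwb⟩ := exists_box_rep hn (hab p ⟨hp, fun h => hc (hAB h)⟩)
        exact Set.eq_empty_iff_forall_notMem.mp h0 w
          ⟨orb_sub (hA'.per.sdiff hB.per) ⟨hp, hc⟩ hw, hwb⟩
      rw [← this]; exact hm
    | succ k ih =>
      intro B hB hAB hBA' hm hk
      by_cases hne : (A' \ B).Nonempty
      · obtain ⟨v, hv, hg⟩ := shelling hn hB hA' hBA' hne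
        have hsub : B ∪ orb n v ⊆ A' := Set.union_subset hBA' (orb_sub hA'.per hv.1)
        refine ih _ hg (hAB.trans Set.subset_union_left) hsub
          (hstep B v hB hg hAB hsub hv.2 hm) ?_
        obtain ⟨w, hw, hwb⟩ := exists_box_rep hn (hab v ⟨hv.1, fun h => hv.2 (hAB h)⟩)
        have : ((A' \ (B ∪ orb n v)) ∩ box n a b).ncard < ((A' \ B) ∩ box n a b).ncard := by
          apply Set.ncard_lt_ncard _ ((box_finite n a b).subset Set.inter_subset_right)
          refine ⟨fun p hp => ⟨⟨hp.1.1, fun h => hp.1.2 (Or.inl h)⟩, hp.2⟩, fun h => ?_⟩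
          exact (h ⟨orb_sub (hA'.per.sdiff hB.per) hv hw, hwb⟩).1.2 (Or.inr hw)
        omega
      · have : B = A' := Set.Subset.antisymm hBA' (by
          intro p hp; by_contra hc; exact hne ⟨p, hp, hc⟩)
        rw [← this]; exact hm
  exact main _ A hA subset_rfl hs h0 le_rfl

end TorusIso

namespace TorusIso

def sc (b0 b1 b2 b3 b4 b5 : Bool) : ℕ :=
  (xor b0 b1).toNat + (xor b1 b2).toNat + (xor b2 b3).toNat + (xor b3 b4).toNat +
    (xor b4 b5).toNat + (xor b5 b0).toNat

def lowb (f : V → ℤ) (v u : V) : Bool := decide (f (v + u) < f v)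

def bsum (n : ℕ) (g : V → ℕ) : ℕ :=
  ∑ i ∈ Finset.range n, ∑ j ∈ Finset.range n, g ((i : ℤ), (j : ℤ))

theorem sum_range_shift (n : ℕ) (g : ℤ → ℕ) (h : g n = g 0) :
    ∑ i ∈ Finset.range n, g ((i : ℤ) + 1) = ∑ i ∈ Finset.range n, g (i : ℤ) := by
  have h1 := Finset.sum_range_succ (fun i : ℕ => g (i : ℤ)) n
  have h2 := Finset.sum_range_succ' (fun i : ℕ => g (i : ℤ)) n
  push_cast at h1 h2
  omega

theorem bsum_shift1 (n : ℕ) (g : V → ℕ) (h : ∀ v : V, g (v + ((n : ℤ), 0)) = g v) :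
    bsum n (fun v => g (v + (1, 0))) = bsum n g := by
  unfold bsum
  simp only [Prod.mk_add_mk, add_zero]
  refine sum_range_shift n (fun i => ∑ j ∈ Finset.range n, g (i, (j : ℤ))) ?_
  refine Finset.sum_congr rfl fun j _ => ?_
  simpa using h (0, (j : ℤ))

theorem bsum_shift2 (n : ℕ) (g : V → ℕ) (h : ∀ v : V, g (v + (0, (n : ℤ))) = g v) :
    bsum n (fun v => g (v + (0, 1))) = bsum n g := by
  unfold bsum
  simp only [Prod.mk_add_mk, add_zero]
  refine Finset.sum_congr rfl fun i _ => ?_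
  refine sum_range_shift n (fun j => g ((i : ℤ), j)) ?_
  simpa using h ((i : ℤ), 0)

theorem bsum_add (n : ℕ) (g h : V → ℕ) : bsum n (fun v => g v + h v) = bsum n g + bsum n h := by
  unfold bsum; simp [Finset.sum_add_distrib]

theorem median (a b c : ℤ) (h1 : a ≠ b) (h2 : b ≠ c) (h3 : a ≠ c) :
    (xor (decide (b < a)) (decide (c < a))).toNat + (xor (decide (c < b)) (decide (a < b))).toNat
      + (xor (decide (a < c)) (decide (b < c))).toNat = 1 := by
  rcases lt_or_gt_of_ne h1 with h1 | h1 <;> rcases lt_or_gt_of_ne h2 with h2 | h2 <;>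
    rcases lt_or_gt_of_ne h3 with h3 | h3 <;>
    simp [h1, h2, h3, h1.le, h2.le, h3.le, not_lt.mpr] <;> omega

theorem sc_ge : ∀ b0 b1 b2 b3 b4 b5 : Bool, (b0 || b1 || b2 || b3 || b4 || b5) = true →
    (b0 && b1 && b2 && b3 && b4 && b5) = false → 2 ≤ sc b0 b1 b2 b3 b4 b5 := by decide

theorem adj_cases {v w : V} (h : Adj v w) : w = v + (1, 0) ∨ w = v + (1, 1) ∨ w = v + (0, 1) ∨
    w = v + (-1, 0) ∨ w = v + (-1, -1) ∨ w = v + (0, -1) ∨ w = v := by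
  unfold Adj at h
  simp only [Prod.ext_iff, Prod.fst_add, Prod.snd_add]
  omega

theorem count_core {n : ℕ} (f : V → ℤ) (P : ℤ)
    (h1 : ∀ v : V, f (v + ((n : ℤ), 0)) = f v + P) (h2 : ∀ v : V, f (v + (0, (n : ℤ))) = f v)
    (hd : ∀ v w : V, v ≠ w → Adj v w → f v ≠ f w)
    (hlo : ∀ v, ∃ w, Adj v w ∧ f w < f v) (hhi : ∀ v, ∃ w, Adj v w ∧ f v < f w)
    (i j : ℕ) (hi : i < n) (hj : j < n) :
    sc (lowb f (i, j) (1, 0)) (lowb f (i, j) (1, 1)) (lowb f (i, j) (0, 1))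
      (lowb f (i, j) (-1, 0)) (lowb f (i, j) (-1, -1)) (lowb f (i, j) (0, -1)) = 2 := by
  have per1 : ∀ v u, lowb f (v + ((n : ℤ), 0)) u = lowb f v u := by
    intro v u; unfold lowb; rw [add_right_comm, h1, h1]; simp
  have per2 : ∀ v u, lowb f (v + (0, (n : ℤ))) u = lowb f v u := by
    intro v u; unfold lowb; rw [add_right_comm, h2, h2]
  let c : V → V → V → ℕ := fun u u' v => (xor (lowb f v u) (lowb f v u')).toNat
  have cs1 : ∀ u u', bsum n (fun v => c u u' (v + (1, 0))) = bsum n (c u u') := fun u u' =>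
    bsum_shift1 n _ fun v => by simp only [c, per1]
  have cs2 : ∀ u u', bsum n (fun v => c u u' (v + (0, 1))) = bsum n (c u u') := fun u u' =>
    bsum_shift2 n _ fun v => by simp only [c, per2]
  have cs12 : ∀ u u', bsum n (fun v => c u u' (v + (1, 1))) = bsum n (c u u') := fun u u' => by
    rw [← cs1]
    have := bsum_shift2 n (fun v => c u u' (v + (1, 0))) (fun v => by
      simp only [c, add_right_comm v (0, (n : ℤ)), per2])
    rw [← this]; congr 1; ext v; rw [add_assoc]; rfl
  have up : ∀ v, c (1, 0) (1, 1) v + c (0, 1) (-1, 0) (v + (1, 0)) +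
      c (-1, -1) (0, -1) (v + (1, 1)) = 1 := by
    intro v
    have e1 : v + (1, 0) + (0, 1) = v + (1, 1) := by ext <;> simp
    have e2 : v + (1, 0) + (-1, 0) = v := by ext <;> simp
    have e3 : v + (1, 1) + (-1, -1) = v := by ext <;> simp
    have e4 : v + (1, 1) + (0, -1) = v + (1, 0) := by ext <;> simp
    simp only [c, lowb, e1, e2, e3, e4]
    refine median _ _ _ (hd _ _ ?_ ?_) (hd _ _ ?_ ?_) (hd _ _ ?_ ?_)
    all_goals first | (unfold Adj; simp only [Prod.fst_add, Prod.snd_add]; omega) | (intro h; simp [Prod.ext_iff] at h; done) | skip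
  have low : ∀ v, c (1, 1) (0, 1) v + c (-1, 0) (-1, -1) (v + (1, 1)) +
      c (0, -1) (1, 0) (v + (0, 1)) = 1 := by
    intro v
    have e1 : v + (1, 1) + (-1, 0) = v + (0, 1) := by ext <;> simp
    have e2 : v + (1, 1) + (-1, -1) = v := by ext <;> simp
    have e3 : v + (0, 1) + (0, -1) = v := by ext <;> simp
    have e4 : v + (0, 1) + (1, 0) = v + (1, 1) := by ext <;> simp [add_comm]
    simp only [c, lowb, e1, e2, e3, e4]
    refine median _ _ _ (hd _ _ ?_ ?_) (hd _ _ ?_ ?_) (hd _ _ ?_ ?_)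
    all_goals first | (unfold Adj; simp only [Prod.fst_add, Prod.snd_add]; omega) | (intro h; simp [Prod.ext_iff] at h; done) | skip
  let s : V → ℕ := fun v => sc (lowb f v (1, 0)) (lowb f v (1, 1)) (lowb f v (0, 1))
      (lowb f v (-1, 0)) (lowb f v (-1, -1)) (lowb f v (0, -1))
  have hs : bsum n s = bsum n (fun _ => 2) := by
    have e0 : bsum n s = bsum n (c (1, 0) (1, 1)) + bsum n (c (1, 1) (0, 1)) +
        bsum n (c (0, 1) (-1, 0)) + bsum n (c (-1, 0) (-1, -1)) + bsum n (c (-1, -1) (0, -1)) +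
        bsum n (c (0, -1) (1, 0)) := by
      simp only [← bsum_add]; rfl
    have e1 : bsum n (fun _ => 1) = bsum n (c (1, 0) (1, 1)) + bsum n (c (0, 1) (-1, 0)) +
        bsum n (c (-1, -1) (0, -1)) := by
      rw [← cs1 (0, 1), ← cs12 (-1, -1), ← bsum_add, ← bsum_add]
      congr 1; ext v; exact (up v).symm
    have e2 : bsum n (fun _ => 1) = bsum n (c (1, 1) (0, 1)) + bsum n (c (-1, 0) (-1, -1)) +
        bsum n (c (0, -1) (1, 0)) := by
      rw [← cs12 (-1, 0), ← cs2 (0, -1), ← bsum_add, ← bsum_add]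
      congr 1; ext v; exact (low v).symm
    have e3 : bsum n (fun _ => 2) = bsum n (fun _ => 1) + bsum n (fun _ => 1) := by
      rw [← bsum_add]
    omega
  have hge : ∀ v, 2 ≤ s v := by
    intro v
    apply sc_ge
    · obtain ⟨w, ha, hw⟩ := hlo v
      by_contra hc
      simp only [lowb, Bool.or_eq_true, decide_eq_true_eq, not_or] at hc
      rcases adj_cases ha with rfl | rfl | rfl | rfl | rfl | rfl | rfl <;> omega
    · obtain ⟨w, ha, hw⟩ := hhi v
      by_contra hc
      simp only [lowb, Bool.and_eq_true, decide_eq_true_eq, Bool.not_eq_false] at hc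
      rcases adj_cases ha with rfl | rfl | rfl | rfl | rfl | rfl | rfl <;> omega
  by_contra hne
  have : bsum n (fun _ => 2) < bsum n s := by
    unfold bsum
    refine Finset.sum_lt_sum (fun i _ => Finset.sum_le_sum fun j _ => hge _)
      ⟨i, Finset.mem_range.mpr hi, ?_⟩
    refine Finset.sum_lt_sum (fun j _ => hge _) ⟨j, Finset.mem_range.mpr hj, ?_⟩
    exact lt_of_le_of_ne (hge _) (Ne.symm hne)
  omega

theorem count_all {n : ℕ} (hn : 0 < n) (f : V → ℤ) (P : ℤ)
    (h1 : ∀ v : V, f (v + ((n : ℤ), 0)) = f v + P) (h2 : ∀ v : V, f (v + (0, (n : ℤ))) = f v)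
    (hd : ∀ v w : V, v ≠ w → Adj v w → f v ≠ f w)
    (hlo : ∀ v, ∃ w, Adj v w ∧ f w < f v) (hhi : ∀ v, ∃ w, Adj v w ∧ f v < f w) (v : V) :
    sc (lowb f v (1, 0)) (lowb f v (1, 1)) (lowb f v (0, 1))
      (lowb f v (-1, 0)) (lowb f v (-1, -1)) (lowb f v (0, -1)) = 2 := by
  -- translate f so that v becomes the origin
  have key := count_core (n := n) (fun w => f (w + v)) P
    (fun w => by simp only [add_right_comm w _ v, h1]) (fun w => by simp only [add_right_comm w _ v, h2])
    (fun w w' hne ha => hd _ _ (by simpa using hne) (ha.add v))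
    (fun w => by
      obtain ⟨u, hu, hf⟩ := hlo (w + v)
      refine ⟨u - v, ?_, by simpa using hf⟩
      have := hu.sub v; simpa using this)
    (fun w => by
      obtain ⟨u, hu, hf⟩ := hhi (w + v)
      refine ⟨u - v, ?_, by simpa using hf⟩
      have := hu.sub v; simpa using this) 0 0 hn hn
  have e : ∀ u, lowb (fun w => f (w + v)) (((0 : ℕ) : ℤ), ((0 : ℕ) : ℤ)) u = lowb f v u := by
    intro u; unfold lowb
    have : ((((0 : ℕ) : ℤ), ((0 : ℕ) : ℤ)) : V) = 0 := rfl
    simp only [this, zero_add, add_comm u v]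
  simpa only [e] using key

theorem exists_chain {n : ℕ} (hn : 0 < n) {A A' : Set V} (hA : Good n A) (hA' : Good n A')
    (hs : A ⊆ A') : ∃ (P : ℕ) (B : ℕ → Set V), B 0 = A ∧ B P = A' ∧ (∀ j ≤ P, Good n (B j)) ∧
      ∀ j < P, ∃ v, v ∉ B j ∧ B (j + 1) = B j ∪ orb n v := by
  refine shell_induct hn hA hA' hs (fun X => ∃ (P : ℕ) (B : ℕ → Set V), B 0 = A ∧ B P = X ∧
    (∀ j ≤ P, Good n (B j)) ∧ ∀ j < P, ∃ v, v ∉ B j ∧ B (j + 1) = B j ∪ orb n v) ?_ ?_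
  · exact ⟨0, fun _ => A, rfl, rfl, fun _ _ => hA, fun j hj => absurd hj (by omega)⟩
  · rintro X v hX hXv - - hv ⟨P, B, h0, hP, hg, hst⟩
    refine ⟨P + 1, fun j => if j ≤ P then B j else X ∪ orb n v, by simpa using h0, by simp, ?_, ?_⟩
    · intro j hj
      by_cases h : j ≤ P
      · simpa [h] using hg j h
      · simpa [h] using hXv
    · intro j hj
      by_cases h : j < P
      · simpa [h.le, Nat.succ_le_of_lt h] using hst j h
      · obtain rfl : j = P := by omega
        refine ⟨v, by simpa [hP] using hv, by simp [hP]⟩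

theorem contiguity {n : ℕ} (hn : 2 ≤ n) {A : Set V} {v : V} (hA : Good n A)
    (hAv : Good n (A ∪ orb n v)) (hsub : A ∪ orb n v ⊆ sh ((n : ℤ), 0) A) (hv : v ∉ A)
    (dA : ∀ w, Decidable (w ∈ A)) :
    sc (decide (v + (1, 0) ∈ A)) (decide (v + (1, 1) ∈ A)) (decide (v + (0, 1) ∈ A))
      (decide (v + (-1, 0) ∈ A)) (decide (v + (-1, -1) ∈ A)) (decide (v + (0, -1) ∈ A)) = 2 := by
  have hn0 : 0 < n := by omega
  -- chain from A through A ∪ orb v to the shift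
  obtain ⟨P, B, hB0, hB1, hBP, hBg, hBs, hP⟩ : ∃ (P : ℕ) (B : ℕ → Set V), B 0 = A ∧
      B 1 = A ∪ orb n v ∧ B P = sh ((n : ℤ), 0) A ∧
      (∀ j ≤ P, Good n (B j)) ∧ (∀ j < P, ∃ v, v ∉ B j ∧ B (j + 1) = B j ∪ orb n v) ∧ 0 < P := by
    obtain ⟨P, B, h0, hP, hg, hs⟩ := exists_chain hn0 hAv (hA.sh ((n : ℤ), 0)) hsub
    refine ⟨P + 1, fun j => if j = 0 then A else B (j - 1), by simp, by simpa using h0,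
      by simpa using hP, ?_, ?_, by omega⟩
    · intro j hj
      by_cases h : j = 0
      · simpa [h] using hA
      · simpa [h] using hg (j - 1) (by omega)
    · intro j hj
      by_cases h : j = 0
      · subst h; exact ⟨v, by simpa using hv, by simpa using h0⟩
      · obtain ⟨u, hu1, hu2⟩ := hs (j - 1) (by omega)
        refine ⟨u, by simpa [h] using hu1, ?_⟩
        rw [show j - 1 + 1 = j by omega] at hu2
        simpa [h] using hu2
  let BB : ℤ → Set V := fun j => sh ((j / P) * n, 0) (B (j % P).toNat)
  have hPz : (0 : ℤ) < P := by omega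
  have hBB : ∀ (q : ℤ) (r : ℕ), r ≤ P → BB (q * P + r) = sh (q * n, 0) (B r) := by
    intro q r hr
    rcases hr.lt_or_eq with hr | rfl
    · have e1 : (q * P + r) / (P : ℤ) = q := by
        rw [add_comm, Int.add_mul_ediv_right _ _ (by omega), Int.ediv_eq_zero_of_lt] <;> omega
      have e2 : (q * P + r) % (P : ℤ) = r := by
        rw [add_comm, Int.add_mul_emod_self_right, Int.emod_eq_of_lt] <;> omega
      simp only [BB, e1, e2, Int.toNat_natCast]
    · have e0 : q * (r : ℤ) + r = (q + 1) * r := by ring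
      have e1 : (q * r + r) / (r : ℤ) = q + 1 := by
        rw [e0, Int.mul_ediv_cancel _ (by omega)]
      have e2 : (q * r + r) % (r : ℤ) = 0 := by
        rw [e0, Int.mul_emod_left]
      simp only [BB, e1, e2, Int.toNat_zero, hB0, hBP, sh_sh, Prod.mk_add_mk, add_zero]
      rw [add_mul, one_mul]
  have hdec : ∀ j : ℤ, ∃ (q : ℤ) (r : ℕ), r < P ∧ j = q * P + r := by
    intro j
    refine ⟨j / P, (j % P).toNat, ?_, ?_⟩
    · have := Int.emod_lt_of_pos j hPz; have := Int.emod_nonneg j hPz.ne'; omega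
    · have := Int.emod_nonneg j hPz.ne'
      rw [Int.toNat_of_nonneg this]
      have := Int.emod_add_mul_ediv j P; linear_combination -this
  have hgood : ∀ j, Good n (BB j) := by
    intro j
    obtain ⟨q, r, hr, rfl⟩ := hdec j
    rw [hBB q r hr.le]; exact (hBg r hr.le).sh _
  have hstep : ∀ j, ∃ w, w ∉ BB j ∧ BB (j + 1) = BB j ∪ orb n w := by
    intro j
    obtain ⟨q, r, hr, rfl⟩ := hdec j
    obtain ⟨u, hu1, hu2⟩ := hBs r hr
    refine ⟨u + (q * n, 0), ?_, ?_⟩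
    · rw [hBB q r hr.le]; simpa using hu1
    · have := hBB q (r + 1) hr
      push_cast at this
      rw [add_assoc, this, hBB q r hr.le, hu2]
      ext w
      simp only [mem_sh, Set.mem_union, orb]
      apply or_congr Iff.rfl
      constructor
      · rintro ⟨h1, k, h2⟩
        exact ⟨by simp at h1 ⊢; omega, k, by simpa using h2⟩
      · rintro ⟨h1, k, h2⟩
        exact ⟨by simp at h1 ⊢; omega, k, by simpa using h2⟩
  have hmono : ∀ (j : ℤ) (k : ℕ), BB j ⊆ BB (j + k) := by
    intro j k
    induction k with
    | zero => simp
    | succ k ih =>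
      obtain ⟨w, -, hw⟩ := hstep (j + k)
      push_cast
      rw [← add_assoc, hw]
      exact ih.trans Set.subset_union_left
  have hshift : ∀ j, BB (j + P) = sh ((n : ℤ), 0) (BB j) := by
    intro j
    obtain ⟨q, r, hr, rfl⟩ := hdec j
    rw [show q * (P : ℤ) + r + P = (q + 1) * P + r by ring, hBB _ r hr.le, hBB _ r hr.le, sh_sh,
      Prod.mk_add_mk, add_zero, add_mul, one_mul, add_comm (n : ℤ)]
  have hA00 : BB 0 = A := by
    have := hBB 0 0 hP.le; simpa [hB0, sh_zero, Prod.mk_zero_zero] using this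
  have hA01 : BB 1 = A ∪ orb n v := by
    have := hBB 0 1 hP; simpa [hB1, sh_zero, Prod.mk_zero_zero] using this
  have hex : ∀ p : V, ∃ m : ℤ, ∀ j, p ∈ BB j ↔ m < j := by
    intro p
    obtain ⟨a, ha⟩ := hA.left
    obtain ⟨b, hb⟩ := hA.right
    have hmem : ∀ q : ℤ, p ∈ BB (q * P) ↔ p - (q * n, 0) ∈ A := by
      intro q; have := hBB q 0 hP.le
      simp only [Nat.cast_zero, add_zero] at this
      rw [this, hB0]; rfl
    obtain ⟨m, hm, hmin⟩ := Int.exists_least_of_bdd (P := fun j => p ∈ BB j) (by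
      refine ⟨(-(b.natAbs + p.1.natAbs + 1 : ℕ)) * P, fun z hz => ?_⟩
      by_contra hc
      push Not at hc
      have h2 := hmono z ((-(b.natAbs + p.1.natAbs + 1 : ℕ)) * P - z).toNat hz
      rw [Int.toNat_of_nonneg (by omega), add_sub_cancel, hmem] at h2
      have h3 := hb _ h2
      simp only [Prod.fst_sub] at h3
      have : ((b.natAbs + p.1.natAbs + 1 : ℕ) : ℤ) * 1 ≤ ((b.natAbs + p.1.natAbs + 1 : ℕ) : ℤ) * n := by
        gcongr; omega
      have e : (-((b.natAbs + p.1.natAbs + 1 : ℕ) : ℤ)) * (n : ℤ) = -(((b.natAbs + p.1.natAbs + 1 : ℕ) : ℤ) * n) := by ring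
      rw [e] at h3
      omega) (by
      refine ⟨((a.natAbs + p.1.natAbs + 1 : ℕ) : ℤ) * P, (hmem _).mpr (ha _ ?_)⟩
      simp only [Prod.fst_sub]
      have : ((a.natAbs + p.1.natAbs + 1 : ℕ) : ℤ) * 1 ≤ ((a.natAbs + p.1.natAbs + 1 : ℕ) : ℤ) * n := by
        gcongr; omega
      omega)
    refine ⟨m - 1, fun j => ⟨fun h => by have := hmin j h; omega, fun h => ?_⟩⟩
    have := hmono m (j - m).toNat hm
    rwa [Int.toNat_of_nonneg (by omega), add_sub_cancel] at this
  choose f hf using hex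
  have flt : ∀ p q, (∀ j : ℤ, f p < j ↔ q < j) → f p = q := by
    intro p q h
    have h1 := h (f p + 1); have h2 := h (q + 1); omega
  have f1 : ∀ w : V, f (w + ((n : ℤ), 0)) = f w + P := by
    intro w
    apply flt
    intro j
    rw [← hf, show j = (j - P) + P by ring, hshift, mem_sh, add_sub_cancel_right, hf]; omega
  have f2 : ∀ w : V, f (w + (0, (n : ℤ))) = f w := by
    intro w
    apply flt
    intro j
    rw [← hf, ← hf, ← (hgood j).per w]
    simp [Prod.add_def]
  have flev : ∀ p q, f p = f q → q ∈ orb n p := by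
    intro p q h
    obtain ⟨w, hw, hw'⟩ := hstep (f p)
    have hp : p ∈ BB (f p + 1) := (hf _ _).mpr (by omega)
    have hq : q ∈ BB (f p + 1) := (hf _ _).mpr (by omega)
    have hp' : p ∉ BB (f p) := fun h => absurd ((hf _ _).mp h) (by omega)
    have hq' : q ∉ BB (f p) := fun h => absurd ((hf _ _).mp h) (by omega)
    rw [hw'] at hp hq
    rw [orb_eq (hp.resolve_left hp')]
    exact hq.resolve_left hq'
  have fd : ∀ v w : V, v ≠ w → Adj v w → f v ≠ f w := by
    intro v w hne ha he
    obtain ⟨h1, k, h2⟩ := flev v w he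
    unfold Adj at ha
    rcases lt_trichotomy k 0 with hk | rfl | hk
    · have : k * (n : ℤ) ≤ (-1) * n := by gcongr; omega
      omega
    · apply hne; ext
      · exact h1.symm
      · simpa using h2.symm
    · have : 1 * (n : ℤ) ≤ k * n := by gcongr; omega
      omega
  have forb : ∀ p q, q ∈ orb n p → f q = f p := by
    intro p q h
    apply flt
    intro j
    rw [← hf, ← hf]
    exact ⟨fun h' => orb_sub (hgood j).per h' (orb_symm h), fun h' => orb_sub (hgood j).per h' h⟩
  have flo : ∀ v, ∃ w, Adj v w ∧ f w < f v := by
    intro p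
    by_contra hc
    push Not at hc
    have := (hgood (f p + 1)).lg (orb n p) ⟨?_, ?_⟩ ⟨p.1, fun z hz => hz.1.ge⟩
    · exact Set.eq_empty_iff_forall_notMem.mp this p (mem_orb_self n p)
    · intro q hq; rw [hf, forb p q hq]; omega
    · intro z hz u hu ha
      obtain ⟨u', hu', ha'⟩ := orb_adj (orb_symm hz) ha
      have h1 := hc u' ha'
      rw [hf] at hu
      rw [forb u u' hu'] at h1
      exact flev p u (by omega)
  have fhi : ∀ v, ∃ w, Adj v w ∧ f v < f w := by
    intro p
    by_contra hc
    push Not at hc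
    have := (hgood (f p)).rg (orb n p) ⟨?_, ?_⟩ ⟨p.1, fun z hz => hz.1.le⟩
    · exact Set.eq_empty_iff_forall_notMem.mp this p (mem_orb_self n p)
    · intro q hq; rw [Set.mem_compl_iff, hf, forb p q hq]; omega
    · intro z hz u hu ha
      obtain ⟨u', hu', ha'⟩ := orb_adj (orb_symm hz) ha
      have h1 := hc u' ha'
      rw [Set.mem_compl_iff, hf] at hu
      rw [forb u u' hu'] at h1
      exact flev p u (by omega)
  have hfv : f v = 0 := by
    have h1 : v ∉ BB 0 := by rwa [hA00]
    have h2 : v ∈ BB 1 := by rw [hA01]; exact Or.inr (mem_orb_self n v)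
    rw [hf] at h1 h2; omega
  have key := count_all hn0 f P f1 f2 fd flo fhi v
  have e : ∀ u, lowb f v u = decide (v + u ∈ A) := by
    intro u; unfold lowb; rw [hfv]
    congr 1
    rw [← hA00, hf]
  simpa only [e] using key

end TorusIso

namespace TorusIso

/-! ### Geometry of the hexagonal push maps -/

abbrev E := ℝ × ℝ

/-- the cone of directions all of whose carrier neighbours are in the pattern -/
def Cone (b0 b1 b2 b3 b4 b5 : Bool) : Set E :=
  {d | (0 < d.1 → 0 < d.1 - d.2 → b0 = true) ∧ (0 < d.1 → 0 < d.2 → b1 = true) ∧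
       (0 < d.2 → 0 < d.2 - d.1 → b2 = true) ∧ (d.1 < 0 → d.1 - d.2 < 0 → b3 = true) ∧
       (d.1 < 0 → d.2 < 0 → b4 = true) ∧ (d.2 < 0 → d.2 - d.1 < 0 → b5 = true)}

theorem cone_dir (b0 b1 b2 b3 b4 b5 : Bool) (h : sc b0 b1 b2 b3 b4 b5 = 2) :
    ∃ m : E, (∀ d ∈ Cone b0 b1 b2 b3 b4 b5, ∀ α : ℝ, 0 ≤ α → d + α • m ∈ Cone b0 b1 b2 b3 b4 b5) ∧
      ∀ α : ℝ, 0 < α → -(α • m) ∉ Cone b0 b1 b2 b3 b4 b5 := by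
  have key : ∀ x y : ℝ, (∀ d : E, d ∈ Cone b0 b1 b2 b3 b4 b5 → ∀ α : ℝ, 0 ≤ α →
      (d.1 + α * x, d.2 + α * y) ∈ Cone b0 b1 b2 b3 b4 b5) →
      (∀ α : ℝ, 0 < α → (-(α * x), -(α * y)) ∉ Cone b0 b1 b2 b3 b4 b5) → 
      ∃ m : E, (∀ d ∈ Cone b0 b1 b2 b3 b4 b5, ∀ α : ℝ, 0 ≤ α → d + α • m ∈ Cone b0 b1 b2 b3 b4 b5) ∧
      ∀ α : ℝ, 0 < α → -(α • m) ∉ Cone b0 b1 b2 b3 b4 b5 := fun x y h1 h2 => ⟨(x, y), h1, h2⟩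
  cases b0 <;> cases b1 <;> cases b2 <;> cases b3 <;> cases b4 <;> cases b5 <;>
    first
    | (exfalso; revert h; decide)
    | skip
  all_goals clear h
  all_goals
    first
    | (refine key 1 0 ?_ ?_ <;> simp only [Cone, Set.mem_ofPred_eq] <;> intros <;> grind; done)
    | (refine key 1 1 ?_ ?_ <;> simp only [Cone, Set.mem_ofPred_eq] <;> intros <;> grind; done)
    | (refine key 0 1 ?_ ?_ <;> simp only [Cone, Set.mem_ofPred_eq] <;> intros <;> grind; done)
    | (refine key (-1) 0 ?_ ?_ <;> simp only [Cone, Set.mem_ofPred_eq] <;> intros <;> grind; done)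
    | (refine key (-1) (-1) ?_ ?_ <;> simp only [Cone, Set.mem_ofPred_eq] <;> intros <;> grind; done)
    | (refine key 0 (-1) ?_ ?_ <;> simp only [Cone, Set.mem_ofPred_eq] <;> intros <;> grind; done)
end TorusIso

namespace TorusIso
open Filter Topology unitInterval

def hN (z : E) : ℝ := max |z.1| (max |z.2| |z.1 - z.2|)

theorem hN_lt {z : E} {r : ℝ} : hN z < r ↔ |z.1| < r ∧ |z.2| < r ∧ |z.1 - z.2| < r := by
  unfold hN; rw [max_lt_iff, max_lt_iff]

theorem hN_le {z : E} {r : ℝ} : hN z ≤ r ↔ |z.1| ≤ r ∧ |z.2| ≤ r ∧ |z.1 - z.2| ≤ r := by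
  unfold hN; rw [max_le_iff, max_le_iff]

theorem hN_smul (c : ℝ) (z : E) : hN (c • z) = |c| * hN z := by
  unfold hN
  simp only [Prod.smul_fst, Prod.smul_snd, smul_eq_mul, ← mul_sub, abs_mul,
    mul_max_of_nonneg _ _ (abs_nonneg c)]

theorem hN_add_le (z w : E) : hN (z + w) ≤ hN z + hN w := by
  have h1 := hN_le.mp (le_refl (hN z))
  have h2 := hN_le.mp (le_refl (hN w))
  rw [hN_le]
  simp only [Prod.fst_add, Prod.snd_add]
  refine ⟨(abs_add_le _ _).trans (by linarith), (abs_add_le _ _).trans (by linarith), ?_⟩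
  rw [show z.1 + w.1 - (z.2 + w.2) = (z.1 - z.2) + (w.1 - w.2) by ring]
  exact (abs_add_le _ _).trans (by linarith)

theorem hN_neg (z : E) : hN (-z) = hN z := by
  have := hN_smul (-1) z; simpa using this

theorem hN_zero : hN 0 = 0 := by simp [hN]

theorem hN_nonneg (z : E) : 0 ≤ hN z := (abs_nonneg z.1).trans (le_max_left _ _)

theorem norm_le_hN (z : E) : ‖z‖ ≤ hN z := by
  have h1 := hN_le.mp (le_refl (hN z))
  rw [Prod.norm_def]; exact max_le h1.1 h1.2.1

theorem hN_le_norm (z : E) : hN z ≤ 2 * ‖z‖ := by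
  have h1 : |z.1| ≤ ‖z‖ := norm_fst_le z
  have h2 : |z.2| ≤ ‖z‖ := norm_snd_le z
  rw [hN_le]
  refine ⟨by linarith [norm_nonneg z], by linarith [norm_nonneg z], ?_⟩
  have := abs_sub z.1 z.2
  exact (abs_sub z.1 z.2).trans (by linarith)

theorem hN_pos {z : E} (h : z ≠ 0) : 0 < hN z := (norm_pos_iff.mpr h).trans_le (norm_le_hN z)

theorem hN_sub_le (z w : E) : hN z - hN w ≤ hN (z - w) := by
  have := hN_add_le (z - w) w; rw [sub_add_cancel] at this; linarith

theorem abs_hN_sub_le (z w : E) : |hN z - hN w| ≤ 2 * ‖z - w‖ := by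
  refine le_trans (abs_le.mpr ⟨?_, hN_sub_le z w⟩) (hN_le_norm _)
  have := hN_sub_le w z
  have e : hN (w - z) = hN (z - w) := by rw [← hN_neg, neg_sub]
  linarith

@[fun_prop]
theorem continuous_hN : Continuous hN := by unfold hN; fun_prop

def pushT (m z : E) : E := z + (max (1 - hN z) 0) • m
noncomputable def pushR (μ : ℝ) (z : E) : E := (μ + (1 - μ) * min (hN z) 1)⁻¹ • z

theorem pushT_lip (z w : E) : |max (1 - hN z) 0 - max (1 - hN w) 0| ≤ 2 * ‖z - w‖ := by
  refine (abs_max_sub_max_le_abs _ _ _).trans ?_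
  rw [show 1 - hN z - (1 - hN w) = -(hN z - hN w) by ring, abs_neg]
  exact abs_hN_sub_le z w

theorem pushT_bij {m : E} (hm : ‖m‖ ≤ 1 / 4) : Function.Bijective (pushT m) := by
  constructor
  · intro z w h
    unfold pushT at h
    have h1 : z - w = (max (1 - hN w) 0 - max (1 - hN z) 0) • m := by
      rw [sub_smul, sub_eq_sub_iff_add_eq_add, h]; abel
    have h2 : ‖z - w‖ ≤ (2 * ‖z - w‖) * (1 / 4) := by
      conv_lhs => rw [h1]
      rw [norm_smul, Real.norm_eq_abs, abs_sub_comm]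
      exact mul_le_mul (pushT_lip z w) hm (norm_nonneg _) (by positivity)
    have h3 : ‖z - w‖ = 0 := by linarith [norm_nonneg (z - w)]
    exact sub_eq_zero.mp (norm_eq_zero.mp h3)
  · intro y
    have hc : ContractingWith (1 / 2) (fun z : E => y - (max (1 - hN z) 0) • m) := by
      refine ⟨by
        rw [← NNReal.coe_lt_coe]; norm_num, LipschitzWith.of_dist_le_mul fun z w => ?_⟩
      rw [dist_eq_norm, dist_eq_norm]
      have : y - (max (1 - hN z) 0) • m - (y - (max (1 - hN w) 0) • m) =
        -((max (1 - hN z) 0 - max (1 - hN w) 0) • m) := by rw [sub_smul]; abel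
      rw [this, norm_neg, norm_smul, Real.norm_eq_abs]
      calc _ ≤ (2 * ‖z - w‖) * (1 / 4) :=
            mul_le_mul (pushT_lip z w) hm (norm_nonneg _) (by positivity)
        _ = _ := by push_cast; ring
    refine ⟨hc.fixedPoint, ?_⟩
    have := hc.fixedPoint_isFixedPt
    unfold Function.IsFixedPt at this
    unfold pushT
    nth_rewrite 1 [← this]
    exact sub_add_cancel _ _

theorem pushT_out {m z : E} (h : 1 ≤ hN z) : pushT m z = z := by
  unfold pushT; rw [max_eq_right (by linarith), zero_smul, add_zero]

theorem pushT_in {m z : E} (hm : hN m ≤ 1) (h : hN z ≤ 1) : hN (pushT m z) ≤ 1 := by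
  unfold pushT
  rw [max_eq_left (by linarith)]
  refine (hN_add_le _ _).trans ?_
  rw [hN_smul, abs_of_nonneg (by linarith)]
  nlinarith

theorem pushR_out {μ : ℝ} {z : E} (h : 1 ≤ hN z) : pushR μ z = z := by
  unfold pushR; rw [min_eq_right h]; simp

theorem pushR_den {μ s : ℝ} (hμ : 0 < μ) (h0 : 0 ≤ s) (h1 : s ≤ 1) : 0 < μ + (1 - μ) * s := by
  rcases h1.lt_or_eq with h | h
  · nlinarith [mul_pos hμ (sub_pos.mpr h)]
  · rw [h]; linarith

theorem hN_pushR {μ : ℝ} (hμ : 0 < μ) {z : E} (h : hN z ≤ 1) :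
    hN (pushR μ z) = hN z / (μ + (1 - μ) * hN z) := by
  unfold pushR
  rw [min_eq_left h, hN_smul, abs_of_pos (inv_pos.mpr (pushR_den hμ (hN_nonneg z) h)), div_eq_inv_mul]

theorem pushR_in {μ : ℝ} (hμ : 0 < μ) {z : E} (h : hN z ≤ 1) : hN (pushR μ z) ≤ 1 := by
  rw [hN_pushR hμ h, div_le_one (pushR_den hμ (hN_nonneg z) h)]
  nlinarith

theorem pushR_inv {μ : ℝ} (hμ : 0 < μ) (z : E) : pushR μ⁻¹ (pushR μ z) = z := by
  by_cases h : 1 ≤ hN z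
  · rw [pushR_out h, pushR_out h]
  · push Not at h
    have hd := pushR_den hμ (hN_nonneg z) h.le
    have h2 := pushR_in hμ h.le
    rw [pushR, min_eq_left h2, hN_pushR hμ h.le, pushR, min_eq_left h.le, smul_smul]
    set s := hN z
    have : (μ⁻¹ + (1 - μ⁻¹) * (s / (μ + (1 - μ) * s)))⁻¹ * (μ + (1 - μ) * s)⁻¹ = 1 := by
      rw [← mul_inv, inv_eq_one, add_mul, mul_assoc, div_mul_cancel₀ _ hd.ne']
      field_simp; ring
    rw [this, one_smul]

theorem pushR_bij {μ : ℝ} (hμ : 0 < μ) : Function.Bijective (pushR μ) := by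
  refine Function.bijective_iff_has_inverse.mpr ⟨pushR μ⁻¹, pushR_inv hμ, fun z => ?_⟩
  have := pushR_inv (inv_pos.mpr hμ) z
  rwa [inv_inv] at this

theorem cone_smul {b0 b1 b2 b3 b4 b5 : Bool} {d : E} (hd : d ∈ Cone b0 b1 b2 b3 b4 b5) {c : ℝ}
    (hc : 0 < c) : c • d ∈ Cone b0 b1 b2 b3 b4 b5 := by
  have hn : ∀ x : ℝ, c * x < 0 ↔ x < 0 := fun x => by
    constructor
    · intro h; by_contra h'; push Not at h'; exact absurd h (not_lt.mpr (mul_nonneg hc.le h'))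
    · exact fun h => mul_neg_of_pos_of_neg hc h
  simp only [Cone, Set.mem_ofPred_eq, Prod.smul_fst, Prod.smul_snd, smul_eq_mul, ← mul_sub,
    mul_pos_iff_of_pos_left hc, hn] at hd ⊢
  exact hd

theorem isClosed_cone (b0 b1 b2 b3 b4 b5 : Bool) : IsClosed (Cone b0 b1 b2 b3 b4 b5) := by
  have key : ∀ (f g : E → ℝ) (b : Bool), Continuous f → Continuous g →
      IsClosed {d : E | 0 < f d → 0 < g d → b = true} := by
    intro f g b hf hg
    cases b
    · have : {d : E | 0 < f d → 0 < g d → false = true} = {d | f d ≤ 0} ∪ {d | g d ≤ 0} := by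
        ext d; simp [imp_iff_not_or]
      rw [this]
      exact (isClosed_le hf continuous_const).union (isClosed_le hg continuous_const)
    · simp
  have e : Cone b0 b1 b2 b3 b4 b5 =
      {d : E | 0 < d.1 → 0 < d.1 - d.2 → b0 = true} ∩ ({d : E | 0 < d.1 → 0 < d.2 → b1 = true} ∩
      ({d : E | 0 < d.2 → 0 < d.2 - d.1 → b2 = true} ∩ ({d : E | 0 < -d.1 → 0 < -(d.1 - d.2) → b3 = true} ∩
      ({d : E | 0 < -d.1 → 0 < -d.2 → b4 = true} ∩ {d : E | 0 < -d.2 → 0 < -(d.2 - d.1) → b5 = true})))) := by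
    ext d
    simp only [Cone, Set.mem_inter_iff, Set.mem_ofPred_eq, neg_pos]
  rw [e]
  refine (key _ _ _ ?_ ?_).inter <| (key _ _ _ ?_ ?_).inter <| (key _ _ _ ?_ ?_).inter <|
    (key _ _ _ ?_ ?_).inter <| (key _ _ _ ?_ ?_).inter (key _ _ _ ?_ ?_) <;> fun_prop

/-- local push -/
theorem local_push (b0 b1 b2 b3 b4 b5 : Bool) (h : sc b0 b1 b2 b3 b4 b5 = 2) (W : Set E)
    (hW : IsOpen W) (hCW : ∀ d ∈ Cone b0 b1 b2 b3 b4 b5, hN d = 1 → d ∈ W) :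
    ∃ ρ : I → E → E, Continuous (fun p : I × E => ρ p.1 p.2) ∧ (∀ z, ρ 0 z = z) ∧
      (∀ t, Function.Bijective (ρ t)) ∧ (∀ t z, 1 ≤ hN z → ρ t z = z) ∧
      ∀ d ∈ Cone b0 b1 b2 b3 b4 b5, hN d ≤ 1 → ρ 1 d ∈ W := by
  obtain ⟨m0, hm1, hm2⟩ := cone_dir _ _ _ _ _ _ h
  set C := Cone b0 b1 b2 b3 b4 b5 with hC
  obtain ⟨m, hmn, hma, hmb⟩ : ∃ m : E, ‖m‖ ≤ 1 / 4 ∧ (∀ d ∈ C, ∀ α : ℝ, 0 ≤ α → d + α • m ∈ C) ∧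
      ∀ α : ℝ, 0 < α → -(α • m) ∉ C := by
    have hp : 0 < 4 * (‖m0‖ + 1) := by positivity
    refine ⟨(4 * (‖m0‖ + 1))⁻¹ • m0, ?_, fun d hd α hα => ?_, fun α hα => ?_⟩
    · rw [norm_smul, Real.norm_eq_abs, abs_of_pos (inv_pos.mpr hp), inv_mul_le_iff₀ hp]
      linarith
    · rw [smul_smul]; exact hm1 d hd _ (by positivity)
    · rw [smul_smul]; exact hm2 _ (by positivity)
  have hmN : hN m ≤ 1 := (hN_le_norm m).trans (by linarith)
  -- the compact set
  let K0 : Set E := C ∩ {d | hN d ≤ 1}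
  have hK0 : IsCompact K0 := by
    have hcl : IsClosed K0 := (isClosed_cone _ _ _ _ _ _).inter (isClosed_le continuous_hN continuous_const)
    refine Metric.isCompact_of_isClosed_isBounded hcl ?_
    refine (Metric.isBounded_closedBall (x := (0 : E)) (r := 1)).subset fun d hd => ?_
    rw [mem_closedBall_zero_iff]
    exact (norm_le_hN d).trans hd.2
  have hTc : Continuous (pushT m) := by unfold pushT; fun_prop
  have hK : IsCompact (pushT m '' K0) := hK0.image hTc
  have hKC : ∀ e ∈ pushT m '' K0, e ∈ C ∧ hN e ≤ 1 ∧ e ≠ 0 := by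
    rintro _ ⟨d, hd, rfl⟩
    refine ⟨hma d hd.1 _ (le_max_right _ _), pushT_in hmN hd.2, fun h0 => ?_⟩
    rcases lt_or_ge (hN d) 1 with h1 | h1
    · have h2 : 0 < max (1 - hN d) 0 := lt_max_of_lt_left (by linarith)
      apply hmb _ h2
      have : d = -((max (1 - hN d) 0) • m) := eq_neg_of_add_eq_zero_left h0
      rw [← this]; exact hd.1
    · rw [pushT_out h1] at h0
      rw [h0, hN_zero] at h1; linarith
  have hev : ∀ᶠ μ : ℝ in 𝓝 0, ∀ e ∈ pushT m '' K0, (μ + (1 - μ) * hN e)⁻¹ • e ∈ W := by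
    refine hK.eventually_forall_of_forall_eventually fun e he => ?_
    obtain ⟨h1, h2, h3⟩ := hKC e he
    have hpos := hN_pos h3
    have hca : ContinuousAt (fun p : ℝ × E => (p.1 + (1 - p.1) * hN p.2)⁻¹ • p.2) (0, e) := by
      have c1 : Continuous (fun p : ℝ × E => p.1 + (1 - p.1) * hN p.2) := by fun_prop
      have c2 : ContinuousAt (fun p : ℝ × E => (p.1 + (1 - p.1) * hN p.2)⁻¹) (0, e) :=
        c1.continuousAt.inv₀ (by simpa using hpos.ne')
      have c3 : ContinuousAt (fun p : ℝ × E => p.2) (0, e) := continuous_snd.continuousAt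
      exact c2.smul c3
    refine hca.eventually (hW.mem_nhds ?_)
    have hin : (hN e)⁻¹ • e ∈ W := hCW _ (cone_smul h1 (inv_pos.mpr hpos)) (by
      rw [hN_smul, abs_of_pos (inv_pos.mpr hpos), inv_mul_cancel₀ hpos.ne'])
    simpa using hin
  obtain ⟨μ, hμ0, hμ1, hμW⟩ : ∃ μ : ℝ, 0 < μ ∧ μ ≤ 1 ∧
      ∀ e ∈ pushT m '' K0, (μ + (1 - μ) * hN e)⁻¹ • e ∈ W := by
    have h1 : ∀ᶠ μ : ℝ in 𝓝[>] 0, μ ∈ Set.Ioc (0 : ℝ) 1 := Ioc_mem_nhdsGT one_pos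
    obtain ⟨μ, ha, hb⟩ := (h1.and (hev.filter_mono nhdsWithin_le_nhds)).exists
    exact ⟨μ, ha.1, ha.2, hb⟩
  have hμt : ∀ t : I, 0 < 1 - (t : ℝ) * (1 - μ) := by
    intro t; have := t.2.1; have := t.2.2; nlinarith
  refine ⟨fun t z => pushR (1 - t * (1 - μ)) (pushT ((t : ℝ) • m) z), ?_, ?_, ?_, ?_, ?_⟩
  · unfold pushR
    have hTT : Continuous (fun p : I × E => pushT ((p.1 : ℝ) • m) p.2) := by
      unfold pushT; fun_prop
    have h1 : Continuous (fun p : I × E => hN (pushT ((p.1 : ℝ) • m) p.2)) := continuous_hN.comp hTT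
    have h2 : Continuous (fun p : I × E => (1 - (p.1 : ℝ) * (1 - μ)) +
      (1 - (1 - (p.1 : ℝ) * (1 - μ))) * min (hN (pushT ((p.1 : ℝ) • m) p.2)) 1) := by fun_prop
    have h3 := h2.inv₀ (by
      rintro ⟨t, z⟩
      refine (pushR_den (hμt t) ?_ (min_le_right _ _)).ne'
      exact le_min (hN_nonneg _) zero_le_one)
    exact h3.smul hTT
  · intro z
    simp [pushR, pushT]
  · intro t
    refine (pushR_bij (hμt t)).comp (pushT_bij ?_)
    rw [norm_smul, Real.norm_eq_abs, abs_of_nonneg t.2.1]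
    have := t.2.2
    nlinarith [norm_nonneg m, t.2.1]
  · intro t z hz
    simp only [pushT_out hz, pushR_out hz]
  · intro d hd hd1
    have he := Set.mem_image_of_mem (pushT m) (show d ∈ K0 from ⟨hd, hd1⟩)
    have := hμW _ he
    simpa [pushR, min_eq_left (hKC _ he).2.1] using this

end TorusIso

namespace TorusIso
open Filter Topology unitInterval

/-! ### Carriers, equivariant homeomorphisms, periodisation -/

def emb (v : V) : E := ((v.1 : ℝ), (v.2 : ℝ))

@[simp] theorem emb_fst (v : V) : (emb v).1 = v.1 := rfl
@[simp] theorem emb_snd (v : V) : (emb v).2 = v.2 := rfl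

def car (z : E) : Set V := {v | hN (z - emb v) < 1}

theorem mem_car {z : E} {v : V} : v ∈ car z ↔ hN (z - emb v) < 1 := Iff.rfl

theorem mem_car' {z : E} {v : V} : v ∈ car z ↔
    |z.1 - v.1| < 1 ∧ |z.2 - v.2| < 1 ∧ |(z.1 - v.1) - (z.2 - v.2)| < 1 := by
  rw [mem_car, hN_lt]; simp

theorem adj_of_lt_two {u v : V} (h : hN (emb u - emb v) < 2) : Adj u v := by
  rw [hN_lt] at h
  simp only [Prod.fst_sub, Prod.snd_sub, emb_fst, emb_snd, abs_lt] at h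
  obtain ⟨⟨a1, a2⟩, ⟨a3, a4⟩, a5, a6⟩ := h
  have b1 : ((-2 : ℤ) : ℝ) < ((u.1 - v.1 : ℤ) : ℝ) := by push_cast; linarith
  have b2 : ((u.1 - v.1 : ℤ) : ℝ) < ((2 : ℤ) : ℝ) := by push_cast; linarith
  have b3 : ((-2 : ℤ) : ℝ) < ((u.2 - v.2 : ℤ) : ℝ) := by push_cast; linarith
  have b4 : ((u.2 - v.2 : ℤ) : ℝ) < ((2 : ℤ) : ℝ) := by push_cast; linarith
  have b5 : ((-2 : ℤ) : ℝ) < ((u.1 - v.1 - (u.2 - v.2) : ℤ) : ℝ) := by push_cast; linarith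
  have b6 : ((u.1 - v.1 - (u.2 - v.2) : ℤ) : ℝ) < ((2 : ℤ) : ℝ) := by push_cast; linarith
  rw [Int.cast_lt] at b1 b2 b3 b4 b5 b6
  unfold Adj
  omega

theorem adj_of_car_le {z : E} {u v : V} (hu : u ∈ car z) (hv : hN (z - emb v) ≤ 1) : Adj u v := by
  apply adj_of_lt_two
  have h1 : hN (emb u - z) < 1 := by rw [← hN_neg, neg_sub]; exact hu
  have := hN_add_le (emb u - z) (z - emb v)
  rw [sub_add_sub_cancel] at this
  linarith

theorem adj_of_car {z : E} {u v : V} (hu : u ∈ car z) (hv : v ∈ car z) : Adj u v :=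
  adj_of_car_le hu (le_of_lt hv)

theorem floor_mem_car (z : E) : ((⌊z.1⌋, ⌊z.2⌋) : V) ∈ car z := by
  rw [mem_car']
  have h1 := Int.floor_le z.1
  have h2 := Int.lt_floor_add_one z.1
  have h3 := Int.floor_le z.2
  have h4 := Int.lt_floor_add_one z.2
  refine ⟨abs_lt.mpr ⟨?_, ?_⟩, abs_lt.mpr ⟨?_, ?_⟩, abs_lt.mpr ⟨?_, ?_⟩⟩ <;> dsimp only <;> linarith

theorem car_nonempty (z : E) : (car z).Nonempty := ⟨_, floor_mem_car z⟩

structure EH (n : ℕ) (g : C(E, E)) : Prop where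
  bij : Function.Bijective g
  px : ∀ z, g (z + ((n : ℝ), 0)) = g z + (1, 0)
  py : ∀ z, g (z + (0, (n : ℝ))) = g z + (0, 1)

theorem EH.int {n : ℕ} {g : C(E, E)} (h : EH n g) (k l : ℤ) (z : E) :
    g (z + ((k : ℝ) * n, (l : ℝ) * n)) = g z + ((k : ℝ), (l : ℝ)) := by
  have hx : ∀ (k : ℤ) (z : E), g (z + ((k : ℝ) * n, 0)) = g z + ((k : ℝ), 0) := by
    intro k
    induction k using Int.induction_on with
    | zero =>
      intro z
      have e : ((0 : ℝ), (0 : ℝ)) = (0 : E) := rfl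
      simp [e]
    | succ k ih =>
      intro z
      have e : z + ((((k : ℤ) + 1 : ℤ) : ℝ) * n, 0) = (z + (((k : ℤ) : ℝ) * n, 0)) + ((n : ℝ), 0) := by
        ext <;> simp; ring
      rw [e, h.px, ih]
      ext <;> simp; ring
    | pred k ih =>
      intro z
      have e : (z + (((-(k : ℤ) - 1 : ℤ) : ℝ) * n, 0)) + ((n : ℝ), 0) = z + (((-(k : ℤ) : ℤ) : ℝ) * n, 0) := by
        ext <;> simp; ring
      have := h.px (z + (((-(k : ℤ) - 1 : ℤ) : ℝ) * n, 0))
      rw [e, ih] at this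
      rw [← sub_eq_iff_eq_add] at this
      rw [← this]
      ext <;> simp; ring
  have hy : ∀ (k : ℤ) (z : E), g (z + (0, (k : ℝ) * n)) = g z + (0, (k : ℝ)) := by
    intro k
    induction k using Int.induction_on with
    | zero =>
      intro z
      have e : ((0 : ℝ), (0 : ℝ)) = (0 : E) := rfl
      simp [e]
    | succ k ih =>
      intro z
      have e : z + (0, (((k : ℤ) + 1 : ℤ) : ℝ) * n) = (z + (0, ((k : ℤ) : ℝ) * n)) + (0, (n : ℝ)) := by
        ext <;> simp; ring
      rw [e, h.py, ih]
      ext <;> simp; ring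
    | pred k ih =>
      intro z
      have e : (z + (0, ((-(k : ℤ) - 1 : ℤ) : ℝ) * n)) + (0, (n : ℝ)) = z + (0, ((-(k : ℤ) : ℤ) : ℝ) * n) := by
        ext <;> simp; ring
      have := h.py (z + (0, ((-(k : ℤ) - 1 : ℤ) : ℝ) * n))
      rw [e, ih] at this
      rw [← sub_eq_iff_eq_add] at this
      rw [← this]
      ext <;> simp; ring
  have e : z + ((k : ℝ) * n, (l : ℝ) * n) = (z + ((k : ℝ) * n, 0)) + (0, (l : ℝ) * n) := by
    ext <;> simp
  rw [e, hy, hx]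
  ext <;> simp

/-- a point of the orbit of `v` under the period lattice -/
def orbV (n : ℕ) (v : V) (k l : ℤ) : V := v + (k * n, l * n)

noncomputable def cen (n : ℕ) (v : V) (z : E) : E :=
  emb (orbV n v (round ((z.1 - v.1) / n)) (round ((z.2 - v.2) / n)))

noncomputable def per (n : ℕ) (v : V) (r : E → E) (z : E) : E := cen n v z + r (z - cen n v z)

theorem round_eq_of {x : ℝ} {k : ℤ} (h1 : -(1 / 2) < x - k) (h2 : x - k < 1 / 2) : round x = k := by
  rw [round_eq, Int.floor_eq_iff]; constructor <;> linarith

theorem cen_eq {n : ℕ} (hn : 2 ≤ n) {v : V} {z : E} {k l : ℤ}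
    (h : hN (z - emb (orbV n v k l)) < 1) : cen n v z = emb (orbV n v k l) := by
  rw [hN_lt] at h
  have hn' : (2 : ℝ) ≤ n := by exact_mod_cast hn
  have hn0 : (0 : ℝ) < n := by linarith
  simp only [orbV, Prod.fst_sub, Prod.snd_sub, emb_fst, emb_snd, Prod.fst_add, Prod.snd_add,
    Int.cast_add, Int.cast_mul, Int.cast_natCast, abs_lt] at h
  obtain ⟨⟨a1, a2⟩, ⟨a3, a4⟩, -⟩ := h
  have key : ∀ (x : ℝ) (a : ℤ) (k : ℤ), -1 < x - (a + k * n) → x - (a + k * n) < 1 →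
      round ((x - a) / n) = k := by
    intro x a k h1 h2
    have e : (x - a) / n - k = (x - (a + k * n)) / n := by field_simp; ring
    apply round_eq_of
    · rw [e, lt_div_iff₀ hn0]; linarith
    · rw [e, div_lt_iff₀ hn0]; linarith
  unfold cen
  rw [key _ _ _ a1 a2, key _ _ _ a3 a4]

theorem per_of_star {n : ℕ} (hn : 2 ≤ n) {v : V} {r : E → E} {z : E} {k l : ℤ}
    (h : hN (z - emb (orbV n v k l)) < 1) :
    per n v r z = emb (orbV n v k l) + r (z - emb (orbV n v k l)) := by
  rw [per, cen_eq hn h]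

theorem per_of_out {n : ℕ} {v : V} {r : E → E} (hr : ∀ z, 1 ≤ hN z → r z = z) {z : E}
    (h : ∀ k l, 1 ≤ hN (z - emb (orbV n v k l))) : per n v r z = z := by
  unfold per
  rw [hr]
  · abel
  · exact h _ _

theorem per_id {n : ℕ} {v : V} (z : E) : per n v (fun z => z) z = z := by
  unfold per; exact add_sub_cancel _ _

theorem r_star {r : E → E} (hr : ∀ z, 1 ≤ hN z → r z = z) (hi : Function.Injective r) {z : E}
    (h : hN z < 1) : hN (r z) < 1 := by
  by_contra hc
  push Not at hc
  have := hi (hr _ hc)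
  rw [this] at hc; linarith

theorem per_comp {n : ℕ} (hn : 2 ≤ n) {v : V} {r s : E → E} (hr : ∀ z, 1 ≤ hN z → r z = z)
    (hs : ∀ z, 1 ≤ hN z → s z = z) (hi : Function.Injective s) (z : E) :
    per n v r (per n v s z) = per n v (fun z => r (s z)) z := by
  by_cases h : ∃ k l, hN (z - emb (orbV n v k l)) < 1
  · obtain ⟨k, l, h⟩ := h
    rw [per_of_star hn h, per_of_star hn h]
    have := r_star hs hi h
    rw [per_of_star hn (k := k) (l := l) (by rwa [add_sub_cancel_left]), add_sub_cancel_left]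
  · push Not at h
    rw [per_of_out hs h, per_of_out hr h, per_of_out _ h]
    intro z hz
    rw [hs z hz, hr z hz]

theorem per_bij {n : ℕ} (hn : 2 ≤ n) (v : V) {r : E → E} (hr : ∀ z, 1 ≤ hN z → r z = z)
    (hb : Function.Bijective r) : Function.Bijective (per n v r) := by
  let e := Equiv.ofBijective r hb
  have he : ∀ z, 1 ≤ hN z → e.symm z = z := fun z hz => by
    rw [Equiv.symm_apply_eq]; exact (hr z hz).symm
  refine Function.bijective_iff_has_inverse.mpr ⟨per n v e.symm, fun z => ?_, fun z => ?_⟩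
  · rw [per_comp hn he hr hb.1]
    have : (fun z => e.symm (r z)) = fun z => z := by
      funext z; exact e.symm_apply_apply z
    rw [this, per_id]
  · rw [per_comp hn hr he e.symm.injective]
    have : (fun z => r (e.symm z)) = fun z => z := by
      funext z; exact e.apply_symm_apply z
    rw [this, per_id]

theorem per_shift {n : ℕ} (hn : 2 ≤ n) (v : V) (r : E → E) (a b : ℤ) (z : E) :
    per n v r (z + ((a : ℝ) * n, (b : ℝ) * n)) = per n v r z + ((a : ℝ) * n, (b : ℝ) * n) := by
  have hn0 : (n : ℝ) ≠ 0 := by positivity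
  have hc : cen n v (z + ((a : ℝ) * n, (b : ℝ) * n)) = cen n v z + ((a : ℝ) * n, (b : ℝ) * n) := by
    have e : ∀ (x : ℝ) (c a : ℤ), round ((x + a * n - c) / n) = round ((x - c) / n) + a := by
      intro x c a
      rw [← round_add_intCast]
      congr 1
      field_simp
      ring
    unfold cen
    simp only [Prod.fst_add, Prod.snd_add, e]
    ext <;> simp [orbV] <;> ring
  unfold per
  rw [hc, add_sub_add_right_eq_sub]
  abel

theorem orbV_sep {n : ℕ} {v : V} {k l k' l' : ℤ}
    (h : orbV n v k l ≠ orbV n v k' l') :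
    (n : ℝ) ≤ |(emb (orbV n v k l)).1 - (emb (orbV n v k' l')).1| ∨
    (n : ℝ) ≤ |(emb (orbV n v k l)).2 - (emb (orbV n v k' l')).2| := by
  have key : ∀ k k' : ℤ, k ≠ k' → (n : ℝ) ≤ |(k : ℝ) * n - k' * n| := by
    intro k k' hk
    rw [← sub_mul, abs_mul, Nat.abs_cast]
    have : (1 : ℝ) ≤ |(k : ℝ) - k'| := by
      have : 1 ≤ |k - k'| := Int.one_le_abs (sub_ne_zero.mpr hk)
      exact_mod_cast this
    nlinarith [Nat.cast_nonneg (α := ℝ) n]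
  by_cases hk : k = k'
  · right
    have hl : l ≠ l' := by rintro rfl; exact h (by rw [hk])
    have := key l l' hl
    simp only [orbV, emb_snd, Prod.snd_add, Int.cast_add, Int.cast_mul, Int.cast_natCast]
    rwa [add_sub_add_left_eq_sub]
  · left
    have := key k k' hk
    simp only [orbV, emb_fst, Prod.fst_add, Int.cast_add, Int.cast_mul, Int.cast_natCast]
    rwa [add_sub_add_left_eq_sub]

theorem per_local {n : ℕ} (hn : 3 ≤ n) {v : V} {r : E → E} (hr : ∀ z, 1 ≤ hN z → r z = z) {z : E}
    {k l : ℤ} (h1 : |z.1 - (emb (orbV n v k l)).1| < n - 1)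
    (h2 : |z.2 - (emb (orbV n v k l)).2| < n - 1) :
    per n v r z = emb (orbV n v k l) + r (z - emb (orbV n v k l)) := by
  by_cases h : hN (z - emb (orbV n v k l)) < 1
  · exact per_of_star (by omega) h
  · push Not at h
    rw [hr _ h, per_of_out hr, add_sub_cancel]
    intro k' l'
    by_cases he : orbV n v k' l' = orbV n v k l
    · rw [he]; exact h
    · by_contra hc
      push Not at hc
      rw [hN_lt] at hc
      simp only [Prod.fst_sub, Prod.snd_sub] at hc
      rcases orbV_sep he with h3 | h3
      · have := abs_sub_le (emb (orbV n v k' l')).1 z.1 (emb (orbV n v k l)).1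
        rw [abs_sub_comm _ z.1] at this
        linarith [hc.1]
      · have := abs_sub_le (emb (orbV n v k' l')).2 z.2 (emb (orbV n v k l)).2
        rw [abs_sub_comm _ z.2] at this
        linarith [hc.2.1]

theorem per_continuous {n : ℕ} (hn : 3 ≤ n) (v : V) {ρ : I → E → E}
    (hc : Continuous (fun p : I × E => ρ p.1 p.2)) (hr : ∀ t z, 1 ≤ hN z → ρ t z = z) :
    Continuous (fun p : I × E => per n v (ρ p.1) p.2) := by
  have hn' : (3 : ℝ) ≤ n := by exact_mod_cast hn
  have hn0 : (0 : ℝ) < n := by linarith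
  rw [continuous_iff_continuousAt]
  rintro ⟨t0, z0⟩
  obtain ⟨k, l, h1, h2⟩ : ∃ k l : ℤ, |z0.1 - (emb (orbV n v k l)).1| < n - 1 ∧
      |z0.2 - (emb (orbV n v k l)).2| < n - 1 := by
    have key : ∀ (x : ℝ) (a : ℤ), |x - (a + (round ((x - a) / n) : ℤ) * n)| < n - 1 := by
      intro x a
      have := abs_sub_round ((x - a) / n)
      have e : x - (a + (round ((x - a) / n) : ℤ) * n) = ((x - a) / n - round ((x - a) / n)) * n := by
        field_simp; ring
      rw [e, abs_mul, Nat.abs_cast]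
      nlinarith
    refine ⟨round ((z0.1 - v.1) / n), round ((z0.2 - v.2) / n), ?_, ?_⟩
    · simpa [orbV] using key z0.1 v.1
    · simpa [orbV] using key z0.2 v.2
  set w := emb (orbV n v k l) with hw
  have hev : ∀ᶠ p : I × E in 𝓝 (t0, z0), w + ρ p.1 (p.2 - w) = per n v (ρ p.1) p.2 := by
    have o1 : Continuous (fun p : I × E => |p.2.1 - w.1|) := by fun_prop
    have o2 : Continuous (fun p : I × E => |p.2.2 - w.2|) := by fun_prop
    filter_upwards [(isOpen_lt o1 continuous_const).mem_nhds h1,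
      (isOpen_lt o2 continuous_const).mem_nhds h2] with p hp1 hp2
    exact (per_local hn (hr p.1) hp1 hp2).symm
  refine ContinuousAt.congr ?_ hev
  have hm : Continuous (fun p : I × E => ((p.1, p.2 - w) : I × E)) := by fun_prop
  have := hc.comp hm
  exact (continuous_const.add this).continuousAt

end TorusIso

namespace TorusIso
open Filter Topology unitInterval

theorem cone_to_car {A : Set V} {v : V} (dA : ∀ w, Decidable (w ∈ A)) {d : E} (h1 : hN d ≤ 1)
    (hd : d ∈ Cone (decide (v + (1, 0) ∈ A)) (decide (v + (1, 1) ∈ A)) (decide (v + (0, 1) ∈ A))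
      (decide (v + (-1, 0) ∈ A)) (decide (v + (-1, -1) ∈ A)) (decide (v + (0, -1) ∈ A)))
    {u : V} (hu : u ∈ car (emb v + d)) (huv : u ≠ v) : u ∈ A := by
  have ha : Adj v u := (adj_of_car_le hu (by rwa [add_sub_cancel_left])).symm
  rw [mem_car'] at hu
  simp only [Prod.fst_add, Prod.snd_add, emb_fst, emb_snd, abs_lt] at hu
  simp only [Cone, Set.mem_ofPred_eq, decide_eq_true_eq] at hd
  obtain ⟨d0, d1, d2, d3, d4, d5⟩ := hd
  obtain ⟨⟨a1, a2⟩, ⟨a3, a4⟩, a5, a6⟩ := hu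
  rcases adj_cases ha with rfl | rfl | rfl | rfl | rfl | rfl | rfl
  case inr.inr.inr.inr.inr.inr => exact absurd rfl huv
  all_goals simp only [Prod.fst_add, Prod.snd_add, Int.cast_add, Int.cast_one, Int.cast_zero,
    Int.cast_neg] at a1 a2 a3 a4 a5 a6
  all_goals first
    | exact d0 (by linarith) (by linarith)
    | exact d1 (by linarith) (by linarith)
    | exact d2 (by linarith) (by linarith)
    | exact d3 (by linarith) (by linarith)
    | exact d4 (by linarith) (by linarith)
    | exact d5 (by linarith) (by linarith)

theorem car_to_cone {A : Set V} {v : V} (dA : ∀ w, Decidable (w ∈ A)) {d : E} (h1 : hN d ≤ 1)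
    (h : ∀ u ∈ car (emb v + d), u ≠ v → u ∈ A) :
    d ∈ Cone (decide (v + (1, 0) ∈ A)) (decide (v + (1, 1) ∈ A)) (decide (v + (0, 1) ∈ A))
      (decide (v + (-1, 0) ∈ A)) (decide (v + (-1, -1) ∈ A)) (decide (v + (0, -1) ∈ A)) := by
  simp only [hN_le, abs_le] at h1
  obtain ⟨⟨a1, a2⟩, ⟨a3, a4⟩, a5, a6⟩ := h1
  simp only [Cone, Set.mem_ofPred_eq, decide_eq_true_eq]
  refine ⟨?_, ?_, ?_, ?_, ?_, ?_⟩
  all_goals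
    intro b1 b2
    refine h _ ?_ (by simp)
    rw [mem_car']
    simp only [Prod.fst_add, Prod.snd_add, emb_fst, emb_snd, abs_lt, Int.cast_add, Int.cast_one,
      Int.cast_zero, Int.cast_neg]
    refine ⟨⟨?_, ?_⟩, ⟨?_, ?_⟩, ?_, ?_⟩ <;> linarith

structure Fam (n N : ℕ) (L : ℤ → Set V) : Prop where
  good : ∀ i, Good n (L i)
  per : ∀ i, L (i + N) = sh ((n : ℤ), 0) (L i)
  nest : ∀ i, ∀ v ∈ L i, ∀ w, Adj v w → w ∈ L (i + 1)

theorem per_iter {n N : ℕ} {L : ℤ → Set V} (h : ∀ i, L (i + N) = sh ((n : ℤ), 0) (L i)) (i k : ℤ) :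
    L (i + k * N) = sh (k * n, 0) (L i) := by
  induction k using Int.induction_on with
  | zero =>
    have : ((((0 : ℤ) * (n : ℤ)), 0) : V) = 0 := by ext <;> simp
    rw [this, sh_zero]; simp
  | succ k ih =>
    have e : i + ((k : ℤ) + 1) * N = (i + (k : ℤ) * N) + N := by ring
    rw [e, h, ih, sh_sh]; congr 1; ext <;> simp; ring
  | pred k ih =>
    have e : i + (-(k : ℤ)) * N = (i + (-(k : ℤ) - 1) * N) + N := by ring
    rw [e, h] at ih
    have := congrArg (sh (-(n : ℤ), 0)) ih
    rw [sh_sh, sh_sh] at this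
    have e0 : ((-(n : ℤ), 0) + ((n : ℤ), 0) : V) = 0 := by ext <;> simp
    rw [e0, sh_zero] at this
    rw [this]; congr 1; ext <;> simp; ring

theorem mem_shift_of {n N : ℕ} {L : ℤ → Set V} (h : ∀ i, L (i + N) = sh ((n : ℤ), 0) (L i))
    (hp : ∀ i, VPer n (L i)) (i k l : ℤ) (w : V) :
    orbV n w k l ∈ L (i + k * N) ↔ w ∈ L i := by
  rw [per_iter h, mem_sh]
  have : orbV n w k l - (k * (n : ℤ), 0) = (w.1, w.2 + l * n) := by
    ext <;> simp [orbV]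
  rw [this]
  exact (hp i).int l w

theorem Fam.mem_shift {n N : ℕ} {L : ℤ → Set V} (h : Fam n N L) (i k l : ℤ) (w : V) :
    orbV n w k l ∈ L (i + k * N) ↔ w ∈ L i := mem_shift_of h.per (fun i => (h.good i).per) i k l w

theorem Fam.mono {n N : ℕ} {L : ℤ → Set V} (h : Fam n N L) {i j : ℤ} (hij : i ≤ j) : L i ⊆ L j := by
  obtain ⟨k, rfl⟩ := Int.le.dest hij
  induction k with
  | zero => simp
  | succ k ih =>
    refine (ih (by omega)).trans fun v hv => ?_
    have := h.nest _ v hv v (Adj.refl v)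
    push_cast
    rwa [← add_assoc]

def Adapted (N : ℕ) (L : ℤ → Set V) (g : C(E, E)) : Prop :=
  ∀ (i : ℤ) (z : E), (car z ⊆ L i → (g z).1 < ((i : ℝ) + 1) / N) ∧
    ((∀ u ∈ car z, u ∉ L i) → (i : ℝ) / N < (g z).1)

def Near (n : ℕ) (v : V) (z z' : E) : Prop :=
  z' = z ∨ ∃ k l : ℤ, hN (z - emb (orbV n v k l)) < 1 ∧ hN (z' - emb (orbV n v k l)) < 1

def PS1 (n : ℕ) (v : V) (g : C(E, E)) : Set C(E, E) :=
  {f | EH n f ∧ ∀ z, ∃ z', f z = g z' ∧ Near n v z z'}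

theorem EH.per_comp {n : ℕ} (hn : 3 ≤ n) {g f : C(E, E)} (hg : EH n g) (v : V) {r : E → E}
    (hr : ∀ z, 1 ≤ hN z → r z = z) (hb : Function.Bijective r) (hf : ∀ z, f z = g (per n v r z)) :
    EH n f := by
  have hf' : (f : E → E) = g ∘ per n v r := funext hf
  refine ⟨?_, fun z => ?_, fun z => ?_⟩
  · rw [hf']; exact hg.bij.comp (per_bij (by omega) v hr hb)
  · have := per_shift (by omega : 2 ≤ n) v r 1 0 z
    simp only [Int.cast_one, one_mul, Int.cast_zero, zero_mul] at this
    rw [hf, this, hg.px, ← hf]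
  · have := per_shift (by omega : 2 ≤ n) v r 0 1 z
    simp only [Int.cast_one, one_mul, Int.cast_zero, zero_mul] at this
    rw [hf, this, hg.py, ← hf]

theorem orbV_inj {n : ℕ} (hn : 0 < n) {v : V} {k l k' l' : ℤ} (h : orbV n v k l = orbV n v k' l') :
    k = k' ∧ l = l' := by
  simp only [orbV, add_right_inj, Prod.mk.injEq] at h
  have : (n : ℤ) ≠ 0 := by omega
  exact ⟨mul_right_cancel₀ this h.1, mul_right_cancel₀ this h.2⟩

theorem orbV_adj {n : ℕ} (hn : 2 ≤ n) {v : V} {k l k' l' : ℤ}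
    (h : Adj (orbV n v k l) (orbV n v k' l')) : k = k' ∧ l = l' := by
  unfold Adj orbV at h
  simp only [Prod.fst_add, Prod.snd_add] at h
  obtain ⟨h1, h2, h3, h4, -, -⟩ := h
  have hn' : (2 : ℤ) ≤ n := by exact_mod_cast hn
  have key : ∀ a b : ℤ, a * n ≤ b * n + 1 → b * n ≤ a * n + 1 → a = b := by
    intro a b h1 h2
    by_contra hab
    rcases lt_or_gt_of_ne hab with h | h <;> nlinarith
  exact ⟨key _ _ (by linarith) (by linarith), key _ _ (by linarith) (by linarith)⟩

theorem EH.orb {n : ℕ} {g : C(E, E)} (hg : EH n g) (v : V) (k l : ℤ) (e : E) :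
    g (emb (orbV n v k l) + e) = g (emb v + e) + ((k : ℝ), (l : ℝ)) := by
  rw [← hg.int]
  congr 1
  ext <;> simp [orbV] <;> ring

theorem orbV_orbV (n : ℕ) (v : V) (k l k' l' : ℤ) :
    orbV n (orbV n v k l) k' l' = orbV n v (k + k') (l + l') := by
  ext <;> simp [orbV] <;> ring

theorem orbV_zero (n : ℕ) (v : V) : orbV n v 0 0 = v := by ext <;> simp [orbV]

theorem move {n N : ℕ} (hn : 3 ≤ n) (hNN : 1 ≤ N) {L L2 : ℤ → Set V} (hF : Fam n N L) {g : C(E, E)}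
    (hg : EH n g) (hA : Adapted N L g) {i0 : ℤ} {v : V} (hv : v ∉ L i0)
    (hnb : ∀ u, Adj v u → u ∈ L (i0 + 1)) (dA : ∀ w, Decidable (w ∈ L i0))
    (hsc : sc (decide (v + (1, 0) ∈ L i0)) (decide (v + (1, 1) ∈ L i0)) (decide (v + (0, 1) ∈ L i0))
      (decide (v + (-1, 0) ∈ L i0)) (decide (v + (-1, -1) ∈ L i0)) (decide (v + (0, -1) ∈ L i0)) = 2)
    (hL2 : ∀ i w, w ∈ L2 i ↔ w ∈ L i ∨ ∃ k l, i = i0 + k * N ∧ w = orbV n v k l) :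
    ∃ g', JoinedIn (PS1 n v g) g g' ∧ Adapted N L2 g' := by
  have hNpos : (0 : ℝ) < N := by exact_mod_cast hNN
  obtain ⟨ρ, hc, h0, hb, hout, hW⟩ := local_push _ _ _ _ _ _ hsc
    {e | (g (emb v + e)).1 < ((i0 : ℝ) + 1) / N}
    (isOpen_lt (by fun_prop) continuous_const) (by
      intro d hd hd1
      refine (hA i0 _).1 fun u hu => ?_
      refine cone_to_car dA hd1.le hd hu ?_
      rintro rfl
      rw [mem_car, add_sub_cancel_left, hd1] at hu
      exact lt_irrefl _ hu)
  let Φ : C(I × E, E) := ⟨fun p => g (per n v (ρ p.1) p.2),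
    g.continuous.comp (per_continuous hn v hc hout)⟩
  have hΦ : ∀ t z, Φ.curry t z = g (per n v (ρ t) z) := fun t z => rfl
  have hstar : ∀ t z, hN z < 1 → hN (ρ t z) < 1 := fun t z hz => r_star (hout t) (hb t).1 hz
  refine ⟨Φ.curry 1, ⟨⟨⟨Φ.curry, by fun_prop⟩, ?_, rfl⟩, fun t => ⟨?_, fun z => ?_⟩⟩, ?_⟩
  · ext1 z
    change g (per n v (ρ 0) z) = g z
    have : ρ 0 = fun z => z := funext h0
    rw [this, per_id]
  · exact hg.per_comp hn v (hout t) (hb t) (hΦ t)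
  · refine ⟨per n v (ρ t) z, rfl, ?_⟩
    by_cases h : ∃ k l, hN (z - emb (orbV n v k l)) < 1
    · obtain ⟨k, l, h⟩ := h
      refine Or.inr ⟨k, l, h, ?_⟩
      rw [per_of_star (by omega) h, add_sub_cancel_left]
      exact hstar _ _ h
    · push Not at h
      exact Or.inl (per_of_out (hout t) h)
  · intro i z
    rw [hΦ]
    by_cases h : ∃ k l, hN (z - emb (orbV n v k l)) < 1
    swap
    · push Not at h
      rw [per_of_out (hout 1) h]
      have hno : ∀ u ∈ car z, u ∈ L2 i → u ∈ L i := by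
        intro u hu hu2
        rcases (hL2 i u).mp hu2 with h3 | ⟨k, l, -, rfl⟩
        · exact h3
        · exact absurd hu (not_lt.mpr (h k l))
      exact ⟨fun hs => (hA i z).1 fun u hu => hno u hu (hs hu),
        fun hs => (hA i z).2 fun u hu hu2 => hs u hu ((hL2 i u).mpr (Or.inl hu2))⟩
    · obtain ⟨k, l, h⟩ := h
      have hwc : orbV n v k l ∈ car z := h
      set z' := per n v (ρ 1) z with hz'
      have ez' : z' = emb (orbV n v k l) + ρ 1 (z - emb (orbV n v k l)) :=
        per_of_star (by omega) h
      have hwc' : orbV n v k l ∈ car z' := by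
        rw [mem_car, ez', add_sub_cancel_left]; exact hstar _ _ h
      have hwL : orbV n v k l ∉ L (i0 + k * N) := by rwa [hF.mem_shift]
      constructor
      · intro hs
        rcases lt_trichotomy i (i0 + k * N) with hi | hi | hi
        · exfalso
          rcases (hL2 i _).mp (hs hwc) with h3 | ⟨k', l', h3, h4⟩
          · exact hwL (hF.mono hi.le h3)
          · rw [(orbV_inj (by omega) h4).1] at hi; omega
        · have hd : z - emb (orbV n v k l) ∈ Cone (decide (v + (1, 0) ∈ L i0))
              (decide (v + (1, 1) ∈ L i0)) (decide (v + (0, 1) ∈ L i0))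
              (decide (v + (-1, 0) ∈ L i0)) (decide (v + (-1, -1) ∈ L i0))
              (decide (v + (0, -1) ∈ L i0)) := by
            refine car_to_cone dA h.le fun u hu huv => ?_
            have hu' : orbV n u k l ∈ car z := by
              rw [mem_car] at hu ⊢
              convert hu using 2
              ext <;> simp [orbV] <;> ring
            rcases (hL2 i _).mp (hs hu') with h3 | ⟨k', l', h3, h4⟩
            · rw [hi, hF.mem_shift] at h3; exact h3
            · exfalso
              have had := adj_of_car hu' hwc
              rw [h4] at had
              obtain ⟨e1, e2⟩ := orbV_adj (by omega) had
              rw [e1, e2] at h4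
              apply huv
              exact add_right_cancel h4
          have h5 := hW _ hd h.le
          rw [ez', hg.orb, Prod.fst_add, hi]
          have h6 : (g (emb v + ρ 1 (z - emb (orbV n v k l)))).1 < ((i0 : ℝ) + 1) / N := h5
          have h7 : (((i0 + k * N : ℤ) : ℝ) + 1) / N = ((i0 : ℝ) + 1) / N + k := by
            push_cast; field_simp; ring
          rw [h7]; dsimp only; linarith
        · have h5 := (hA (i0 + k * N + 1) z').1 fun u hu => by
            have had := adj_of_car hwc' hu
            have e : u = orbV n (orbV n u (-k) (-l)) k l := by
              rw [orbV_orbV]; simp [orbV_zero]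
            rw [e, show i0 + k * N + 1 = (i0 + 1) + k * N by ring, hF.mem_shift]
            apply hnb
            have := had.add (((-k) * (n : ℤ), (-l) * (n : ℤ)) : V)
            have e2 : orbV n v k l + (((-k) * (n : ℤ), (-l) * (n : ℤ)) : V) = v := by
              ext <;> simp [orbV]
            rwa [e2] at this
          by_cases hi1 : i0 + k * N + 1 = i
          · rw [hi1] at h5; exact h5
          · refine h5.trans_le ?_
            gcongr
            omega
      · intro hs
        have hwi := hs _ hwc
        have hi : i < i0 + k * N := by
          by_contra hc
          push Not at hc
          rcases hc.eq_or_lt with hc | hc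
          · exact hwi ((hL2 i _).mpr (Or.inr ⟨k, l, hc.symm, rfl⟩))
          · apply hwi
            rw [hL2]
            left
            refine hF.mono (show i0 + 1 + k * N ≤ i by omega) ?_
            rw [hF.mem_shift]
            exact hnb v (Adj.refl v)
        have h5 := (hA (i0 + k * N - 1) z').2 fun u hu hu2 => by
          have := hF.nest _ u hu2 _ (adj_of_car hu hwc')
          rw [sub_add_cancel] at this
          exact hwL this
        refine lt_of_le_of_lt ?_ h5
        gcongr
        omega

end TorusIso

namespace TorusIso
open Filter Topology unitInterval

/-! ### The growth step -/

def Rel (Bar : Set ℤ) (z' z : E) : Prop :=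
  ∀ y ∈ Bar, (z'.2 < (y : ℝ) ↔ z.2 < (y : ℝ)) ∧ ((y : ℝ) < z'.2 ↔ (y : ℝ) < z.2)

theorem Rel.refl (Bar : Set ℤ) (z : E) : Rel Bar z z := fun _ _ => ⟨Iff.rfl, Iff.rfl⟩

theorem Rel.trans {Bar : Set ℤ} {a b c : E} (h : Rel Bar a b) (h' : Rel Bar b c) : Rel Bar a c :=
  fun y hy => ⟨(h y hy).1.trans (h' y hy).1, (h y hy).2.trans (h' y hy).2⟩

theorem rel_of_star {Bar : Set ℤ} {w : V} (hw : w.2 ∉ Bar) {z z' : E} (h : hN (z - emb w) < 1)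
    (h' : hN (z' - emb w) < 1) : Rel Bar z' z := by
  intro y hy
  have hne : y ≠ w.2 := by rintro rfl; exact hw hy
  have h2 := (hN_lt.mp h).2.1
  have h2' := (hN_lt.mp h').2.1
  simp only [Prod.snd_sub, emb_snd, abs_lt] at h2 h2'
  rcases lt_or_gt_of_ne hne with hlt | hlt
  · have : ((y + 1 : ℤ) : ℝ) ≤ w.2 := by exact_mod_cast hlt
    push_cast at this
    constructor <;> constructor <;> intro <;> linarith
  · have : ((w.2 + 1 : ℤ) : ℝ) ≤ y := by exact_mod_cast hlt
    push_cast at this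
    constructor <;> constructor <;> intro <;> linarith

def Trap (d M : ℕ) (L : ℤ → Set V) : Prop :=
  ∀ (i : ℤ) (v : V), (v.1 < d * i - M → v ∈ L i) ∧ (v ∈ L i → v.1 < d * i + M)

theorem trap_ctrl {d N M : ℕ} (hd : 0 < d) (hNN : 0 < N) {L : ℤ → Set V} (hT : Trap d M L)
    {g : C(E, E)} (hA : Adapted N L g) (z : E) :
    |(g z).1 - z.1 / (N * d : ℕ)| ≤ ((M : ℝ) + 1) / (N * d : ℕ) + 2 / N := by
  have hd' : (0 : ℝ) < d := by exact_mod_cast hd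
  have hN' : (0 : ℝ) < N := by exact_mod_cast hNN
  push_cast
  rw [abs_le]
  constructor
  · set i := ⌊(z.1 - 1 - M) / d⌋ with hi
    have h1 := Int.floor_le ((z.1 - 1 - M) / d)
    have h2 := Int.lt_floor_add_one ((z.1 - 1 - M) / d)
    rw [← hi] at h1 h2
    have h3 := (hA i z).2 fun u hu hu2 => by
      have h4 := (hT i u).2 hu2
      have h5 : (u.1 : ℝ) < d * i + M := by exact_mod_cast h4
      have h6 := (mem_car'.mp hu).1
      rw [abs_lt] at h6
      rw [le_div_iff₀ hd'] at h1
      linarith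
    have h7 : ((z.1 - 1 - M) / d - 1) / N < (i : ℝ) / N := by gcongr; linarith
    have e : ((z.1 - 1 - M) / d - 1) / N = z.1 / (N * d) - ((M : ℝ) + 1) / (N * d) - 1 / N := by
      field_simp; ring
    have : 0 < 1 / (N : ℝ) := by positivity
    have e2 : 2 / (N : ℝ) = 1 / N + 1 / N := by ring
    linarith
  · set i := ⌈(z.1 + 1 + M) / d⌉ with hi
    have h1 := Int.le_ceil ((z.1 + 1 + M) / d)
    have h2 := Int.ceil_lt_add_one ((z.1 + 1 + M) / d)
    rw [← hi] at h1 h2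
    have h3 := (hA i z).1 fun u hu => by
      refine (hT i u).1 ?_
      have h6 := (mem_car'.mp hu).1
      rw [abs_lt] at h6
      rw [div_le_iff₀ hd'] at h1
      have h5 : (u.1 : ℝ) < d * i - M := by linarith
      exact_mod_cast h5
    have h7 : ((i : ℝ) + 1) / N < ((z.1 + 1 + M) / d + 1 + 1) / N := by gcongr
    have e : ((z.1 + 1 + M) / d + 1 + 1) / N = z.1 / (N * d) + (((M : ℝ) + 1) / (N * d) + 2 / N) := by
      field_simp; ring
    linarith

/-- the set in which the paths of the growth process live -/
def PS (n : ℕ) (U : C(E, E)) (Bar : Set ℤ) (δ : ℝ) : Set C(E, E) :=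
  {f | EH n f ∧ (∀ z, ∃ z', f z = U z' ∧ Rel Bar z' z) ∧ ∀ z, |(f z).1 - z.1 / n| ≤ δ}

theorem Fam.sandwich {n N : ℕ} {L L' K : ℤ → Set V}
    (hcross : ∀ i, ∀ v ∈ L' i, ∀ w, Adj v w → w ∈ L (i + 1)) (hg : ∀ i, Good n (K i))
    (hp : ∀ i, K (i + N) = sh ((n : ℤ), 0) (K i)) (h1 : ∀ i, L i ⊆ K i) (h2 : ∀ i, K i ⊆ L' i) :
    Fam n N K :=
  ⟨hg, hp, fun i v hv w hw => h1 _ (hcross i v (h2 i hv) w hw)⟩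

theorem one_move {n d N M : ℕ} (hnd : n = N * d) (hn : 3 ≤ n) (hNN : 1 ≤ N) {L L2 : ℤ → Set V}
    (hF : Fam n N L) (hT : Trap d M L) {U g : C(E, E)} {Bar : Set ℤ}
    (hBar : ∀ y ∈ Bar, ∀ l : ℤ, y + l * n ∈ Bar)
    {δ : ℝ} (hδ : ((M : ℝ) + 3) / n + 2 / N ≤ δ) (hg : g ∈ PS n U Bar δ)
    (hA : Adapted N L g) {i0 : ℤ} {v : V} (hv : v ∉ L i0) (hvB : v.2 ∉ Bar)
    (hnb : ∀ u, Adj v u → u ∈ L (i0 + 1)) (dA : ∀ w, Decidable (w ∈ L i0))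
    (hsc : sc (decide (v + (1, 0) ∈ L i0)) (decide (v + (1, 1) ∈ L i0)) (decide (v + (0, 1) ∈ L i0))
      (decide (v + (-1, 0) ∈ L i0)) (decide (v + (-1, -1) ∈ L i0)) (decide (v + (0, -1) ∈ L i0)) = 2)
    (hL2 : ∀ i w, w ∈ L2 i ↔ w ∈ L i ∨ ∃ k l, i = i0 + k * N ∧ w = orbV n v k l) :
    ∃ g', JoinedIn (PS n U Bar δ) g g' ∧ Adapted N L2 g' := by
  obtain ⟨g', hj, hA'⟩ := move hn hNN hF hg.1 hA hv hnb dA hsc hL2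
  refine ⟨g', hj.mono ?_, hA'⟩
  rintro f ⟨hf, hf2⟩
  refine ⟨hf, fun z => ?_, fun z => ?_⟩
  · obtain ⟨z', h1, h2⟩ := hf2 z
    obtain ⟨z'', h3, h4⟩ := hg.2.1 z'
    refine ⟨z'', h1.trans h3, h4.trans ?_⟩
    rcases h2 with rfl | ⟨k, l, h5, h6⟩
    · exact Rel.refl _ _
    · refine rel_of_star ?_ h5 h6
      intro hc
      have := hBar _ hc (-l)
      apply hvB
      simpa [orbV] using this
  · obtain ⟨z', h1, h2⟩ := hf2 z
    have hd : 0 < d := by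
      rcases Nat.eq_zero_or_pos d with h | h
      · rw [h] at hnd; omega
      · exact h
    have h3 := trap_ctrl hd hNN hT hA z'
    rw [← hnd] at h3
    have hn0 : (0 : ℝ) < n := by exact_mod_cast (by omega : 0 < n)
    have h4 : |z'.1 / n - z.1 / n| ≤ 2 / n := by
      rw [← sub_div, abs_div, Nat.abs_cast]
      gcongr
      rcases h2 with rfl | ⟨k, l, h5, h6⟩
      · simp
      · have a1 := (hN_lt.mp h5).1
        have a2 := (hN_lt.mp h6).1
        simp only [Prod.fst_sub, abs_lt] at a1 a2
        rw [abs_le]; constructor <;> linarith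
    rw [h1]
    have := abs_sub_le (g z').1 (z'.1 / n) (z.1 / n)
    have e : ((M : ℝ) + 3) / n + 2 / N = ((M : ℝ) + 1) / n + 2 / N + 2 / n := by ring
    linarith

theorem grow {n d N M : ℕ} (hnd : n = N * d) (hn : 3 ≤ n) (hNN : 1 ≤ N) {L L' : ℤ → Set V}
    (hF : Fam n N L) (hF' : Fam n N L') (hT : Trap d M L) (hT' : Trap d M L')
    (hsub : ∀ i, L i ⊆ L' i)
    (hcross : ∀ i, ∀ v ∈ L' i, ∀ w, Adj v w → w ∈ L (i + 1)) {U g : C(E, E)} {Bar : Set ℤ}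
    (hBar : ∀ y ∈ Bar, ∀ l : ℤ, y + l * n ∈ Bar)
    (hmv : ∀ i, ∀ v ∈ L' i, v ∉ L i → v.2 ∉ Bar)
    {δ : ℝ} (hδ : ((M : ℝ) + 3) / n + 2 / N ≤ δ) (hg : g ∈ PS n U Bar δ)
    (hA : Adapted N L g) :
    ∃ g', JoinedIn (PS n U Bar δ) g g' ∧ Adapted N L' g' := by
  classical
  have hNp : (0 : ℤ) < N := by exact_mod_cast hNN
  let Lm : ℕ → ℤ → Set V := fun m i => if i % N < m then L' i else L i
  let FB : ℕ → Set V → ℤ → Set V := fun m B i =>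
    if i % N < m then L' i else if i % N = m then sh ((i / N) * n, 0) B else L i
  have hdecomp : ∀ (m : ℕ) (i : ℤ), i % N = m → i = m + (i / N) * N := by
    intro m i h
    have := Int.emod_add_mul_ediv i N
    rw [h] at this
    rw [mul_comm]; exact this.symm
  have hrecomp : ∀ (m : ℕ) (k : ℤ), m < N → ((m : ℤ) + k * N) % N = m ∧ ((m : ℤ) + k * N) / N = k := by
    intro m k hm
    constructor
    · rw [Int.add_mul_emod_self_right, Int.emod_eq_of_lt (by omega) (by omega)]
    · rw [Int.add_mul_ediv_right _ _ hNp.ne', Int.ediv_eq_zero_of_lt (by omega) (by omega), zero_add]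
  have main : ∀ m : ℕ, m ≤ N → ∃ g', JoinedIn (PS n U Bar δ) g g' ∧ Adapted N (Lm m) g' := by
    intro m
    induction m with
    | zero =>
      intro _
      refine ⟨g, JoinedIn.refl hg, ?_⟩
      have : Lm 0 = L := by
        funext i
        have := Int.emod_nonneg i hNp.ne'
        simp only [Lm]
        rw [if_neg]; push_cast; omega
      rwa [this]
    | succ m ih =>
      intro hm
      have e1 : FB m (L m) = Lm m := by
        funext i
        simp only [FB, Lm]
        split_ifs with h1 h2
        · rfl
        · conv_rhs => rw [hdecomp m i h2, per_iter hF.per]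
        · rfl
      have e2 : FB m (L' m) = Lm (m + 1) := by
        funext i
        simp only [FB, Lm]
        split_ifs with h1 h2 h3 h4 h5
        · rfl
        · push_cast at h2; omega
        · conv_rhs => rw [hdecomp m i h3, per_iter hF'.per]
        · push_cast at h4; omega
        · push_cast at h5; omega
        · rfl
      have hstart := ih (by omega)
      rw [← e1] at hstart
      rw [← e2]
      refine shell_induct (by omega : 0 < n) (hF.good m) (hF'.good m) (hsub m)
        (fun B => ∃ g', JoinedIn (PS n U Bar δ) g g' ∧ Adapted N (FB m B) g') hstart ?_
      rintro B v hB hBv hLB hBL hvB ⟨g1, hj1, hA1⟩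
      have hm0 : FB m B m = B := by
        have := hrecomp m 0 (by omega)
        simp only [zero_mul, add_zero] at this
        simp only [FB]
        rw [this.1, this.2, if_neg (lt_irrefl _), if_pos rfl]
        have : (((0 : ℤ) * (n : ℤ), 0) : V) = 0 := by ext <;> simp
        rw [this, sh_zero]
      have hs1 : ∀ i, L i ⊆ FB m B i := by
        intro i
        simp only [FB]
        split_ifs with h1 h2
        · exact hsub i
        · conv_lhs => rw [hdecomp m i h2, per_iter hF.per]
          exact sh_mono hLB
        · exact subset_rfl
      have hs2 : ∀ i, FB m B i ⊆ L' i := by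
        intro i
        simp only [FB]
        split_ifs with h1 h2
        · exact subset_rfl
        · conv_rhs => rw [hdecomp m i h2, per_iter hF'.per]
          exact sh_mono (Set.subset_union_left.trans hBL)
        · exact hsub i
      have hK : Fam n N (FB m B) := by
        refine Fam.sandwich hcross (fun i => ?_) (fun i => ?_) hs1 hs2
        · simp only [FB]
          split_ifs
          · exact hF'.good i
          · exact hB.sh _
          · exact hF.good i
        · simp only [FB]
          have a1 : (i + N) % N = i % N := Int.add_emod_right i N
          have a2 : (i + N) / N = i / N + 1 := by
            have := Int.add_mul_ediv_right i 1 hNp.ne'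
            rwa [one_mul] at this
          rw [a1, a2]
          split_ifs
          · exact hF'.per i
          · rw [sh_sh]; congr 1; ext <;> simp; ring
          · exact hF.per i
      have hTK : Trap d M (FB m B) := fun i u => ⟨fun h => hs1 i ((hT i u).1 h),
        fun h => (hT' i u).2 (hs2 i h)⟩
      have hvL' : v ∈ L' m := hBL (Or.inr (mem_orb_self n v))
      have hvL : v ∉ L m := fun h => hvB (hLB h)
      have hsc := contiguity (by omega : 2 ≤ n) (A := FB m B m) (v := v) (by rwa [hm0])
        (by rwa [hm0]) (by
          rw [hm0]
          intro u hu
          have h1 : u ∈ L (m + 1) := hcross m u (hBL hu) u (Adj.refl u)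
          have h2 : u ∈ L (m + N) := hF.mono (by omega) h1
          rw [hF.per] at h2
          exact sh_mono hLB h2) (by rwa [hm0]) (fun w => Classical.dec _)
      obtain ⟨g2, hj2, hA2⟩ := one_move hnd hn hNN hK hTK hBar hδ hj1.target_mem hA1
        (i0 := m) (v := v) (by rwa [hm0]) (hmv m v hvL' hvL)
        (fun u hu => hs1 _ (hcross m v hvL' u hu)) _ hsc (L2 := FB m (B ∪ orb n v)) (by
          intro i w
          by_cases hi : i % N = m
          · have hw : ∀ C, w ∈ FB m C i ↔ w - ((i / N) * n, 0) ∈ C := by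
              intro C
              simp only [FB]
              rw [if_neg (by omega), if_pos hi]; rfl
            rw [hw, hw, Set.mem_union]
            apply or_congr Iff.rfl
            constructor
            · rintro ⟨h1, l, h2⟩
              refine ⟨i / N, l, hdecomp m i hi, ?_⟩
              simp only [Prod.fst_sub, Prod.snd_sub] at h1 h2
              ext <;> simp only [orbV, Prod.fst_add, Prod.snd_add] <;> linarith
            · rintro ⟨k, l, h1, h2⟩
              have h3 := (hrecomp m k (by omega)).2
              rw [h1, h3, h2]
              exact ⟨by simp [orbV], l, by simp [orbV]⟩
          · have hw : ∀ C, w ∈ FB m C i ↔ w ∈ Lm m i := by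
              intro C
              simp only [FB, Lm]
              split_ifs <;> rfl
            rw [hw, hw]
            constructor
            · exact Or.inl
            · rintro (h | ⟨k, l, h1, -⟩)
              · exact h
              · exact absurd (by rw [h1]; exact (hrecomp m k (by omega)).1) hi)
      exact ⟨g2, hj1.trans hj2, hA2⟩
  obtain ⟨g', h1, h2⟩ := main N le_rfl
  refine ⟨g', h1, ?_⟩
  have : Lm N = L' := by
    funext i
    simp only [Lm]
    rw [if_pos (Int.emod_lt_of_pos i hNp)]
  rwa [this] at h2

end TorusIso

namespace TorusIso
open Filter Topology unitInterval

/-! ### Growing by row profiles -/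

theorem LG_row {S : Set V} (h : ∀ v ∈ S, ((v.1 - 1, v.2) : V) ∈ S) : LG S := by
  rintro Z hZ ⟨b, hb⟩
  by_contra hne
  obtain ⟨z, hz, hm⟩ := exists_min_x (Set.nonempty_iff_ne_empty.mpr hne) hb
  have := hm _ (hZ.2 z hz _ (h z (hZ.1 hz)) (by unfold Adj; dsimp only; omega))
  dsimp only at this; omega

theorem RG_row {S : Set V} (h : ∀ v ∈ S, ((v.1 + 1, v.2) : V) ∈ S) : RG S := by
  rintro Z hZ ⟨b, hb⟩
  by_contra hne
  obtain ⟨z, hz, hm⟩ := exists_max_x (Set.nonempty_iff_ne_empty.mpr hne) hb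
  have := hm _ (hZ.2 z hz _ (h z (hZ.1 hz)) (by unfold Adj; dsimp only; omega))
  dsimp only at this; omega

theorem fill_eq_of_RG {A : Set V} (h : RG Aᶜ) : fill A = A := by
  refine Set.Subset.antisymm (fun v hv => ?_) (subset_fill A)
  rcases mem_fill.mp hv with h1 | ⟨Z, h1, h2, h3⟩
  · exact h1
  · rw [h Z h1 h2] at h3; exact absurd h3 (Set.notMem_empty v)

def Srow (d : ℕ) (s : ℤ → ℤ) (i : ℤ) : Set V := {v | v.1 < d * i + s v.2}

theorem LG_Srow (d : ℕ) (s : ℤ → ℤ) (i : ℤ) : LG (Srow d s i) :=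
  LG_row fun v hv => by
    have : v.1 < d * i + s v.2 := hv
    change v.1 - 1 < d * i + s v.2; omega

theorem RG_Srow (d : ℕ) (s : ℤ → ℤ) (i : ℤ) : RG (Srow d s i)ᶜ :=
  RG_row fun v hv => by
    have : ¬ (v.1 < d * i + s v.2) := hv
    change ¬ (v.1 + 1 < d * i + s v.2); omega

def Lg (d : ℕ) (L : ℤ → Set V) (s : ℤ → ℤ) (i : ℤ) : Set V := fill (L i ∪ Srow d s i)

def prof (M : ℕ) (D : ℤ → ℤ) (j : ℤ) (y : ℤ) : ℤ := max (-M) (min M (j - D y))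

theorem Lg_le {d M : ℕ} {L : ℤ → Set V} (hT : Trap d M L) {s : ℤ → ℤ} (hs : ∀ y, s y ≤ M) (i : ℤ) :
    Lg d L s i ⊆ Srow d (fun _ => M) i := by
  have : L i ∪ Srow d s i ⊆ Srow d (fun _ => M) i := by
    rintro v (hv | hv)
    · exact (hT i v).2 hv
    · have h1 : v.1 < d * i + s v.2 := hv
      have h2 := hs v.2
      change v.1 < d * i + M; omega
  have h2 := fill_mono this
  rwa [fill_eq_of_RG (RG_Srow _ _ _)] at h2

theorem Lg_trap {d M : ℕ} {L : ℤ → Set V} (hT : Trap d M L) {s : ℤ → ℤ} (hs : ∀ y, s y ≤ M) :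
    Trap d M (Lg d L s) := fun i v =>
  ⟨fun h => subset_fill _ (Or.inl ((hT i v).1 h)), fun h => Lg_le hT hs i h⟩

theorem Lg_mono {d : ℕ} {L : ℤ → Set V} {s s' : ℤ → ℤ} (h : ∀ y, s y ≤ s' y) (i : ℤ) :
    Lg d L s i ⊆ Lg d L s' i := by
  refine fill_mono (Set.union_subset_union_right _ fun v hv => ?_)
  have h1 : v.1 < d * i + s v.2 := hv
  have := h v.2
  change v.1 < d * i + s' v.2; omega

theorem Lg_cross {n N d : ℕ} {L : ℤ → Set V} (hF : Fam n N L) {s s' : ℤ → ℤ}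
    (h : ∀ y y', y ≤ y' + 1 → y' ≤ y + 1 → s' y + 1 ≤ s y' + d) (i : ℤ) :
    ∀ v ∈ Lg d L s' i, ∀ w, Adj v w → w ∈ Lg d L s (i + 1) := by
  refine fill_nbhd ?_
  rintro v (hv | hv) w hw
  · exact Or.inl (hF.nest i v hv w hw)
  · right
    have h1 : v.1 < d * i + s' v.2 := hv
    unfold Adj at hw
    have := h v.2 w.2 (by omega) (by omega)
    change w.1 < d * (i + 1) + s w.2
    have e : (d : ℤ) * (i + 1) = d * i + d := by ring
    omega

theorem Lg_fam {n N d M : ℕ} (hnd : n = N * d) {L : ℤ → Set V} (hF : Fam n N L) (hT : Trap d M L)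
    {s : ℤ → ℤ} (hs : ∀ y, s y ≤ M) (hp : ∀ y, s (y + n) = s y)
    (hl : ∀ y y', y ≤ y' + 1 → y' ≤ y + 1 → s y + 1 ≤ s y' + d) : Fam n N (Lg d L s) := by
  refine ⟨fun i => ⟨?_, RG_compl_fill _, ?_, ⟨d * i - M, fun v hv => (Lg_trap hT hs i v).1 hv⟩,
    ⟨d * i + M, fun v hv => (Lg_trap hT hs i v).2 hv⟩⟩, fun i => ?_, Lg_cross hF hl⟩
  · exact ((hF.good i).lg.union (LG_Srow _ _ _)).fill
  · refine ((hF.good i).per.union fun v => ?_).fill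
    change v.1 < d * i + s (v.2 + n) ↔ v.1 < d * i + s v.2
    rw [hp]
  · unfold Lg
    rw [← fill_sh, hF.per]
    congr 1
    ext v
    simp only [Set.mem_union, mem_sh]
    apply or_congr Iff.rfl
    change v.1 < d * (i + N) + s v.2 ↔ v.1 - n < d * i + s (v.2 - 0)
    have : (n : ℤ) = N * d := by exact_mod_cast hnd
    rw [this, sub_zero]
    have e : (d : ℤ) * (i + N) = d * i + N * d := by ring
    rw [e]
    constructor <;> intro <;> linarith

structure Prf (n d : ℕ) (D : ℤ → ℤ) : Prop where
  nonneg : ∀ y, 0 ≤ D y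
  per : ∀ y, D (y + n) = D y
  lip : ∀ y y', y ≤ y' + 1 → y' ≤ y + 1 → D y + 2 ≤ D y' + d

theorem prof_le (M : ℕ) (D : ℤ → ℤ) (j y : ℤ) : prof M D j y ≤ M := by unfold prof; omega

theorem prof_succ {n d M : ℕ} {D : ℤ → ℤ} (hD : Prf n d D) (j y y' : ℤ) (h1 : y ≤ y' + 1)
    (h2 : y' ≤ y + 1) : prof M D (j + 1) y + 1 ≤ prof M D j y' + d := by
  have := hD.lip y' y h2 h1
  have h3 := hD.lip y y (by omega) (by omega)
  unfold prof; omega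

theorem prof_mono (M : ℕ) (D : ℤ → ℤ) {j j' : ℤ} (h : j ≤ j') (y : ℤ) :
    prof M D j y ≤ prof M D j' y := by unfold prof; omega

theorem prof_fam {n N d M : ℕ} (hnd : n = N * d) {L : ℤ → Set V} (hF : Fam n N L) (hT : Trap d M L)
    {D : ℤ → ℤ} (hD : Prf n d D) (j : ℤ) : Fam n N (Lg d L (prof M D j)) := by
  refine Lg_fam hnd hF hT (prof_le M D j) (fun y => by unfold prof; rw [hD.per]) ?_
  intro y y' h1 h2
  have := prof_succ (M := M) hD j y y' h1 h2
  have := prof_mono M D (show j ≤ j + 1 by omega) y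
  omega

theorem grow_run {n d N M : ℕ} (hnd : n = N * d) (hn : 3 ≤ n) (hNN : 1 ≤ N) {L : ℤ → Set V}
    (hF : Fam n N L) (hT : Trap d M L) {D : ℤ → ℤ} (hD : Prf n d D) {U g : C(E, E)} {Bar : Set ℤ}
    (hBar : ∀ y ∈ Bar, ∀ l : ℤ, y + l * n ∈ Bar) {δ : ℝ} (hδ : ((M : ℝ) + 3) / n + 2 / N ≤ δ)
    (hg : g ∈ PS n U Bar δ) (j : ℤ) (hA : Adapted N (Lg d L (prof M D j)) g) (t : ℕ)
    (hmv : ∀ i, ∀ v ∈ Lg d L (prof M D (j + t)) i, v ∉ Lg d L (prof M D j) i → v.2 ∉ Bar) :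
    ∃ g', JoinedIn (PS n U Bar δ) g g' ∧ Adapted N (Lg d L (prof M D (j + t))) g' := by
  induction t with
  | zero => exact ⟨g, JoinedIn.refl hg, by simpa using hA⟩
  | succ t ih =>
    have hm1 : ∀ i, Lg d L (prof M D (j + t)) i ⊆ Lg d L (prof M D (j + (t + 1 : ℕ))) i :=
      fun i => Lg_mono (prof_mono M D (by push_cast; omega)) i
    have hm0 : ∀ i, Lg d L (prof M D j) i ⊆ Lg d L (prof M D (j + t)) i :=
      fun i => Lg_mono (prof_mono M D (by omega)) i
    obtain ⟨g1, hj1, hA1⟩ := ih fun i v hv hv' => hmv i v (hm1 i hv) hv'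
    obtain ⟨g2, hj2, hA2⟩ := grow hnd hn hNN (prof_fam hnd hF hT hD (j + t))
      (prof_fam hnd hF hT hD (j + (t + 1 : ℕ))) (Lg_trap hT (prof_le _ _ _))
      (Lg_trap hT (prof_le _ _ _)) hm1 (by
        intro i
        refine Lg_cross hF ?_ i
        intro y y' h1 h2
        have := prof_succ (M := M) hD (j + t) y y' h1 h2
        push_cast
        rwa [← add_assoc]) hBar (fun i v hv hv' => hmv i v hv fun h => hv' (hm0 i h)) hδ
        hj1.target_mem hA1
    exact ⟨g2, hj1.trans hj2, hA2⟩

theorem self_mem_PS {n d N M : ℕ} (hnd : n = N * d) (hn : 3 ≤ n) (hNN : 1 ≤ N) {L : ℤ → Set V}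
    (hT : Trap d M L) {g : C(E, E)} (hg : EH n g) (hA : Adapted N L g) (Bar : Set ℤ) {δ : ℝ}
    (hδ : ((M : ℝ) + 3) / n + 2 / N ≤ δ) : g ∈ PS n g Bar δ := by
  refine ⟨hg, fun z => ⟨z, rfl, Rel.refl _ _⟩, fun z => ?_⟩
  have hd : 0 < d := by
    rcases Nat.eq_zero_or_pos d with h | h
    · rw [h] at hnd; omega
    · exact h
  have h3 := trap_ctrl hd hNN hT hA z
  rw [← hnd] at h3
  have : (0 : ℝ) ≤ 2 / n := by positivity
  have e : ((M : ℝ) + 3) / n + 2 / N = ((M : ℝ) + 1) / n + 2 / N + 2 / n := by ring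
  linarith

theorem run_total {n d N M : ℕ} (hnd : n = N * d) (hn : 3 ≤ n) (hNN : 1 ≤ N) {L : ℤ → Set V}
    (hF : Fam n N L) (hT : Trap d M L) {D : ℤ → ℤ} (hD : Prf n d D) {R : ℕ} (hR : ∀ y, D y ≤ R)
    {U : C(E, E)} {Bar : Set ℤ} (hU : EH n U) (hA : Adapted N L U)
    (hBar : ∀ y ∈ Bar, ∀ l : ℤ, y + l * n ∈ Bar) {δ : ℝ} (hδ : ((M : ℝ) + 3) / n + 2 / N ≤ δ)
    (hmv : ∀ i, ∀ v ∈ Lg d L (prof M D M) i, v ∉ L i → v.2 ∉ Bar) :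
    ∃ g1 g2, JoinedIn (PS n U Bar δ) U g1 ∧ JoinedIn (PS n g1 {y | D y = 0} δ) g1 g2 ∧
      Adapted N (Srow d (fun _ => M)) g2 := by
  have hbot : Lg d L (prof M D (-M)) = L := by
    funext i
    have : L i ∪ Srow d (prof M D (-M)) i = L i := by
      refine Set.union_eq_left.mpr fun v hv => (hT i v).1 ?_
      have h1 : v.1 < d * i + prof M D (-M) v.2 := hv
      have h2 := hD.nonneg v.2
      unfold prof at h1; omega
    unfold Lg
    rw [this, fill_eq_of_RG (hF.good i).rg]
  obtain ⟨g1, hj1, hA1⟩ := grow_run hnd hn hNN hF hT hD hBar hδ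
    (self_mem_PS hnd hn hNN hT hU hA Bar hδ) (-M) (by rwa [hbot]) (2 * M) (by
      intro i v hv hv'
      have e : (-M + ((2 * M : ℕ) : ℤ) : ℤ) = M := by push_cast; ring
      rw [e] at hv
      rw [hbot] at hv'
      exact hmv i v hv hv')
  have e : (-M + ((2 * M : ℕ) : ℤ) : ℤ) = M := by push_cast; ring
  rw [e] at hA1
  have hT1 : Trap d M (Lg d L (prof M D M)) := Lg_trap hT (prof_le _ _ _)
  obtain ⟨g2, hj2, hA2⟩ := grow_run hnd hn hNN hF hT hD (Bar := {y | D y = 0}) (by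
      intro y hy l
      have h0 : ∀ (l : ℤ) (y : ℤ), D (y + l * n) = D y := by
        intro l
        induction l using Int.induction_on with
        | zero => intro y; simp
        | succ k ih => intro y; rw [← ih y, ← hD.per (y + k * n)]; congr 1; ring
        | pred k ih => intro y; rw [← ih y, ← hD.per (y + (-(k : ℤ) - 1) * n)]; congr 1; ring
      rw [Set.mem_ofPred_eq, h0]; exact hy) hδ
    (self_mem_PS hnd hn hNN hT1 hj1.target_mem.1 hA1 _ hδ) M hA1 R (by
      intro i v hv hv' h0
      rw [Set.mem_ofPred_eq] at h0
      apply hv'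
      apply subset_fill
      right
      have h1 : v.1 < d * i + M := Lg_le hT (prof_le _ _ _) i hv
      change v.1 < d * i + prof M D M v.2
      unfold prof; rw [h0]; omega)
  refine ⟨g1, g2, hj1, hj2, ?_⟩
  have : Lg d L (prof M D (M + R)) = Srow d (fun _ => M) := by
    funext i
    refine Set.Subset.antisymm (Lg_le hT (prof_le _ _ _) i) fun v hv => subset_fill _ (Or.inr ?_)
    have h1 : v.1 < d * i + M := hv
    change v.1 < d * i + prof M D (M + R) v.2
    have := hR v.2
    unfold prof; omega
  rwa [this] at hA2

end TorusIso

namespace TorusIso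
open Filter Topology unitInterval

/-! ### Homeomorphism property and rays -/

theorem EH.bdd {n : ℕ} (hn : 0 < n) {U : C(E, E)} (hU : EH n U) :
    ∃ b : ℝ, ∀ z, |(U z).1 - z.1 / n| ≤ b ∧ |(U z).2 - z.2 / n| ≤ b := by
  have hn0 : (0 : ℝ) < n := by exact_mod_cast hn
  let φ : E → E := fun z => U z - (z.1 / n, z.2 / n)
  have hφ : Continuous φ := by fun_prop
  obtain ⟨b, hb⟩ := (isCompact_Icc (a := ((0, 0) : E)) (b := ((n : ℝ), (n : ℝ)))).exists_bound_of_continuousOn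
    hφ.continuousOn
  refine ⟨b, fun z => ?_⟩
  have hper : ∀ (k l : ℤ) (z : E), φ (z + ((k : ℝ) * n, (l : ℝ) * n)) = φ z := by
    intro k l z
    simp only [φ]
    rw [hU.int]
    ext <;> simp <;> field_simp <;> ring
  have h1 : φ z = φ (z + (((-⌊z.1 / n⌋ : ℤ) : ℝ) * n, ((-⌊z.2 / n⌋ : ℤ) : ℝ) * n)) := (hper _ _ z).symm
  have key : ∀ x : ℝ, 0 ≤ x + ((-⌊x / n⌋ : ℤ) : ℝ) * n ∧ x + ((-⌊x / n⌋ : ℤ) : ℝ) * n ≤ n := by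
    intro x
    have a1 := Int.floor_le (x / n)
    have a2 := Int.lt_floor_add_one (x / n)
    rw [le_div_iff₀ hn0] at a1
    rw [div_lt_iff₀ hn0] at a2
    push_cast
    constructor <;> linarith
  have h2 := hb (z + (((-⌊z.1 / n⌋ : ℤ) : ℝ) * n, ((-⌊z.2 / n⌋ : ℤ) : ℝ) * n))
    ⟨⟨(key z.1).1, (key z.2).1⟩, ⟨(key z.1).2, (key z.2).2⟩⟩
  rw [← h1] at h2
  exact ⟨(norm_fst_le (φ z)).trans h2, (norm_snd_le (φ z)).trans h2⟩

theorem EH.homeo {n : ℕ} (hn : 0 < n) {U : C(E, E)} (hU : EH n U) : ∃ e : E ≃ₜ E, ∀ z, e z = U z := by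
  obtain ⟨b, hb⟩ := hU.bdd hn
  have hn0 : (0 : ℝ) < n := by exact_mod_cast hn
  have hp : IsProperMap U := by
    rw [isProperMap_iff_tendsto_cocompact]
    refine ⟨U.continuous, ?_⟩
    rw [← Metric.cobounded_eq_cocompact, ← tendsto_norm_atTop_iff_cobounded]
    have h1 : Tendsto (fun z : E => ‖z‖ / n - b) (Bornology.cobounded E) atTop :=
      tendsto_atTop_add_const_right _ _ (tendsto_norm_cobounded_atTop.atTop_div_const hn0)
    refine tendsto_atTop_mono (fun z => ?_) h1
    obtain ⟨b1, b2⟩ := hb z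
    rw [Prod.norm_def, Prod.norm_def, sub_le_iff_le_add, div_le_iff₀ hn0]
    have key : ∀ x y : ℝ, |x - y / n| ≤ b → |y| ≤ (|x| + b) * n := by
      intro x y h
      have h2 : |y / n| ≤ |x| + b := by
        have := abs_sub_abs_le_abs_sub (y / n) x
        rw [abs_sub_comm] at this; linarith
      rw [abs_div, Nat.abs_cast, div_le_iff₀ hn0] at h2
      exact h2
    have k1 := key _ _ b1
    have k2 := key _ _ b2
    refine max_le ?_ ?_
    · refine k1.trans ?_
      gcongr
      exact le_max_left _ _
    · refine k2.trans ?_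
      gcongr
      exact le_max_right _ _
  exact ⟨(Equiv.ofBijective U hU.bij).toHomeomorphOfContinuousClosed U.continuous hp.isClosedMap,
    fun z => rfl⟩

theorem connect {Γ : Set E} (hΓ : IsPreconnected Γ) {Q : Set V}
    (h : ∀ z ∈ Γ, (∃ u ∈ car z, u ∈ Q) → car z ⊆ Q) {z0 : E} (h0 : z0 ∈ Γ) {u0 : V}
    (hu : u0 ∈ car z0) (huQ : u0 ∈ Q) : ∀ z ∈ Γ, car z ⊆ Q := by
  intro z hz
  by_contra hc
  rw [Set.not_subset] at hc
  obtain ⟨w, hw, hwQ⟩ := hc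
  have ho : ∀ R : Set V, IsOpen {z : E | ∃ u ∈ R, u ∈ car z} := by
    intro R
    have : {z : E | ∃ u ∈ R, u ∈ car z} = ⋃ u ∈ R, {z : E | hN (z - emb u) < 1} := by
      ext z; simp [mem_car]
    rw [this]
    exact isOpen_biUnion fun u _ => isOpen_lt (by fun_prop) continuous_const
  obtain ⟨p, hp, ⟨a, ha, hap⟩, c, hc, hcp⟩ := hΓ _ _ (ho Q) (ho Qᶜ) (fun p _ => by
    obtain ⟨a, ha⟩ := car_nonempty p
    by_cases haQ : a ∈ Q
    · exact Or.inl ⟨a, haQ, ha⟩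
    · exact Or.inr ⟨a, haQ, ha⟩) ⟨z0, h0, u0, huQ, hu⟩ ⟨z, hz, w, hwQ, hw⟩
  exact hc (h p hp ⟨a, hap, ha⟩ hcp)

theorem ray_right {n : ℕ} (hn : 0 < n) {U : C(E, E)} (hU : EH n U) {Q : Set V} (hQ : BddR Q) {z0 : E}
    (h : ∀ z, (U z).2 = (U z0).2 → (U z0).1 ≤ (U z).1 → (∃ u ∈ car z, u ∈ Q) → car z ⊆ Q) :
    ∀ u ∈ car z0, u ∉ Q := by
  intro u hu huQ
  obtain ⟨e, he⟩ := hU.homeo hn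
  obtain ⟨b, hb⟩ := hU.bdd hn
  have hn0 : (0 : ℝ) < n := by exact_mod_cast hn
  obtain ⟨c, hc⟩ := hQ
  have hpre : IsPreconnected (e.symm '' {p : E | p.2 = (U z0).2 ∧ (U z0).1 ≤ p.1}) := by
    refine IsPreconnected.image ?_ _ e.symm.continuous.continuousOn
    apply Convex.isPreconnected
    rintro p ⟨hp1, hp2⟩ q ⟨hq1, hq2⟩ s t hs ht hst
    refine ⟨?_, ?_⟩
    · simp only [Prod.snd_add, Prod.smul_snd, smul_eq_mul, hp1, hq1, ← add_mul, hst, one_mul]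
    · simp only [Prod.fst_add, Prod.smul_fst, smul_eq_mul]
      have : (U z0).1 = s * (U z0).1 + t * (U z0).1 := by rw [← add_mul, hst, one_mul]
      rw [this]; gcongr
  have hall := connect hpre (Q := Q) (by
    rintro _ ⟨p, ⟨hp1, hp2⟩, rfl⟩
    have : U (e.symm p) = p := by rw [← he, e.apply_symm_apply]
    exact h _ (by rw [this, hp1]) (by rw [this]; exact hp2))
    ⟨U z0, ⟨rfl, le_rfl⟩, by rw [← he, e.symm_apply_apply]⟩ hu huQ
  set p : E := (max (U z0).1 (((c : ℝ) + 2) / n + b), (U z0).2) with hp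
  have h1 := hall (e.symm p) ⟨p, ⟨rfl, le_max_left _ _⟩, rfl⟩
  have h2 := (hb (e.symm p)).1
  rw [← he, e.apply_symm_apply, abs_le] at h2
  have h3 : ((c : ℝ) + 2) / n + b ≤ p.1 := le_max_right _ _
  have h4 : ((c : ℝ) + 2) / n ≤ (e.symm p).1 / n := by linarith
  rw [div_le_div_iff_of_pos_right hn0] at h4
  obtain ⟨w, hw⟩ := car_nonempty (e.symm p)
  have h5 : (w.1 : ℝ) ≤ c := by exact_mod_cast hc w (h1 hw)
  have h6 := (mem_car'.mp hw).1
  rw [abs_lt] at h6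
  linarith

theorem ray_left {n : ℕ} (hn : 0 < n) {U : C(E, E)} (hU : EH n U) {Q : Set V} (hQ : BddL Q) {z0 : E}
    (h : ∀ z, (U z).2 = (U z0).2 → (U z).1 ≤ (U z0).1 → (∃ u ∈ car z, u ∈ Q) → car z ⊆ Q) :
    ∀ u ∈ car z0, u ∉ Q := by
  intro u hu huQ
  obtain ⟨e, he⟩ := hU.homeo hn
  obtain ⟨b, hb⟩ := hU.bdd hn
  have hn0 : (0 : ℝ) < n := by exact_mod_cast hn
  obtain ⟨c, hc⟩ := hQ
  have hpre : IsPreconnected (e.symm '' {p : E | p.2 = (U z0).2 ∧ p.1 ≤ (U z0).1}) := by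
    refine IsPreconnected.image ?_ _ e.symm.continuous.continuousOn
    apply Convex.isPreconnected
    rintro p ⟨hp1, hp2⟩ q ⟨hq1, hq2⟩ s t hs ht hst
    refine ⟨?_, ?_⟩
    · simp only [Prod.snd_add, Prod.smul_snd, smul_eq_mul, hp1, hq1, ← add_mul, hst, one_mul]
    · simp only [Prod.fst_add, Prod.smul_fst, smul_eq_mul]
      have : (U z0).1 = s * (U z0).1 + t * (U z0).1 := by rw [← add_mul, hst, one_mul]
      rw [this]; gcongr
  have hall := connect hpre (Q := Q) (by
    rintro _ ⟨p, ⟨hp1, hp2⟩, rfl⟩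
    have : U (e.symm p) = p := by rw [← he, e.apply_symm_apply]
    exact h _ (by rw [this, hp1]) (by rw [this]; exact hp2))
    ⟨U z0, ⟨rfl, le_rfl⟩, by rw [← he, e.symm_apply_apply]⟩ hu huQ
  set p : E := (min (U z0).1 (((c : ℝ) - 2) / n - b), (U z0).2) with hp
  have h1 := hall (e.symm p) ⟨p, ⟨rfl, min_le_left _ _⟩, rfl⟩
  have h2 := (hb (e.symm p)).1
  rw [← he, e.apply_symm_apply, abs_le] at h2
  have h3 : p.1 ≤ ((c : ℝ) - 2) / n - b := min_le_right _ _
  have h4 : (e.symm p).1 / n ≤ ((c : ℝ) - 2) / n := by linarith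
  rw [div_le_div_iff_of_pos_right hn0] at h4
  obtain ⟨w, hw⟩ := car_nonempty (e.symm p)
  have h5 : (c : ℝ) ≤ w.1 := by exact_mod_cast hc w (h1 hw)
  have h6 := (mem_car'.mp hw).1
  rw [abs_lt] at h6
  linarith

end TorusIso

namespace TorusIso
open Filter Topology unitInterval

/-! ### The initial family of lattice half-planes -/

def BB (N : ℕ) (U : C(E, E)) (i : ℤ) : Set V := {v | ∃ z, v ∈ car z ∧ ((i : ℝ) + 1 / 2) / N ≤ (U z).1}

def L0 (N : ℕ) (U : C(E, E)) (i : ℤ) : Set V := coreL (BB N U i)ᶜ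

theorem self_mem_car (v : V) : v ∈ car (emb v) := by
  rw [mem_car']; simp

theorem car_shift {z : E} {v t : V} : v + t ∈ car (z + emb t) ↔ v ∈ car z := by
  rw [mem_car, mem_car]
  have : z + emb t - emb (v + t) = z - emb v := by
    ext <;> simp
  rw [this]

theorem emb_mul (k l : ℤ) (n : ℕ) : emb ((k * n, l * n) : V) = ((k : ℝ) * n, (l : ℝ) * n) := by
  ext <;> simp

theorem car_dist {z z' : E} {v : V} (h : v ∈ car z) (h' : v ∈ car z') : hN (z - z') < 2 := by
  have h1 : hN (emb v - z') < 1 := by rw [← hN_neg, neg_sub]; exact h'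
  have := hN_add_le (z - emb v) (emb v - z')
  rw [sub_add_sub_cancel] at this
  have h2 : hN (z - emb v) < 1 := h
  linarith

/-- closed sets containing a point outside the core -/
theorem exists_of_not_coreL {X : Set V} {p : V} (hp : p ∈ X) (h : p ∉ coreL X) :
    ∃ Z, ClosedIn X Z ∧ BddL Z ∧ p ∈ Z := by
  by_contra hc
  push Not at hc
  exact h ⟨hp, hc⟩

theorem BB_shift {n N : ℕ} (hNN : 0 < N) {U : C(E, E)} (hU : EH n U) (i k l : ℤ) (v : V) :
    v + (k * n, l * n) ∈ BB N U (i + k * N) ↔ v ∈ BB N U i := by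
  have hN0 : (0 : ℝ) < N := by exact_mod_cast hNN
  have e : ((((i + k * N : ℤ) : ℝ)) + 1 / 2) / N = ((i : ℝ) + 1 / 2) / N + k := by
    push_cast; field_simp; ring
  constructor
  · rintro ⟨z, hz, h⟩
    have e2 : z = (z - emb ((k * n, l * n) : V)) + emb ((k * n, l * n) : V) := by abel
    rw [e2, car_shift] at hz
    refine ⟨_, hz, ?_⟩
    rw [e2, emb_mul, hU.int, e] at h
    simpa [emb_mul] using h
  · rintro ⟨z, hz, h⟩
    refine ⟨z + emb ((k * n, l * n) : V), car_shift.mpr hz, ?_⟩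
    rw [emb_mul, hU.int, e]
    simpa using h

section
variable {n N d M B : ℕ} {U : C(E, E)} {b : ℝ}

theorem BB_lt {i : ℤ} {v : V} (h : v ∈ (BB N U i)ᶜ) {z : E} (hz : v ∈ car z) :
    (U z).1 < ((i : ℝ) + 1 / 2) / N := by
  by_contra hc
  push Not at hc
  exact h ⟨z, hz, hc⟩

theorem BB_anti (hNN : 0 < N) {i j : ℤ} (hij : i ≤ j) : (BB N U i)ᶜ ⊆ (BB N U j)ᶜ := by
  rintro v hv ⟨z, hz, h⟩
  have := BB_lt hv hz
  have h2 : ((i : ℝ) + 1 / 2) / N ≤ ((j : ℝ) + 1 / 2) / N := by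
    have : (i : ℝ) ≤ j := by exact_mod_cast hij
    gcongr
  linarith

theorem L0_RG (hn : 0 < n) (hU : EH n U) (i : ℤ) : RG (L0 N U i)ᶜ := by
  intro Z hZ hb
  have h1 : ∀ v ∈ Z, v ∉ BB N U i := by
    rintro v hv ⟨z0, hz0, h0⟩
    refine ray_right hn hU hb (z0 := z0) ?_ v hz0 hv
    rintro z - hz ⟨u, hu, huZ⟩ w hw
    refine hZ.2 u huZ w ?_ (adj_of_car hu hw)
    intro hwL
    exact hwL.1 ⟨z, hw, h0.trans hz⟩
  refine allclosed_empty_R ?_ hb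
  intro z hz u ha
  by_cases hu : u ∈ L0 N U i
  · exact absurd (coreL_adj hu (h1 z hz) ha.symm) (hZ.1 hz)
  · exact hZ.2 z hz u hu ha

theorem L0_trap (hNN : 0 < N) (hd : 0 < d) (hnd : n = N * d)
    (hb : ∀ z, |(U z).1 - z.1 / n| ≤ b) (hB : b * N ≤ B) : Trap d (d * (B + 1)) (L0 N U) := by
  have hN0 : (0 : ℝ) < N := by exact_mod_cast hNN
  have hd0 : (0 : ℝ) < d := by exact_mod_cast hd
  have hn0 : (n : ℝ) = N * d := by rw [hnd]; push_cast; ring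
  have hb' : b ≤ B / N := by rw [le_div_iff₀ hN0]; exact hB
  intro i v
  constructor
  · intro hv
    have hS : {v : V | v.1 < d * i - ((d * (B + 1) : ℕ) : ℤ)} ⊆ (BB N U i)ᶜ := by
      rintro w hw ⟨z, hz, h⟩
      have h1 := (abs_lt.mp (mem_car'.mp hz).1).2
      have h2 : (w.1 : ℝ) + 1 ≤ d * i - (d * (B + 1)) := by
        have : w.1 + 1 ≤ d * i - ((d * (B + 1) : ℕ) : ℤ) := hw
        exact_mod_cast this
      have h3 := (abs_le.mp (hb z)).2
      have h4 : z.1 / n ≤ (d * i - (d * (B + 1))) / n := by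
        gcongr; linarith
      have h5 : ((d : ℝ) * i - (d * (B + 1))) / n = i / N - B / N - 1 / N := by
        rw [hn0]; field_simp; ring
      have h6 : ((i : ℝ) + 1 / 2) / N = i / N + 1 / 2 * (1 / N) := by field_simp
      have h7 : (0 : ℝ) < 1 / N := by positivity
      linarith
    refine ⟨hS hv, fun Z hZ hbd hvZ => ?_⟩
    have := LG_row (S := {v : V | v.1 < d * i - ((d * (B + 1) : ℕ) : ℤ)})
      (fun w hw => by simp only [Set.mem_ofPred_eq] at *; omega) _ (hZ.inter hS)
      (hbd.mono Set.inter_subset_left)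
    exact (Set.eq_empty_iff_forall_notMem.mp this v) ⟨hvZ, hv⟩
  · intro hv
    have h1 := BB_lt hv.1 (self_mem_car v)
    have h2 := (abs_le.mp (hb (emb v))).1
    simp only [emb_fst] at h2
    have h3 : (v.1 : ℝ) / n < ((i : ℝ) + 1 / 2) / N + B / N := by linarith
    have h4 : ((i : ℝ) + 1 / 2) / N + B / N = (d * (i + 1 / 2 + B)) / n := by
      rw [hn0]; field_simp
    rw [h4, div_lt_div_iff_of_pos_right (by rw [hn0]; positivity)] at h3
    have h5 : (v.1 : ℝ) < d * i + d * (B + 1) := by nlinarith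
    exact_mod_cast h5

theorem L0_per (hNN : 0 < N) (hU : EH n U) (i k l : ℤ) (v : V) :
    v + (k * n, l * n) ∈ L0 N U (i + k * N) ↔ v ∈ L0 N U i := by
  have : L0 N U (i + k * N) = sh ((k * n, l * n) : V) (L0 N U i) := by
    unfold L0
    rw [← coreL_sh, sh_compl]
    congr 2
    ext w
    rw [mem_sh, ← BB_shift hNN hU i k l, sub_add_cancel]
  rw [this, mem_sh, add_sub_cancel_right]

theorem adj_hN {v w : V} (h : Adj v w) : hN (emb w - emb v) ≤ 1 := by
  rw [hN_le]
  obtain ⟨h1, h2, h3, h4, h5, h6⟩ := h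
  have h1 : (w.1 : ℝ) ≤ v.1 + 1 := by exact_mod_cast h1
  have h2 : (v.1 : ℝ) ≤ w.1 + 1 := by exact_mod_cast h2
  have h3 : (w.2 : ℝ) ≤ v.2 + 1 := by exact_mod_cast h3
  have h4 : (v.2 : ℝ) ≤ w.2 + 1 := by exact_mod_cast h4
  have h5 : (w.1 : ℝ) - w.2 ≤ v.1 - v.2 + 1 := by exact_mod_cast h5
  have h6 : (v.1 : ℝ) - v.2 ≤ w.1 - w.2 + 1 := by exact_mod_cast h6
  simp only [Prod.fst_sub, Prod.snd_sub, emb_fst, emb_snd, abs_le]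
  refine ⟨⟨?_, ?_⟩, ⟨?_, ?_⟩, ?_, ?_⟩ <;> linarith

theorem L0_nest (hNN : 0 < N)
    (hosc : ∀ z z', hN (z - z') < 2 → |(U z).1 - (U z').1| < 1 / (2 * N)) (i : ℤ) (v : V)
    (hv : v ∈ L0 N U i) (w : V) (ha : Adj v w) : w ∈ L0 N U (i + 1) := by
  have hN0 : (0 : ℝ) < N := by exact_mod_cast hNN
  have hw : w ∈ (BB N U (i + 1))ᶜ := by
    rintro ⟨z, hz, h⟩
    set c : E := (1 / 2 : ℝ) • (emb w - emb v) + emb v with hc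
    have h1 : hN (c - emb v) ≤ 1 / 2 := by
      rw [hc, add_sub_cancel_right, hN_smul, abs_of_pos (by norm_num)]
      linarith [adj_hN ha]
    have h2 : hN (emb w - c) ≤ 1 / 2 := by
      have : emb w - c = (1 / 2 : ℝ) • (emb w - emb v) := by
        rw [hc]; module
      rw [this, hN_smul, abs_of_pos (by norm_num)]
      linarith [adj_hN ha]
    have h3 := hN_add_le (z - emb w) (emb w - c)
    rw [sub_add_sub_cancel] at h3
    have h4 : hN (z - emb w) < 1 := hz
    have h5 := (abs_lt.mp (hosc z c (by linarith))).2
    have h6 := BB_lt hv.1 (z := c) (show hN (c - emb v) < 1 by linarith)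
    have e1 : (((i + 1 : ℤ) : ℝ) + 1 / 2) / N = ((i : ℝ) + 1 / 2) / N + 2 * (1 / (2 * N)) := by
      push_cast; field_simp; ring
    have : (0 : ℝ) < 1 / (2 * N) := by positivity
    linarith
  have hs := BB_anti (U := U) hNN (show i ≤ i + 1 by omega)
  refine ⟨hw, fun Z hZ hb hwZ => ?_⟩
  have hvZ := hZ.2 w hwZ v (hs hv.1) ha.symm
  have := LG_coreL _ _ (hZ.inter ((coreL_subset _).trans hs)) (hb.mono Set.inter_subset_left)
  exact (Set.eq_empty_iff_forall_notMem.mp this v) ⟨hvZ, hv⟩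

theorem L0_adapted (hn : 0 < n) (hNN : 0 < N) (hU : EH n U)
    (hosc : ∀ z z', hN (z - z') < 2 → |(U z).1 - (U z').1| < 1 / (2 * N)) :
    Adapted N (L0 N U) U := by
  have hN0 : (0 : ℝ) < N := by exact_mod_cast hNN
  have hp : (0 : ℝ) < 1 / (2 * N) := by positivity
  intro i z
  have e1 : ((i : ℝ) + 1) / N = ((i : ℝ) + 1 / 2) / N + (1 / (2 * N)) := by
    field_simp; ring
  have e2 : ((i : ℝ) + 1 / 2) / N = (i : ℝ) / N + (1 / (2 * N)) := by
    field_simp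
  constructor
  · intro h
    obtain ⟨u, hu⟩ := car_nonempty z
    have := BB_lt (h hu).1 hu
    linarith
  · intro h
    by_contra hc
    push Not at hc
    have key : ∀ z', (U z').1 ≤ (U z).1 → car z' ⊆ (BB N U i)ᶜ := by
      rintro z' hz' u hu ⟨z'', hu', h2⟩
      have := (abs_lt.mp (hosc z' z'' (car_dist hu hu'))).1
      linarith
    obtain ⟨u, hu⟩ := car_nonempty z
    obtain ⟨Z, hZ, hZb, huZ⟩ := exists_of_not_coreL (key z le_rfl hu) (h u hu)
    refine ray_left hn hU hZb (z0 := z) ?_ u hu huZ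
    rintro z' - hz' ⟨a, ha, haZ⟩ w hw
    exact hZ.2 a haZ w (key z' hz' hw) (adj_of_car ha hw)

theorem L0_fam (hn : 0 < n) (hNN : 0 < N) (hd : 0 < d) (hnd : n = N * d) (hU : EH n U)
    (hosc : ∀ z z', hN (z - z') < 2 → |(U z).1 - (U z').1| < 1 / (2 * N)) : Fam n N (L0 N U) := by
  obtain ⟨b, hb⟩ := hU.bdd hn
  obtain ⟨B, hB⟩ := exists_nat_ge (b * N)
  have hT := L0_trap hNN hd hnd (fun z => (hb z).1) hB
  refine ⟨fun i => ⟨LG_coreL _, L0_RG hn hU i, fun v => ?_, ⟨_, fun v => (hT i v).1⟩,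
    ⟨_, fun v => (hT i v).2⟩⟩, fun i => ?_, L0_nest hNN hosc⟩
  · have := L0_per hNN hU i 0 1 v
    have e : v + (0 * (n : ℤ), 1 * (n : ℤ)) = (v.1, v.2 + n) := by ext <;> simp
    rw [e] at this
    simpa using this
  · ext v
    have := L0_per hNN hU i 1 0 (v - ((n : ℤ), 0))
    have e : v - ((n : ℤ), 0) + (1 * (n : ℤ), 0 * (n : ℤ)) = v := by ext <;> simp
    rw [e] at this
    simpa [mem_sh] using this

theorem L0_mv (hn : 0 < n) (hU : EH n U) (hT : Trap d M (L0 N U)) {a : ℝ} {K : ℕ}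
    (ha : ∀ z, |(U z).2 - z.2 / n| ≤ a) (hK : 2 * a * n + 2 ≤ K) {D : ℤ → ℤ} {Bar : Set ℤ}
    (hwin : ∀ y ∈ Bar, ∀ y', y' ≤ y + 2 * K → y ≤ y' + 2 * K → 2 * (M : ℤ) ≤ D y') :
    ∀ i, ∀ v ∈ Lg d (L0 N U) (prof M D M) i, v ∉ L0 N U i → v.2 ∉ Bar := by
  have hn0 : (0 : ℝ) < n := by exact_mod_cast hn
  intro i v hv hvL hvB
  have hS : ∀ w : V, 2 * (M : ℤ) ≤ D w.2 → w ∈ Srow d (prof M D M) i → w ∈ L0 N U i := by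
    intro w hw hwS
    refine (hT i w).1 ?_
    have : w.1 < d * i + prof M D M w.2 := hwS
    unfold prof at this
    omega
  have hrow : ∀ {z z' : E} {u u' : V}, (U z).2 = (U z').2 → u ∈ car z → u' ∈ car z' →
      u.2 ≤ u'.2 + K ∧ u'.2 ≤ u.2 + K := by
    intro z z' u u' h hu hu'
    have h1 := abs_le.mp (ha z)
    have h2 := abs_le.mp (ha z')
    have h3 := abs_lt.mp (mem_car'.mp hu).2.1
    have h4 := abs_lt.mp (mem_car'.mp hu').2.1
    have e1 : z.2 = z.2 / n * n := by field_simp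
    have e2 : z'.2 = z'.2 / n * n := by field_simp
    have h5 : z.2 / n - z'.2 / n ≤ 2 * a := by linarith
    have h6 : z'.2 / n - z.2 / n ≤ 2 * a := by linarith
    have h7 : z.2 - z'.2 ≤ 2 * a * n := by
      have := mul_le_mul_of_nonneg_right h5 hn0.le
      rw [sub_mul] at this; linarith
    have h8 : z'.2 - z.2 ≤ 2 * a * n := by
      have := mul_le_mul_of_nonneg_right h6 hn0.le
      rw [sub_mul] at this; linarith
    have h9 : (u.2 : ℝ) ≤ u'.2 + K := by linarith
    have h10 : (u'.2 : ℝ) ≤ u.2 + K := by linarith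
    exact ⟨by exact_mod_cast h9, by exact_mod_cast h10⟩
  rcases mem_fill.mp hv with (h | h) | ⟨Z, hZ, hZb, hvZ⟩
  · exact hvL h
  · exact hvL (hS v (hwin _ hvB _ (by omega) (by omega)) h)
  have c1 : ∀ w ∈ Z, w ∈ BB N U i → (∀ y', y' ≤ w.2 + K → w.2 ≤ y' + K → 2 * (M : ℤ) ≤ D y') → False := by
    rintro w hw ⟨z0, hz0, h0⟩ hwn
    refine ray_right hn hU hZb (z0 := z0) ?_ w hz0 hw
    rintro z hz2 hz1 ⟨u, hu, huZ⟩ p hp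
    refine hZ.2 u huZ p ?_ (adj_of_car hu hp)
    have hpL : p ∉ L0 N U i := fun hpL => hpL.1 ⟨z, hp, h0.trans hz1⟩
    rintro (h | h)
    · exact hpL h
    · have := hrow hz2 hp hz0
      exact hpL (hS p (hwn _ this.1 this.2) h)
  by_cases hvBB : v ∈ BB N U i
  · exact c1 v hvZ hvBB fun y' h1 h2 => hwin _ hvB _ (by omega) (by omega)
  obtain ⟨W, hW, hWb, hvW⟩ := exists_of_not_coreL hvBB hvL
  refine ray_left hn hU (hWb.mono (Set.inter_subset_right (s := Z))) (z0 := emb v) ?_ v (self_mem_car v) ⟨hvZ, hvW⟩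
  rintro z hz2 - ⟨u, hu, huZ, huW⟩ p hp
  have hr := hrow hz2 hp (self_mem_car v)
  have hadj := adj_of_car hu hp
  have hpL : p ∉ L0 N U i := by
    intro hpL
    exact hpL.2 W hW hWb (hW.2 u huW p hpL.1 hadj)
  have hpZ : p ∈ Z := by
    refine hZ.2 u huZ p ?_ hadj
    rintro (h | h)
    · exact hpL h
    · exact hpL (hS p (hwin _ hvB _ (by omega) (by omega)) h)
  by_cases hpB : p ∈ BB N U i
  · exact (c1 p hpZ hpB fun y' h1 h2 => hwin _ hvB _ (by omega) (by omega)).elim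
  · exact ⟨hpZ, hW.2 u huW p hpB hadj⟩

end

end TorusIso

namespace TorusIso
open Filter Topology unitInterval

/-! ### One horizontal phase, at scale `n` -/

def TS (n : ℕ) (U : C(E, E)) (Bar Bar2 : Set ℤ) (δ : ℝ) : Set C(E, E) :=
  {f | EH n f ∧ (∀ z, ∃ z' z'', (f z).2 = (U z'').2 ∧ Rel Bar z'' z' ∧ Rel Bar2 z' z) ∧
    ∀ z, |(f z).1 - z.1 / n| ≤ δ}

def trn (g : C(E, E)) (c : ℝ) : C(E, E) := ⟨fun z => g z + (c, 0), by fun_prop⟩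

@[simp] theorem trn_apply (g : C(E, E)) (c : ℝ) (z : E) : trn g c z = g z + (c, 0) := rfl

theorem continuous_trn (g : C(E, E)) : Continuous (trn g) := by
  apply ContinuousMap.continuous_of_continuous_uncurry
  change Continuous fun p : ℝ × E => g p.2 + (p.1, 0)
  fun_prop

theorem EH.trn {n : ℕ} {g : C(E, E)} (h : EH n g) (c : ℝ) : EH n (trn g c) := by
  refine ⟨?_, fun z => ?_, fun z => ?_⟩
  · have : ⇑(TorusIso.trn g c) = (Equiv.addRight ((c, 0) : E)) ∘ g := by
      funext z; simp
    rw [this]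
    exact (Equiv.bijective _).comp h.bij
  · rw [trn_apply, h.px, trn_apply]; abel
  · rw [trn_apply, h.py, trn_apply]; abel

theorem phase_core {n N d B : ℕ} (hnd : n = N * d) (hn : 3 ≤ n) (hNN : 1 ≤ N) {U : C(E, E)}
    (hU : EH n U) (hosc : ∀ z z', hN (z - z') < 2 → |(U z).1 - (U z').1| < 1 / (2 * N)) {b : ℝ}
    (hb : ∀ z, |(U z).1 - z.1 / n| ≤ b) (hB : b * N ≤ B) {D : ℤ → ℤ} (hD : Prf n d D) {R : ℕ}
    (hR : ∀ y, D y ≤ R) {Bar : Set ℤ} (hBar : ∀ y ∈ Bar, ∀ l : ℤ, y + l * n ∈ Bar)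
    (hmv : ∀ i, ∀ v ∈ Lg d (L0 N U) (prof (d * (B + 1)) D (d * (B + 1) : ℕ)) i, v ∉ L0 N U i → v.2 ∉ Bar) :
    ∃ g, JoinedIn (TS n U Bar {y | D y = 0} (((B : ℝ) + 3) / N + 3 / n)) U g ∧
      ∀ z, |(g z).1 - z.1 / n| ≤ 1 / n + 2 / N := by
  have hd : 0 < d := by
    rcases Nat.eq_zero_or_pos d with h | h
    · subst h; omega
    · exact h
  have hN0 : (0 : ℝ) < N := by exact_mod_cast hNN
  have hd0 : (0 : ℝ) < d := by exact_mod_cast hd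
  have hn0 : (n : ℝ) = N * d := by rw [hnd]; push_cast; ring
  have hnp : (0 : ℝ) < n := by rw [hn0]; positivity
  have hT : Trap d (d * (B + 1)) (L0 N U) := L0_trap hNN hd hnd hb hB
  have hF := L0_fam (by omega) hNN hd hnd hU hosc
  have hA := L0_adapted (by omega) hNN hU hosc
  have e1 : (((d * (B + 1) : ℕ) : ℝ) + 3) / n + 2 / N = ((B : ℝ) + 3) / N + 3 / n := by
    rw [hn0]; push_cast; field_simp; ring
  obtain ⟨g1, g2, h1, h2, h3⟩ := run_total hnd hn hNN hF hT hD hR hU hA hBar e1.le hmv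
  set c : ℝ := ((B : ℝ) + 1) / N with hc
  have hc0 : 0 ≤ c := by positivity
  have hA' : Adapted N (Srow d (fun _ => ((0 : ℕ) : ℤ))) (trn g2 c) := by
    intro i z
    have key : Srow d (fun _ => ((0 : ℕ) : ℤ)) i = Srow d (fun _ => ((d * (B + 1) : ℕ) : ℤ)) (i - (B + 1)) := by
      ext v
      change v.1 < _ + _ ↔ v.1 < _ + _
      push_cast
      rw [mul_sub, sub_add_cancel, add_zero]
    obtain ⟨k1, k2⟩ := h3 (i - (B + 1)) z
    rw [← key] at k1 k2
    have e2 : (((i - (B + 1) : ℤ) : ℝ) + 1) / N = ((i : ℝ) + 1) / N - c := by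
      rw [hc]; push_cast; field_simp; ring
    have e3 : (((i - (B + 1) : ℤ) : ℝ)) / N = (i : ℝ) / N - c := by
      rw [hc]; push_cast; field_simp
    rw [e2] at k1
    rw [e3] at k2
    simp only [trn_apply, Prod.fst_add]
    exact ⟨fun h => by linarith [k1 h], fun h => by linarith [k2 h]⟩
  have hctrl : ∀ z, |(trn g2 c z).1 - z.1 / n| ≤ 1 / n + 2 / N := by
    intro z
    have := trap_ctrl hd hNN (M := 0) (L := Srow d (fun _ => ((0 : ℕ) : ℤ))) (fun i v => by
      constructor
      · intro h; change v.1 < _ + _; push_cast at *; omega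
      · intro h; have : v.1 < _ + _ := h; push_cast at *; omega) hA' z
    rw [← hnd] at this
    simpa using this
  refine ⟨trn g2 c, ?_, hctrl⟩
  have j1 : JoinedIn (TS n U Bar {y | D y = 0} (((B : ℝ) + 3) / N + 3 / n)) U g1 := by
    refine h1.mono ?_
    rintro f ⟨f1, f2, f3⟩
    refine ⟨f1, fun z => ?_, f3⟩
    obtain ⟨z', hz1, hz2⟩ := f2 z
    exact ⟨z, z', by rw [hz1], hz2, Rel.refl _ _⟩
  have hsub : PS n g1 {y | D y = 0} (((B : ℝ) + 3) / N + 3 / n) ⊆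
      TS n U Bar {y | D y = 0} (((B : ℝ) + 3) / N + 3 / n) := by
    rintro f ⟨f1, f2, f3⟩
    refine ⟨f1, fun z => ?_, f3⟩
    obtain ⟨z', hz1, hz2⟩ := f2 z
    obtain ⟨z'', hz3, hz4⟩ := h1.target_mem.2.1 z'
    exact ⟨z', z'', by rw [hz1, hz3], hz4, hz2⟩
  have j2 := h2.mono hsub
  refine j1.trans (j2.trans ?_)
  have hg2 := hsub h2.target_mem
  refine JoinedIn.ofLine (f := fun t => trn g2 (t * c)) ?_ ?_ ?_ ?_
  · exact ((continuous_trn g2).comp (continuous_id.mul continuous_const)).continuousOn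
  · ext z <;> simp
  · simp
  · rintro _ ⟨t, ⟨ht0, ht1⟩, rfl⟩
    refine ⟨hg2.1.trn _, fun z => ?_, fun z => ?_⟩
    · simpa using hg2.2.1 z
    · have h5 := abs_le.mp (hctrl z)
      simp only [trn_apply, Prod.fst_add] at h5 ⊢
      have e5 : ((B : ℝ) + 3) / N + 3 / n = c + 2 / N + 3 * (1 / n) := by rw [hc]; field_simp; ring
      have h6 : 0 ≤ t * c := mul_nonneg ht0 hc0
      have h7 : t * c ≤ c := mul_le_of_le_one_left hc0 ht1
      have h8 : (0 : ℝ) < 1 / n := by positivity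
      have h9 : (0 : ℝ) < 2 / N := by positivity
      rw [e5, abs_le]
      constructor <;> linarith

theorem rel_dist {q : ℕ} (hq : 0 < q) {c : ℤ} {Bar : Set ℤ} (hBar : ∀ j : ℤ, c + j * q ∈ Bar) {z' z : E}
    (h : Rel Bar z' z) : |z'.2 - z.2| ≤ q := by
  have hq0 : (0 : ℝ) < q := by exact_mod_cast hq
  set j := ⌊(z.2 - c) / q⌋ with hj
  have h1 := Int.floor_le ((z.2 - c) / q)
  have h2 := Int.lt_floor_add_one ((z.2 - c) / q)
  rw [← hj, le_div_iff₀ hq0] at h1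
  rw [← hj, div_lt_iff₀ hq0] at h2
  have k1 := (h _ (hBar j)).1
  have k2 := (h _ (hBar (j + 1))).1
  push_cast at k1 k2
  have k3 : z'.2 < c + ((j : ℝ) + 1) * q := k2.mpr (by linarith)
  have k4 : ¬ z'.2 < c + (j : ℝ) * q := fun hh => by have := k1.mp hh; linarith
  push Not at k4
  rw [abs_le]
  constructor <;> nlinarith

/-- the tent profile -/
def tent (d q : ℕ) (y : ℤ) : ℤ := ((d : ℤ) - 2) * min (y % q) (q - y % q)

theorem tent_lip (q : ℕ) (hq : 2 ≤ q) (y y' : ℤ) (h1 : y ≤ y' + 1) (h2 : y' ≤ y + 1) :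
    min (y % q) (q - y % q) ≤ min (y' % q) (q - y' % q) + 1 := by
  have hq0 : (0 : ℤ) < q := by omega
  have a1 := Int.emod_nonneg y hq0.ne'
  have a2 := Int.emod_lt_of_pos y hq0
  have b1 := Int.emod_nonneg y' hq0.ne'
  have b2 := Int.emod_lt_of_pos y' hq0
  have c1 := Int.emod_add_mul_ediv y q
  have c2 := Int.emod_add_mul_ediv y' q
  set r := y % q
  set r' := y' % q
  set s := y / q
  set s' := y' / q
  have hs : s' = s ∨ s' = s + 1 ∨ s = s' + 1 := by
    rcases lt_trichotomy s s' with h | h | h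
    · right; left
      by_contra hne
      have : s + 2 ≤ s' := by omega
      nlinarith
    · left; exact h.symm
    · right; right
      by_contra hne
      have : s' + 2 ≤ s := by omega
      nlinarith
  rcases hs with h | h | h
  · rw [h] at c2; omega
  · rw [h, mul_add] at c2; omega
  · rw [h, mul_add] at c1; omega

theorem tent_prf {n d q k : ℕ} (hd : 3 ≤ d) (hq : 2 ≤ q) (hn : n = k * q) : Prf n d (tent d q) := by
  have hq0 : (0 : ℤ) < q := by omega
  have hd0 : (0 : ℤ) ≤ (d : ℤ) - 2 := by omega
  refine ⟨fun y => ?_, fun y => ?_, fun y y' h1 h2 => ?_⟩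
  · have a1 := Int.emod_nonneg y hq0.ne'
    have a2 := Int.emod_lt_of_pos y hq0
    exact mul_nonneg hd0 (by omega)
  · unfold tent
    rw [hn]; push_cast
    rw [Int.add_mul_emod_self_right]
  · have := mul_le_mul_of_nonneg_left (tent_lip q hq y y' h1 h2) hd0
    unfold tent
    rw [mul_add] at this
    linarith

theorem tent_le {d q : ℕ} (hq : 2 ≤ q) (y : ℤ) : tent d q y ≤ (d * q : ℕ) := by
  have hq0 : (0 : ℤ) < q := by omega
  have a1 := Int.emod_nonneg y hq0.ne'
  have a2 := Int.emod_lt_of_pos y hq0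
  unfold tent
  push_cast
  have h1 : min (y % q) (q - y % q) ≤ (q : ℤ) := by omega
  have h0 : 0 ≤ min (y % q) (q - y % q) := by omega
  nlinarith

theorem tent_zero {d q : ℕ} (j : ℤ) : (0 : ℤ) + j * q ∈ {y | tent d q y = 0} := by
  simp [tent]

theorem tent_win {d q K m : ℕ} (hm0 : 0 < m) (hd : 4 ≤ d) (hq : 2 ≤ q) (h : 4 * m + 2 * K ≤ q / 2) (y y' : ℤ)
    (hy : y % q = (q / 2 : ℕ)) (h1 : y' ≤ y + 2 * K) (h2 : y ≤ y' + 2 * K) :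
    2 * ((d * m : ℕ) : ℤ) ≤ tent d q y' := by
  have hq0 : (0 : ℤ) < q := by omega
  have c1 := Int.emod_add_mul_ediv y q
  have hmod : y' % q = (q / 2 : ℕ) + (y' - y) := by
    have : y' = ((q / 2 : ℕ) + (y' - y)) + q * (y / q) := by rw [← hy]; linarith
    rw [this, Int.add_mul_emod_self_left]
    rw [Int.emod_eq_of_lt]
    · omega
    · omega
    · omega
  unfold tent
  rw [hmod]
  have h3 : (4 : ℤ) * m ≤ min ((q / 2 : ℕ) + (y' - y)) (q - ((q / 2 : ℕ) + (y' - y))) := by omega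
  push_cast at h3 ⊢
  have hd' : (4 : ℤ) ≤ d := by exact_mod_cast hd
  have hm : (0 : ℤ) ≤ m := by positivity
  calc 2 * ((d : ℤ) * m) ≤ ((d : ℤ) - 2) * (4 * m) := by nlinarith
    _ ≤ _ := mul_le_mul_of_nonneg_left h3 (by omega)

end TorusIso

namespace TorusIso
open Filter Topology unitInterval

/-! ### Horizontal phases at scale one -/

noncomputable def up (n : ℕ) (U : C(E, E)) : C(E, E) := ⟨fun z => U (z.1 / n, z.2 / n), by fun_prop⟩
def dn (n : ℕ) (U : C(E, E)) : C(E, E) := ⟨fun z => U (n * z.1, n * z.2), by fun_prop⟩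

@[simp] theorem up_apply (n : ℕ) (U : C(E, E)) (z : E) : up n U z = U (z.1 / n, z.2 / n) := rfl
@[simp] theorem dn_apply (n : ℕ) (U : C(E, E)) (z : E) : dn n U z = U (n * z.1, n * z.2) := rfl

theorem continuous_dn (n : ℕ) : Continuous (dn n) :=
  ContinuousMap.continuous_precomp (⟨fun z => (n * z.1, n * z.2), by fun_prop⟩ : C(E, E))

theorem dn_up {n : ℕ} (hn : 0 < n) (U : C(E, E)) : dn n (up n U) = U := by
  have hn0 : (n : ℝ) ≠ 0 := by exact_mod_cast hn.ne'
  apply ContinuousMap.ext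
  intro z
  simp [hn0]

theorem EH.up {n : ℕ} (hn : 0 < n) {U : C(E, E)} (h : EH 1 U) : EH n (up n U) := by
  have hn0 : (n : ℝ) ≠ 0 := by exact_mod_cast hn.ne'
  refine ⟨?_, fun z => ?_, fun z => ?_⟩
  · refine h.bij.comp (Function.bijective_iff_has_inverse.mpr ⟨fun z => (n * z.1, n * z.2), ?_, ?_⟩)
    · intro z; ext <;> simp <;> field_simp
    · intro z; ext <;> simp <;> field_simp
  · have := h.px (z.1 / n, z.2 / n)
    rw [up_apply, up_apply, ← this]
    congr 1
    ext <;> simp; field_simp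
  · have := h.py (z.1 / n, z.2 / n)
    rw [up_apply, up_apply, ← this]
    congr 1
    ext <;> simp; field_simp

theorem EH.dn {n : ℕ} (hn : 0 < n) {U : C(E, E)} (h : EH n U) : EH 1 (dn n U) := by
  have hn0 : (n : ℝ) ≠ 0 := by exact_mod_cast hn.ne'
  refine ⟨?_, fun z => ?_, fun z => ?_⟩
  · refine h.bij.comp (Function.bijective_iff_has_inverse.mpr ⟨fun z => (z.1 / n, z.2 / n), ?_, ?_⟩)
    · intro z; ext <;> simp <;> field_simp
    · intro z; ext <;> simp <;> field_simp
  · have := h.px (n * z.1, n * z.2)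
    rw [dn_apply, dn_apply, ← this]
    congr 1
    ext <;> simp; ring
  · have := h.py (n * z.1, n * z.2)
    rw [dn_apply, dn_apply, ← this]
    congr 1
    ext <;> simp; ring

theorem EH.unif {U : C(E, E)} (h : EH 1 U) {ε : ℝ} (hε : 0 < ε) :
    ∃ r > 0, ∀ z z' : E, ‖z - z'‖ < r → ‖U z - U z'‖ < ε := by
  have hc : IsCompact (Set.Icc ((-1, -1) : E) ((2, 2) : E)) := isCompact_Icc
  have hu := hc.uniformContinuousOn_of_continuous U.continuous.continuousOn
  rw [Metric.uniformContinuousOn_iff] at hu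
  obtain ⟨r, hr, hu⟩ := hu ε hε
  refine ⟨min r 1, lt_min hr one_pos, fun z z' hz => ?_⟩
  set k := -⌊z.1⌋
  set l := -⌊z.2⌋
  have e1 := h.int k l z
  have e2 := h.int k l z'
  set p : E := ((k : ℝ) * (1 : ℕ), (l : ℝ) * (1 : ℕ)) with hp
  have e3 : U z - U z' = U (z + p) - U (z' + p) := by rw [e1, e2]; abel
  rw [e3, ← dist_eq_norm]
  have f1 := Int.floor_le z.1
  have f2 := Int.lt_floor_add_one z.1
  have f3 := Int.floor_le z.2
  have f4 := Int.lt_floor_add_one z.2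
  have g1 : |z.1 - z'.1| < 1 := (norm_fst_le (z - z')).trans_lt (hz.trans_le (min_le_right _ _))
  have g2 : |z.2 - z'.2| < 1 := (norm_snd_le (z - z')).trans_lt (hz.trans_le (min_le_right _ _))
  rw [abs_lt] at g1 g2
  refine hu _ ⟨⟨?_, ?_⟩, ⟨?_, ?_⟩⟩ _ ⟨⟨?_, ?_⟩, ⟨?_, ?_⟩⟩ ?_
  any_goals simp only [hp, k, l, Prod.fst_add, Prod.snd_add]; push_cast; linarith
  rw [dist_eq_norm, add_sub_add_right_eq_sub]
  exact hz.trans_le (min_le_left _ _)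

theorem phase_mid {U : C(E, E)} (hU : EH 1 U) {b η : ℝ} (hb : ∀ z, |(U z).1 - z.1| ≤ b) (hη : 0 < η) :
    ∃ N B n0 : ℕ, 1 ≤ N ∧ ∀ d : ℕ, n0 ≤ d → ∀ (D : ℤ → ℤ) (R : ℕ) (Bar : Set ℤ), Prf (N * d) d D →
      (∀ y, D y ≤ R) → (∀ y ∈ Bar, ∀ l : ℤ, y + l * (N * d : ℕ) ∈ Bar) →
      (Trap d (d * (B + 1)) (L0 N (up (N * d) U)) → ∀ i, ∀ v ∈ Lg d (L0 N (up (N * d) U))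
        (prof (d * (B + 1)) D (d * (B + 1) : ℕ)) i, v ∉ L0 N (up (N * d) U) i → v.2 ∉ Bar) →
      ∃ g, JoinedIn {f | EH 1 f ∧ (∀ z, |(f z).1 - z.1| ≤ b + η) ∧ ∀ z, ∃ w w' w'' : E,
        w = (((N * d : ℕ) : ℝ) * z.1, ((N * d : ℕ) : ℝ) * z.2) ∧
        (f z).2 = (U (w''.1 / (N * d : ℕ), w''.2 / (N * d : ℕ))).2 ∧ Rel Bar w'' w' ∧ Rel {y | D y = 0} w' w} U g ∧
        ∀ z, |(g z).1 - z.1| ≤ η := by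
  have hb0 : 0 ≤ b := (abs_nonneg _).trans (hb 0)
  obtain ⟨N, hN7⟩ := exists_nat_ge (7 / η + 1)
  have h7 : 0 < 7 / η := by positivity
  have hN0 : (0 : ℝ) < N := by linarith
  have hNN : 1 ≤ N := by exact_mod_cast (show (1 : ℝ) ≤ N by linarith)
  have hNη : 7 / (N : ℝ) ≤ η := by
    rw [div_le_iff₀ hN0]
    have : 7 / η * η ≤ N * η := by gcongr; linarith
    rw [div_mul_cancel₀ _ hη.ne'] at this; linarith
  obtain ⟨r, hr, hur⟩ := hU.unif (ε := 1 / (2 * N)) (by positivity)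
  obtain ⟨n1, hn1⟩ := exists_nat_gt (2 / r)
  refine ⟨N, ⌈b * N⌉₊, max 3 n1, hNN, fun d hd D R Bar hD hR hBar hmv => ?_⟩
  set B := ⌈b * N⌉₊
  have hB : b * N ≤ B := Nat.le_ceil _
  have hB' : (B : ℝ) < b * N + 1 := Nat.ceil_lt_add_one (by positivity)
  have hd3 : 3 ≤ d := (le_max_left _ _).trans hd
  have hdn : n1 ≤ d := (le_max_right _ _).trans hd
  set n := N * d with hn
  have hNn : N ≤ n := by rw [hn]; nlinarith
  have hdn' : d ≤ n := by rw [hn]; nlinarith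
  have hn3 : 3 ≤ n := by omega
  have hn0 : (0 : ℝ) < n := by exact_mod_cast (show 0 < n by omega)
  have hr2 : 2 / (n : ℝ) < r := by
    rw [div_lt_iff₀ hr] at hn1
    rw [div_lt_iff₀ hn0]
    have : (n1 : ℝ) ≤ n := by exact_mod_cast hdn.trans hdn'
    nlinarith
  have hosc : ∀ z z', hN (z - z') < 2 → |(up n U z).1 - (up n U z').1| < 1 / (2 * N) := by
    intro z z' h
    refine (norm_fst_le (up n U z - up n U z')).trans_lt (hur _ _ ?_)
    have h1 : ‖z - z'‖ < 2 := (norm_le_hN _).trans_lt h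
    have h2 : ((z.1 / n, z.2 / n) : E) - (z'.1 / n, z'.2 / n) = (1 / n : ℝ) • (z - z') := by
      ext <;> simp <;> ring
    rw [h2, norm_smul, Real.norm_of_nonneg (by positivity)]
    refine lt_trans ?_ hr2
    rw [div_mul_eq_mul_div, one_mul]
    gcongr
  have hbn : ∀ z, |(up n U z).1 - z.1 / n| ≤ b := fun z => hb (z.1 / n, z.2 / n)
  have hT := L0_trap hNN (by omega) hn hbn hB
  obtain ⟨g, hg1, hg2⟩ := phase_core hn hn3 hNN (hU.up (by omega)) hosc hbn hB hD hR hBar (hmv hT)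
  have hinv : 1 / (n : ℝ) ≤ 1 / N := by
    have : (N : ℝ) ≤ n := by exact_mod_cast hNn
    gcongr
  refine ⟨dn n g, ?_, fun z => ?_⟩
  · have := hg1.map (continuous_dn n)
    rw [dn_up (by omega)] at this
    refine this.mono ?_
    rintro _ ⟨f, ⟨f1, f2, f3⟩, rfl⟩
    refine ⟨f1.dn (by omega), fun z => ?_, fun z => ?_⟩
    · have h3 := f3 (n * z.1, n * z.2)
      simp only [mul_div_cancel_left₀ _ hn0.ne'] at h3
      refine h3.trans ?_
      have e1 : ((B : ℝ) + 3) / N ≤ b + 4 / N := by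
        rw [div_le_iff₀ hN0, add_mul, div_mul_cancel₀ _ hN0.ne']; linarith
      have e2 : 7 / (N : ℝ) = 4 / N + 3 * (1 / N) := by ring
      have e3 : 3 / (n : ℝ) = 3 * (1 / n) := by ring
      linarith
    · obtain ⟨w', w'', h1, h2, h3⟩ := f2 (n * z.1, n * z.2)
      exact ⟨_, w', w'', rfl, h1, h2, h3⟩
  · have h3 := hg2 (n * z.1, n * z.2)
    simp only [mul_div_cancel_left₀ _ hn0.ne'] at h3
    refine h3.trans ?_
    have e2 : 7 / (N : ℝ) = 7 * (1 / N) := by ring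
    have e3 : 2 / (N : ℝ) = 2 * (1 / N) := by ring
    have : (0 : ℝ) < 1 / N := by positivity
    linarith

theorem phase_A {U : C(E, E)} (hU : EH 1 U) {b η : ℝ} (hb : ∀ z, |(U z).1 - z.1| ≤ b) (hη : 0 < η) :
    ∃ g, JoinedIn {f | EH 1 f} U g ∧ ∀ z, |(g z).1 - z.1| ≤ η := by
  obtain ⟨N, B, n0, hNN, h⟩ := phase_mid hU hb hη
  obtain ⟨g, h1, h2⟩ := h (max n0 2) (le_max_left _ _) (fun _ => 0) 0 ∅
    ⟨fun _ => le_rfl, fun _ => rfl, fun y y' _ _ => by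
      have : 2 ≤ max n0 2 := le_max_right _ _
      have : (2 : ℤ) ≤ (max n0 2 : ℕ) := by exact_mod_cast this
      linarith⟩
    (fun _ => by simp) (fun y hy => hy.elim) (fun _ _ _ _ _ hh => hh)
  exact ⟨g, h1.mono fun f hf => hf.1, h2⟩

theorem phase_B {U : C(E, E)} (hU : EH 1 U) {a b η : ℝ} (hb : ∀ z, |(U z).1 - z.1| ≤ b) (hη : 0 < η)
    (ha0 : 0 < a) (ha1 : a < 1 / 100) (ha : ∀ z, |(U z).2 - z.2| ≤ a) :
    ∃ g, JoinedIn {f | EH 1 f ∧ (∀ z, |(f z).1 - z.1| ≤ b + η) ∧ ∀ z, |(f z).2 - z.2| ≤ 100 * a} U g ∧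
      ∀ z, |(g z).1 - z.1| ≤ η := by
  obtain ⟨N, B, n0, hNN, h⟩ := phase_mid hU hb hη
  set k := ⌊1 / (10 * a)⌋₊ with hk
  have hk1 : (k : ℝ) ≤ 1 / (10 * a) := Nat.floor_le (by positivity)
  have hk2 : 1 / (10 * a) < k + 1 := Nat.lt_floor_add_one _
  rw [le_div_iff₀ (by positivity)] at hk1
  rw [div_lt_iff₀ (by positivity)] at hk2
  have hk3 : 2 ≤ 99 * a * k := by nlinarith
  have hkpos : 0 < k := by
    rcases Nat.eq_zero_or_pos k with h0 | h0
    · rw [h0] at hk3; norm_num at hk3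
    · exact h0
  have hk0 : (0 : ℝ) < k := by exact_mod_cast hkpos
  set e := n0 + 40 * B + 110 with he
  set q := N * e with hq
  have heq : e ≤ q := by rw [hq]; nlinarith
  have hq2 : 2 ≤ q := by omega
  set d := k * e with hd
  have hed : e ≤ d := by rw [hd]; nlinarith
  have hd4 : 4 ≤ d := by omega
  have hn : N * d = k * q := by rw [hd, hq]; ring
  have hnR : ((N * d : ℕ) : ℝ) = k * q := by rw [hn]; push_cast; ring
  have hq0 : (0 : ℝ) < q := by exact_mod_cast (show 0 < q by omega)
  have hn0 : (0 : ℝ) < (N * d : ℕ) := by rw [hnR]; positivity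
  set K := ⌈2 * a * (N * d : ℕ)⌉₊ + 2 with hK
  have hK1 : 2 * a * (N * d : ℕ) + 2 ≤ K := by
    rw [hK]; push_cast
    have := Nat.le_ceil (2 * a * (N * d : ℕ))
    push_cast at this
    linarith
  have hK2 : (K : ℝ) ≤ 2 * a * (N * d : ℕ) + 3 := by
    have := Nat.ceil_lt_add_one (show 0 ≤ 2 * a * (N * d : ℕ) by positivity)
    rw [hK]; push_cast at this ⊢
    linarith
  have hwin : 4 * (B + 1) + 2 * K ≤ q / 2 := by
    rw [Nat.le_div_iff_mul_le (by norm_num)]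
    have h1 : (e : ℝ) ≤ q := by exact_mod_cast heq
    have h2 : (40 * B + 110 : ℝ) ≤ e := by
      have : 40 * B + 110 ≤ e := by omega
      exact_mod_cast this
    have h3 : 2 * a * (N * d : ℕ) ≤ q / 5 := by
      rw [hnR]
      have : (k * (10 * a)) * q ≤ 1 * q := by gcongr
      linarith
    have : ((4 * (B + 1) + 2 * K) * 2 : ℝ) ≤ q := by linarith
    exact_mod_cast this
  obtain ⟨g, h1, h2⟩ := h d (by omega) (tent d q) (d * q) {y | y % q = (q / 2 : ℕ)}
    (tent_prf (by omega) hq2 hn) (tent_le hq2) (by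
      intro y hy l
      rw [Set.mem_ofPred_eq] at hy ⊢
      rw [hn]; push_cast
      rw [← mul_assoc, Int.add_mul_emod_self_right]
      exact_mod_cast hy)
    (fun hT => L0_mv (by exact_mod_cast hn0) (hU.up (by exact_mod_cast hn0)) hT (a := a) (K := K)
      (fun z => ha (z.1 / (N * d : ℕ), z.2 / (N * d : ℕ))) hK1
      (fun y hy y' h1 h2 => tent_win (by omega) hd4 hq2 hwin y y' hy h1 h2))
  refine ⟨g, h1.mono ?_, h2⟩
  rintro f ⟨f1, f2, f3⟩
  refine ⟨f1, f2, fun z => ?_⟩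
  obtain ⟨w, w', w'', hw, h4, h5, h6⟩ := f3 z
  have d1 := rel_dist (q := q) (by omega) (c := (q / 2 : ℕ)) (fun j => by
    rw [Set.mem_ofPred_eq, Int.add_mul_emod_self_right]
    apply Int.emod_eq_of_lt <;> omega) h5
  have d2 := rel_dist (q := q) (by omega) tent_zero h6
  have d3 := ha (w''.1 / (N * d : ℕ), w''.2 / (N * d : ℕ))
  rw [← h4] at d3
  simp only at d3
  have hz : z.2 = w.2 / (N * d : ℕ) := by rw [hw]; simp only; field_simp
  have d4 : |w''.2 / (N * d : ℕ) - z.2| ≤ 99 * a := by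
    rw [hz, ← sub_div, abs_div, abs_of_pos hn0, div_le_iff₀ hn0, hnR]
    have : |w''.2 - w.2| ≤ 2 * q := by
      have := abs_sub_le w''.2 w'.2 w.2
      linarith
    nlinarith
  have := abs_sub_le (f z).2 (w''.2 / (N * d : ℕ)) z.2
  linarith

end TorusIso

namespace TorusIso
open Filter Topology unitInterval

/-! ### Alternating phases and infinite concatenation -/

def swp : C(E, E) := ⟨Prod.swap, continuous_swap⟩

def sw (f : C(E, E)) : C(E, E) := swp.comp (f.comp swp)

@[simp] theorem sw_apply (f : C(E, E)) (z : E) : sw f z = (f z.swap).swap := rfl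

theorem sw_sw (f : C(E, E)) : sw (sw f) = f := by
  apply ContinuousMap.ext; intro z; simp

theorem continuous_sw : Continuous sw :=
  (ContinuousMap.continuous_postcomp swp).comp (ContinuousMap.continuous_precomp swp)

theorem EH.sw {f : C(E, E)} (h : EH 1 f) : EH 1 (sw f) := by
  refine ⟨?_, fun z => ?_, fun z => ?_⟩
  · have : ⇑(TorusIso.sw f) = Prod.swap ∘ f ∘ Prod.swap := rfl
    rw [this]
    exact Prod.swap_bijective.comp (h.bij.comp Prod.swap_bijective)
  · have := h.py z.swap
    simp only [sw_apply]
    have e : (z + (((1 : ℕ) : ℝ), 0)).swap = z.swap + (0, ((1 : ℕ) : ℝ)) := by ext <;> simp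
    rw [e, this]; ext <;> simp
  · have := h.px z.swap
    simp only [sw_apply]
    have e : (z + (0, ((1 : ℕ) : ℝ))).swap = z.swap + (((1 : ℕ) : ℝ), 0) := by ext <;> simp
    rw [e, this]; ext <;> simp

theorem phase_B' {U : C(E, E)} (hU : EH 1 U) {a b η : ℝ} (hb : ∀ z, |(U z).2 - z.2| ≤ b) (hη : 0 < η)
    (ha0 : 0 < a) (ha1 : a < 1 / 100) (ha : ∀ z, |(U z).1 - z.1| ≤ a) :
    ∃ g, JoinedIn {f | EH 1 f ∧ (∀ z, |(f z).2 - z.2| ≤ b + η) ∧ ∀ z, |(f z).1 - z.1| ≤ 100 * a} U g ∧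
      ∀ z, |(g z).2 - z.2| ≤ η := by
  obtain ⟨g, h1, h2⟩ := phase_B hU.sw (fun z => hb z.swap) hη ha0 ha1 (fun z => ha z.swap)
  refine ⟨sw g, ?_, fun z => h2 z.swap⟩
  have := h1.map continuous_sw
  rw [sw_sw] at this
  refine this.mono ?_
  rintro _ ⟨f, ⟨f1, f2, f3⟩, rfl⟩
  exact ⟨f1.sw, fun z => f2 z.swap, fun z => f3 z.swap⟩

def St (ε : ℝ) : Set C(E, E) := {f | EH 1 f ∧ ∀ z, |(f z).1 - z.1| ≤ ε ∧ |(f z).2 - z.2| ≤ ε}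

theorem St_mono {ε ε' : ℝ} (h : ε ≤ ε') : St ε ⊆ St ε' := fun _ hf =>
  ⟨hf.1, fun z => ⟨(hf.2 z).1.trans h, (hf.2 z).2.trans h⟩⟩

theorem start {U : C(E, E)} (hU : EH 1 U) {ε : ℝ} (h0 : 0 < ε) (h1 : ε < 1) :
    ∃ g ∈ St ε, JoinedIn {f | EH 1 f} U g := by
  obtain ⟨b, hb⟩ := hU.bdd one_pos
  simp only [Nat.cast_one, div_one] at hb
  obtain ⟨g1, j1, x1⟩ := phase_A hU (η := ε / 1000) (fun z => (hb z).1) (by positivity)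
  have hg1 : EH 1 g1 := j1.target_mem
  obtain ⟨c, hc⟩ := hg1.bdd one_pos
  simp only [Nat.cast_one, div_one] at hc
  obtain ⟨g2, j2, y2⟩ := phase_B' hg1 (fun z => (hc z).2) h0 (by positivity) (by linarith) x1
  refine ⟨g2, ⟨j2.target_mem.1, fun z => ⟨(j2.target_mem.2.2 z).trans (by linarith), y2 z⟩⟩,
    j1.trans (j2.mono fun f hf => hf.1)⟩

theorem step {U : C(E, E)} {ε ε' : ℝ} (hU : U ∈ St ε) (h0 : 0 < ε) (h1 : ε < 1 / 100) (h0' : 0 < ε')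
    (h1' : ε' ≤ ε) : ∃ g ∈ St ε', JoinedIn (St (101 * ε)) U g := by
  obtain ⟨g1, j1, x1⟩ := phase_B hU.1 (η := ε' / 1000) (fun z => (hU.2 z).1) (by positivity) h0 h1
    (fun z => (hU.2 z).2)
  have hg1 := j1.target_mem
  obtain ⟨g2, j2, y2⟩ := phase_B' hg1.1 hg1.2.2 h0' (by positivity) (by linarith) x1
  refine ⟨g2, ⟨j2.target_mem.1, fun z => ⟨(j2.target_mem.2.2 z).trans (by linarith), y2 z⟩⟩,
    (j1.mono ?_).trans (j2.mono ?_)⟩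
  · rintro f ⟨f1, f2, f3⟩
    exact ⟨f1, fun z => ⟨(f2 z).trans (by linarith), (f3 z).trans (by linarith)⟩⟩
  · rintro f ⟨f1, f2, f3⟩
    exact ⟨f1, fun z => ⟨(f3 z).trans (by linarith), (f2 z).trans (by linarith)⟩⟩

/-- finite concatenations -/
noncomputable def cat (g : ℕ → C(E, E)) (γ : ∀ k, Path (g k) (g (k + 1))) : ℕ → ℝ → C(E, E)
  | 0, _ => g 0
  | k + 1, s => cat g γ k s - g k + (γ k).extend (s - k)

section
variable (g : ℕ → C(E, E)) (γ : ∀ k, Path (g k) (g (k + 1)))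

theorem cat_continuous (k : ℕ) : Continuous (cat g γ k) := by
  induction k with
  | zero => exact continuous_const
  | succ k ih =>
    have : Continuous fun s => cat g γ k s - g k + (γ k).extend (s - k) :=
      (ih.sub continuous_const).add ((γ k).continuous_extend.comp (continuous_id.sub continuous_const))
    exact this

theorem cat_ge (k : ℕ) {s : ℝ} (hs : (k : ℝ) ≤ s) : cat g γ k s = g k := by
  induction k with
  | zero => rfl
  | succ k ih =>
    push_cast at hs
    simp only [cat]
    rw [ih (by linarith), (γ k).extend_of_one_le (by linarith)]; abel

theorem cat_mid (k : ℕ) {s : ℝ} (hs : (k : ℝ) ≤ s) : cat g γ (k + 1) s = (γ k).extend (s - k) := by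
  simp only [cat]
  rw [cat_ge g γ k hs]; abel

theorem cat_stable (k : ℕ) {s : ℝ} (hs : s ≤ k) (j : ℕ) : cat g γ (k + j) s = cat g γ k s := by
  induction j with
  | zero => rfl
  | succ j ih =>
    rw [← add_assoc]
    simp only [cat]
    rw [ih, (γ (k + j)).extend_of_le_zero (by push_cast; linarith [(Nat.cast_nonneg j : (0 : ℝ) ≤ j)])]
    abel

noncomputable def lim (s : ℝ) : C(E, E) := cat g γ (⌊s⌋₊ + 1) s

theorem lim_eq (k : ℕ) {s : ℝ} (hs : s ≤ k) : lim g γ s = cat g γ k s := by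
  unfold lim
  have h1 : s ≤ ((⌊s⌋₊ + 1 : ℕ) : ℝ) := by push_cast; exact (Nat.lt_floor_add_one s).le
  rcases le_total k (⌊s⌋₊ + 1) with h | h
  · obtain ⟨j, hj⟩ := Nat.exists_eq_add_of_le h
    rw [hj, cat_stable g γ k hs]
  · obtain ⟨j, hj⟩ := Nat.exists_eq_add_of_le h
    rw [hj, cat_stable g γ _ h1]

theorem lim_continuous : Continuous (lim g γ) := by
  rw [continuous_iff_continuousAt]
  intro s
  obtain ⟨k, hk⟩ := exists_nat_gt s
  refine (cat_continuous g γ k).continuousAt.congr ?_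
  filter_upwards [Iio_mem_nhds hk] with t ht
  exact (lim_eq g γ k (le_of_lt ht)).symm

theorem lim_mem {s : ℝ} (hs : 0 ≤ s) : ∃ t : I, lim g γ s = γ ⌊s⌋₊ t := by
  unfold lim
  have h1 := Nat.floor_le hs
  have h2 := Nat.lt_floor_add_one s
  rw [cat_mid g γ _ h1]
  exact ⟨⟨s - ⌊s⌋₊, by linarith, by linarith⟩, (γ ⌊s⌋₊).extend_apply ⟨by linarith, by linarith⟩⟩

end

theorem join_id {U : C(E, E)} (hU : EH 1 U) : JoinedIn {f | EH 1 f} U (ContinuousMap.id E) := by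
  have hid : EH 1 (ContinuousMap.id E) :=
    ⟨Function.bijective_id, fun z => by simp, fun z => by simp⟩
  let ε : ℕ → ℝ := fun k => (1 / 200) * (1 / 2) ^ k
  have hε0 : ∀ k, 0 < ε k := fun k => by positivity
  have hεs : ∀ k, ε (k + 1) ≤ ε k := fun k => by
    have : ε (k + 1) = ε k / 2 := by simp only [ε]; ring
    rw [this]; linarith [hε0 k]
  have hanti : Antitone ε := antitone_nat_of_succ_le hεs
  have hε1 : ∀ k, ε k < 1 / 100 := fun k => (hanti (Nat.zero_le k)).trans_lt (by simp only [ε]; norm_num)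
  obtain ⟨g0, hg0, j0⟩ := start hU (hε0 0) ((hε1 0).trans (by norm_num))
  choose nx hnx1 hnx2 using fun (k : ℕ) (f : St (ε k)) =>
    step f.2 (hε0 k) (hε1 k) (hε0 (k + 1)) (hεs k)
  let G : ∀ k, St (ε k) := fun k => Nat.rec ⟨g0, hg0⟩ (fun k f => ⟨nx k f, hnx1 k f⟩) k
  let g : ℕ → C(E, E) := fun k => (G k).1
  have hj : ∀ k, JoinedIn (St (101 * ε k)) (g k) (g (k + 1)) := fun k => hnx2 k (G k)
  let γ : ∀ k, Path (g k) (g (k + 1)) := fun k => (hj k).somePath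
  have hγ : ∀ k t, γ k t ∈ St (101 * ε k) := fun k t => (hj k).somePath_mem t
  refine j0.trans ?_
  let P : ℝ → C(E, E) := fun t => if t < 1 then lim g γ (t / (1 - t)) else ContinuousMap.id E
  refine JoinedIn.ofLine (f := P) ?_ ?_ ?_ ?_
  · rintro t ⟨ht0, ht1⟩
    rcases lt_or_eq_of_le ht1 with h | h
    · apply ContinuousAt.continuousWithinAt
      have h1 : ContinuousAt (fun t : ℝ => lim g γ (t / (1 - t))) t := by
        refine (lim_continuous g γ).continuousAt.comp (f := fun t : ℝ => t / (1 - t)) ?_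
        exact continuousAt_id.div (continuousAt_const.sub continuousAt_id) (by simp; linarith)
      refine h1.congr ?_
      filter_upwards [Iio_mem_nhds h] with s hs
      exact (if_pos hs).symm
    · subst h
      change Tendsto P _ (𝓝 (P 1))
      have e : P 1 = ContinuousMap.id E := if_neg (lt_irrefl _)
      rw [e, ContinuousMap.tendsto_iff_forall_isCompact_tendstoUniformlyOn]
      intro K _
      rw [Metric.tendstoUniformlyOn_iff]
      intro r hr
      have hlim : Tendsto ε atTop (𝓝 0) := by
        have := (tendsto_pow_atTop_nhds_zero_of_lt_one (r := (1 / 2 : ℝ)) (by norm_num)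
          (by norm_num)).const_mul (1 / 200)
        rw [mul_zero] at this
        exact this
      obtain ⟨k, hk⟩ := (hlim.eventually (gt_mem_nhds (show (0 : ℝ) < r / 101 by positivity))).exists
      have hkk : ((k : ℝ) / (k + 1)) < 1 := by rw [div_lt_one (by positivity)]; linarith
      filter_upwards [mem_nhdsWithin_of_mem_nhds (Ioi_mem_nhds hkk), self_mem_nhdsWithin] with t ht htI z _
      by_cases ht1 : t < 1
      · have hs : (k : ℝ) ≤ t / (1 - t) := by
          rw [Set.mem_Ioi, div_lt_iff₀ (by positivity)] at ht
          rw [le_div_iff₀ (by linarith)]; linarith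
        have hP : P t = lim g γ (t / (1 - t)) := if_pos ht1
        obtain ⟨s, hs'⟩ := lim_mem g γ (s := t / (1 - t)) (le_trans (Nat.cast_nonneg k) hs)
        have hm := hγ ⌊t / (1 - t)⌋₊ s
        rw [← hs', ← hP] at hm
        have h2 : 101 * ε ⌊t / (1 - t)⌋₊ < r := by
          have := hanti (Nat.le_floor hs)
          linarith
        obtain ⟨m1, m2⟩ := hm.2 z
        rw [Prod.dist_eq, max_lt_iff, Real.dist_eq, Real.dist_eq, abs_sub_comm, abs_sub_comm _ ((P t) z).2]
        exact ⟨m1.trans_lt h2, m2.trans_lt h2⟩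
      · have hP : P t = ContinuousMap.id E := if_neg ht1
        rw [hP, dist_self]; exact hr
  · have : P 0 = lim g γ (0 / (1 - 0)) := if_pos (by norm_num)
    rw [this, zero_div, lim_eq g γ 0 (by simp)]
    rfl
  · exact if_neg (lt_irrefl _)
  · rintro _ ⟨t, ⟨ht0, ht1⟩, rfl⟩
    by_cases h : t < 1
    · have hP : P t = lim g γ (t / (1 - t)) := if_pos h
      obtain ⟨s, hs'⟩ := lim_mem g γ (s := t / (1 - t)) (div_nonneg ht0 (by linarith))
      have hm := hγ ⌊t / (1 - t)⌋₊ s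
      rw [← hs', ← hP] at hm
      exact hm.1
    · have hP : P t = ContinuousMap.id E := if_neg h
      rw [hP]; exact hid

end TorusIso

namespace TorusIso
open Filter Topology unitInterval

/-! ### Lifting to the universal cover and descending to the torus -/

abbrev Tor := AddCircle (1 : ℝ) × AddCircle (1 : ℝ)

def prj (z : E) : Tor := ((z.1 : AddCircle (1 : ℝ)), (z.2 : AddCircle (1 : ℝ)))

theorem prj_open : IsOpenQuotientMap prj :=
  (QuotientAddGroup.isOpenQuotientMap_mk (G := ℝ) (N := AddSubgroup.zmultiples (1 : ℝ))).prodMap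
    (QuotientAddGroup.isOpenQuotientMap_mk (G := ℝ) (N := AddSubgroup.zmultiples (1 : ℝ)))

theorem prj_cont : Continuous prj := prj_open.continuous

theorem prj_add (z e : E) : prj (z + e) = prj z + prj e := by
  simp [prj]

theorem prj_zero_iff (e : E) : prj e = 0 ↔ ∃ k l : ℤ, e = ((k : ℝ), (l : ℝ)) := by
  constructor
  · intro h
    have h1 : ((e.1 : ℝ) : AddCircle (1 : ℝ)) = 0 := congrArg Prod.fst h
    have h2 : ((e.2 : ℝ) : AddCircle (1 : ℝ)) = 0 := congrArg Prod.snd h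
    obtain ⟨k, hk⟩ := (AddCircle.coe_eq_zero_iff (1 : ℝ)).1 h1
    obtain ⟨l, hl⟩ := (AddCircle.coe_eq_zero_iff (1 : ℝ)).1 h2
    exact ⟨k, l, by ext <;> simp [← hk, ← hl]⟩
  · rintro ⟨k, l, rfl⟩
    have h1 : ((k : ℝ) : AddCircle (1 : ℝ)) = 0 :=
      (AddCircle.coe_eq_zero_iff (1 : ℝ)).2 ⟨k, by simp⟩
    have h2 : ((l : ℝ) : AddCircle (1 : ℝ)) = 0 :=
      (AddCircle.coe_eq_zero_iff (1 : ℝ)).2 ⟨l, by simp⟩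
    exact Prod.ext h1 h2

theorem prj_eq_iff (z w : E) : prj z = prj w ↔ ∃ k l : ℤ, z = w + ((k : ℝ), (l : ℝ)) := by
  have : prj z = prj w ↔ prj (z - w) = 0 := by
    have h := prj_add w (z - w)
    rw [add_sub_cancel] at h
    rw [h]; simp
  rw [this, prj_zero_iff]
  simp only [sub_eq_iff_eq_add']

theorem lift_uniq {X : Type*} [TopologicalSpace X] [PreconnectedSpace X] {f g : X → ℝ}
    (hf : Continuous f) (hg : Continuous g)
    (h : ∀ x, (f x : AddCircle (1 : ℝ)) = (g x : AddCircle (1 : ℝ))) (a : X) (ha : f a = g a) :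
    f = g :=
  (AddCircle.isCoveringMap_coe (1 : ℝ)).eq_of_comp_eq hf hg (funext h) a ha

theorem lift_one (G : I × Tor → AddCircle (1 : ℝ)) (hG : Continuous G) (f : C(E, ℝ))
    (hf : ∀ z e, f (z + e) = f z + f e) (h0 : ∀ z, G (0, prj z) = (f z : AddCircle (1 : ℝ)))
    (he : ∀ e, prj e = 0 → (f e : AddCircle (1 : ℝ)) = 0) :
    ∃ u : C(E, ℝ), (∀ z, (u z : AddCircle (1 : ℝ)) = G (1, prj z)) ∧
      ∀ e, prj e = 0 → ∀ z, u (z + e) = u z + f e := by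
  have hp := prj_cont
  let Q : C(I × E, AddCircle (1 : ℝ)) := ⟨fun q => G (q.1, prj q.2), by fun_prop⟩
  have cov := AddCircle.isCoveringMap_coe (1 : ℝ)
  have Q0 : ∀ a, Q (0, a) = (f a : AddCircle (1 : ℝ)) := h0
  let K := cov.liftHomotopy Q f Q0
  have Kl : ∀ t z, (K (t, z) : AddCircle (1 : ℝ)) = G (t, prj z) := fun t z =>
    congrFun (cov.liftHomotopy_lifts Q f Q0) (t, z)
  have Kz : ∀ z, K (0, z) = f z := cov.liftHomotopy_zero Q f Q0
  refine ⟨⟨fun z => K (1, z), by fun_prop⟩, fun z => Kl 1 z, fun e hee z => ?_⟩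
  have key : (fun t : I => K (t, z + e)) = fun t : I => K (t, z) + f e := by
    refine lift_uniq (by fun_prop) (by fun_prop) (fun t => ?_) 0 ?_
    · rw [AddCircle.coe_add]
      rw [Kl, Kl, he e hee, prj_add, hee, add_zero, add_zero]
    · rw [Kz, Kz, hf]
  exact congrFun key 1

theorem lift_map (G : I × Tor → Tor) (hG : Continuous G) (h0 : ∀ p, G (0, p) = p) :
    ∃ U : C(E, E), (∀ z, prj (U z) = G (1, prj z)) ∧
      ∀ e, prj e = 0 → ∀ z, U (z + e) = U z + e := by
  obtain ⟨u, hu, hu'⟩ := lift_one (fun q => (G q).1) (by fun_prop) ⟨Prod.fst, continuous_fst⟩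
    (fun _ _ => rfl) (fun z => by rw [h0]; rfl) (fun e h => congrArg Prod.fst h)
  obtain ⟨v, hv, hv'⟩ := lift_one (fun q => (G q).2) (by fun_prop) ⟨Prod.snd, continuous_snd⟩
    (fun _ _ => rfl) (fun z => by rw [h0]; rfl) (fun e h => congrArg Prod.snd h)
  exact ⟨⟨fun z => (u z, v z), by fun_prop⟩, fun z => Prod.ext (hu z) (hv z),
    fun e h z => Prod.ext (hu' e h z) (hv' e h z)⟩

theorem lift_id (V : C(E, E)) (hV : ∀ z, prj (V z) = prj z) : ∃ c : E, ∀ z, V z = z + c := by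
  have hz : prj (V 0) = 0 := by rw [hV]; exact (prj_zero_iff 0).2 ⟨0, 0, by simp; rfl⟩
  refine ⟨V 0, fun z => ?_⟩
  have a1 : (fun z => (V z).1) = fun z : E => z.1 + (V 0).1 := by
    refine lift_uniq (by fun_prop) (by fun_prop) (fun w => ?_) 0 (by simp)
    have h1 : (((V 0).1 : ℝ) : AddCircle (1 : ℝ)) = 0 := congrArg Prod.fst hz
    rw [AddCircle.coe_add]
    rw [h1, add_zero]
    exact congrArg Prod.fst (hV w)
  have a2 : (fun z => (V z).2) = fun z : E => z.2 + (V 0).2 := by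
    refine lift_uniq (by fun_prop) (by fun_prop) (fun w => ?_) 0 (by simp)
    have h1 : (((V 0).2 : ℝ) : AddCircle (1 : ℝ)) = 0 := congrArg Prod.snd hz
    rw [AddCircle.coe_add]
    rw [h1, add_zero]
    exact congrArg Prod.snd (hV w)
  exact Prod.ext (congrFun a1 z) (congrFun a2 z)

theorem exists_EH_lift (h : Tor ≃ₜ Tor) (H : I × Tor → Tor) (Hc : Continuous H)
    (H0 : ∀ p, H (0, p) = h p) (H1 : ∀ p, H (1, p) = p) :
    ∃ U : C(E, E), EH 1 U ∧ ∀ z, prj (U z) = h (prj z) := by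
  obtain ⟨U, hU, hUe⟩ := lift_map (fun q => H (σ q.1, q.2)) (by fun_prop) (by simpa using H1)
  obtain ⟨W, hW, -⟩ := lift_map (fun q => h.symm (H (q.1, q.2))) (by fun_prop) (by simp [H0])
  simp only [symm_one, H0] at hU
  simp only [H1] at hW
  obtain ⟨c, hc⟩ := lift_id (W.comp U) (fun z => by simp [hW, hU])
  obtain ⟨d, hd⟩ := lift_id (U.comp W) (fun z => by simp [hW, hU])
  refine ⟨U, ⟨⟨fun a b hab => ?_, fun b => ⟨W (b - d), ?_⟩⟩, fun z => ?_, fun z => ?_⟩, hU⟩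
  · have e1 := hc a
    have e2 := hc b
    simp only [ContinuousMap.comp_apply] at e1 e2
    rw [hab, e2] at e1
    exact (add_right_cancel e1).symm
  · have := hd (b - d)
    simpa using this
  · have := hUe (1, 0) ((prj_zero_iff _).2 ⟨1, 0, by simp⟩) z
    simpa using this
  · have := hUe (0, 1) ((prj_zero_iff _).2 ⟨0, 1, by simp⟩) z
    simpa using this

theorem EH.prj_iff {g : C(E, E)} (hg : EH 1 g) (z w : E) :
    prj (g z) = prj (g w) ↔ prj z = prj w := by
  have hi : ∀ (k l : ℤ), g (w + ((k : ℝ), (l : ℝ))) = g w + ((k : ℝ), (l : ℝ)) := fun k l => by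
    simpa using hg.int k l w
  rw [prj_eq_iff, prj_eq_iff]
  constructor
  · rintro ⟨k, l, h⟩
    rw [← hi] at h
    exact ⟨k, l, hg.bij.1 h⟩
  · rintro ⟨k, l, rfl⟩
    exact ⟨k, l, hi k l⟩

theorem torus_main (h : Tor ≃ₜ Tor) (H : I × Tor → Tor) (Hc : Continuous H)
    (H0 : ∀ p, H (0, p) = h p) (H1 : ∀ p, H (1, p) = p) :
    ∃ F : I × Tor → Tor, Continuous F ∧ (∀ p, F (0, p) = h p) ∧ (∀ p, F (1, p) = p) ∧
      (∀ t : I, IsHomeomorph fun p => F (t, p)) := by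
  obtain ⟨U, hU, hUh⟩ := exists_EH_lift h H Hc H0 H1
  obtain ⟨γ, hγ⟩ := join_id hU
  have hγ' : ∀ t, EH 1 (γ t) := hγ
  let s : Tor → E := Function.surjInv prj_open.surjective
  have hs : ∀ p, prj (s p) = p := Function.surjInv_eq prj_open.surjective
  let F : I × Tor → Tor := fun q => prj (γ q.1 (s q.2))
  have hF : ∀ t z, F (t, prj z) = prj (γ t z) := fun t z =>
    ((hγ' t).prj_iff _ _).2 (hs _)
  have Fc : Continuous F := by
    refine ((IsOpenQuotientMap.id (X := I)).prodMap prj_open).continuous_comp_iff.1 ?_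
    have : F ∘ Prod.map id prj = fun q : I × E => prj (γ q.1 q.2) := by
      funext q
      exact hF q.1 q.2
    rw [this]
    exact prj_cont.comp (by fun_prop)
  refine ⟨F, Fc, fun p => ?_, fun p => ?_, fun t => ?_⟩
  · obtain ⟨z, rfl⟩ := prj_open.surjective p
    rw [hF, γ.source, hUh]
  · obtain ⟨z, rfl⟩ := prj_open.surjective p
    rw [hF, γ.target]; rfl
  · haveI : Fact ((0 : ℝ) < 1) := ⟨one_pos⟩
    refine isHomeomorph_iff_continuous_bijective.2 ⟨by fun_prop, fun p q hpq => ?_, fun p => ?_⟩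
    · obtain ⟨z, rfl⟩ := prj_open.surjective p
      obtain ⟨w, rfl⟩ := prj_open.surjective q
      simp only [hF] at hpq
      exact ((hγ' t).prj_iff _ _).1 hpq
    · obtain ⟨z, rfl⟩ := prj_open.surjective p
      obtain ⟨w, hw⟩ := (hγ' t).bij.2 z
      exact ⟨prj w, by simp only [hF, hw]⟩

end TorusIso

open unitInterval

/-- Every homeomorphism of the torus `(ℝ/ℤ) × (ℝ/ℤ)` that is homotopic to the identity
is isotopic to the identity. -/
theorem homeomorph_torus_homotopic_to_id_isotopic_to_id
    (h : Homeomorph (AddCircle (1 : ℝ) × AddCircle (1 : ℝ))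
      (AddCircle (1 : ℝ) × AddCircle (1 : ℝ)))
    (H : I × (AddCircle (1 : ℝ) × AddCircle (1 : ℝ)) →
      AddCircle (1 : ℝ) × AddCircle (1 : ℝ))
    (Hcont : Continuous H)
    (H0 : ∀ p, H (0, p) = h p)
    (H1 : ∀ p, H (1, p) = p) :
    ∃ F : I × (AddCircle (1 : ℝ) × AddCircle (1 : ℝ)) →
        AddCircle (1 : ℝ) × AddCircle (1 : ℝ), Continuous F ∧
      (∀ p, F (0, p) = h p) ∧
      (∀ p, F (1, p) = p) ∧
      (∀ t : I, IsHomeomorph fun p => F (t, p)) := by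
  exact TorusIso.torus_main h H Hcont H0 H1
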